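/- Let G be an abelian group, k a commutative G-ring, n a natural number, and δ ∈ k invertible. Then there is an isomorphism of graded k-modules Tor_*^{GB_n(δ)}(𝟙,𝟙) ≅ Tor_*^{k[G^n ⋊ Σ_n]}(k,k) = H_*(G^n ⋊ Σ_n; k), where Σ_n acts on G^n by permuting the factors. -/

import Mathlib

open scoped TensorProduct

noncomputable section

/-! ### Bar-complex homology of an augmented algebra

For a `k`-algebra `A` with augmentation `ε : A →ₐ[k] k` (the algebra map corresponding to
the trivial module `𝟙 = k`), we form the (unnormalized) bar complex `C_q = A^{⊗ q}`
(tensors over `k`), with the usual differential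
`d(a₁⊗…⊗a_q) = ε(a₁)(a₂⊗…) + Σ (-1)^i (…a_i a_{i+1}…) + (-1)^q ε(a_q)(a₁⊗…)`,
whose homology is `Tor_*^A(𝟙,𝟙)`. -/

/-- The modules `A^{⊗ q}` of the bar complex. -/
def barC (k : Type) [CommRing k] (A : Type) [Ring A] [Algebra k A] : ℕ → ModuleCat k
  | 0 => ModuleCat.of k k
  | (q + 1) => ModuleCat.of k (A ⊗[k] (barC k A q))

variable (k : Type) [CommRing k] (A : Type) [Ring A] [Algebra k A] (ε : A →ₐ[k] k)

/-- Left multiplication of `A` on the leftmost bar factor (via `ε` in degree `0`). -/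
def barAct : ∀ q : ℕ, A →ₗ[k] ((barC k A q : Type) →ₗ[k] (barC k A q : Type))
  | 0 => (LinearMap.lsmul k k).comp ε.toLinearMap
  | (q + 1) =>
    show A →ₗ[k] ((A ⊗[k] (barC k A q : Type)) →ₗ[k] (A ⊗[k] (barC k A q : Type))) from
    { toFun := fun a => TensorProduct.map (LinearMap.mulLeft k a) LinearMap.id
      map_add' := by
        intro a b
        refine TensorProduct.ext' fun x y => ?_
        simp [add_mul, TensorProduct.add_tmul]
      map_smul' := by
        intro c a
        refine TensorProduct.ext' fun x y => ?_
        simp [TensorProduct.smul_tmul', smul_mul_assoc] }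

/-- All terms of the bar differential except the first face. -/
def barB : ∀ q : ℕ, ((A ⊗[k] (barC k A q : Type)) →ₗ[k] (barC k A q : Type))
  | 0 => - TensorProduct.lift ((LinearMap.lsmul k (barC k A 0 : Type)).comp ε.toLinearMap)
  | (q + 1) =>
    show (A ⊗[k] (A ⊗[k] (barC k A q : Type))) →ₗ[k] (A ⊗[k] (barC k A q : Type)) from
    TensorProduct.lift (LinearMap.mk₂ k
      (fun (a : A) (x : A ⊗[k] (barC k A q : Type)) =>
        -((show A →ₗ[k] ((A ⊗[k] (barC k A q : Type)) →ₗ[k] (A ⊗[k] (barC k A q : Type))) from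
            barAct k A ε (q + 1)) a x) - a ⊗ₜ[k] (barB q x))
      (by intro a b x
          have key : ∀ (f : A →ₗ[k] ((A ⊗[k] (barC k A q : Type)) →ₗ[k] (A ⊗[k] (barC k A q : Type))))
              (y : (barC k A q : Type)),
              -(f (a + b) x) - (a + b) ⊗ₜ[k] y
                = (-(f a x) - a ⊗ₜ[k] y) + (-(f b x) - b ⊗ₜ[k] y) := by
            intro f y
            simp only [map_add, LinearMap.add_apply, TensorProduct.add_tmul]
            try abel
          exact key _ _)
      (by intro c a x
          have key : ∀ (f : A →ₗ[k] ((A ⊗[k] (barC k A q : Type)) →ₗ[k] (A ⊗[k] (barC k A q : Type))))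
              (y : (barC k A q : Type)),
              -(f (c • a) x) - (c • a) ⊗ₜ[k] y = c • (-(f a x) - a ⊗ₜ[k] y) := by
            intro f y
            simp only [map_smul, LinearMap.smul_apply, smul_sub, smul_neg,
              TensorProduct.smul_tmul']
          exact key _ _)
      (by intro a x y
          simp only [map_add, LinearMap.map_add, TensorProduct.tmul_add]
          try abel)
      (by intro c a x
          simp only [map_smul, LinearMap.map_smul, TensorProduct.tmul_smul, smul_sub, smul_neg]
          try abel))

/-- The bar differential `C_{q+1} = A ⊗ C_q → C_q`. -/
def bard (q : ℕ) : (A ⊗[k] (barC k A q : Type)) →ₗ[k] (barC k A q : Type) :=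
  TensorProduct.lift ((LinearMap.lsmul k (barC k A q : Type)).comp ε.toLinearMap)
  + barB k A ε q

/-- Cycles of the bar complex. -/
def barCycles : ∀ q : ℕ, Submodule k (barC k A q : Type)
  | 0 => ⊤
  | (q + 1) =>
    show Submodule k (barC k A (q + 1) : Type) from LinearMap.ker (bard k A ε q)

/-- `Tor_q^A(𝟙, 𝟙)`, the homology of the algebra `A` with augmentation (trivial module) `ε`,
computed by the bar complex. -/
def barTor (q : ℕ) : Type :=
  (barCycles k A ε q) ⧸
    (Submodule.comap (barCycles k A ε q).subtype (LinearMap.range (bard k A ε q)))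

instance (q : ℕ) : AddCommGroup (barTor k A ε q) :=
  inferInstanceAs (AddCommGroup ((barCycles k A ε q) ⧸
    (Submodule.comap (barCycles k A ε q).subtype (LinearMap.range (bard k A ε q)))))

instance (q : ℕ) : Module k (barTor k A ε q) :=
  inferInstanceAs (Module k ((barCycles k A ε q) ⧸
    (Submodule.comap (barCycles k A ε q).subtype (LinearMap.range (bard k A ε q)))))

/-- The augmentation of a group algebra `k[G]`, corresponding to the trivial action of `G`
on `k`. -/
def groupAug (G : Type) [Group G] : MonoidAlgebra k G →ₐ[k] k :=
  MonoidAlgebra.lift k k G 1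

/-- Group homology `H_*(G; k) = Tor_*^{k[G]}(k, k)` (with the trivial action on `k`). -/
abbrev groupTor (G : Type) [Group G] (q : ℕ) : Type :=
  barTor k (MonoidAlgebra k G) (groupAug k G) q

section Groups

/-- The action of the symmetric group on `G^n` by permuting the factors. -/
def permMulAut (G : Type) [Group G] (n : ℕ) :
    Equiv.Perm (Fin n) →* MulAut (Fin n → G) where
  toFun σ :=
    { toFun := fun f => f ∘ σ.symm
      invFun := fun f => f ∘ σ
      left_inv := fun f => by funext i; simp
      right_inv := fun f => by funext i; simp
      map_mul' := fun f g => rfl }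
  map_one' := by ext f i; rfl
  map_mul' := fun σ τ => by ext f i; rfl

/-- The Artin braid relations, on `m` generators (so for the braid group on `m+1` strands). -/
def braidRels (m : ℕ) : Set (FreeGroup (Fin m)) :=
  { x | ∃ i j : Fin m,
      ((i : ℕ) + 1 = (j : ℕ) ∧
        x = .of i * .of j * .of i * (.of j * .of i * .of j)⁻¹) ∨
      ((i : ℕ) + 1 < (j : ℕ) ∧
        x = .of i * .of j * (.of j * .of i)⁻¹) }

/-- The braid group `B_n` on `n` strands, presented by the Artin generators
`σ_1, …, σ_{n-1}` and the braid relations. -/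
abbrev BraidGroup (n : ℕ) : Type := PresentedGroup (braidRels (n - 1))

private lemma swap_braid {α : Type} [DecidableEq α] (a b c : α)
    (hab : a ≠ b) (hac : a ≠ c) (hbc : b ≠ c) :
    Equiv.swap a b * Equiv.swap b c * Equiv.swap a b
      = Equiv.swap b c * Equiv.swap a b * Equiv.swap b c := by
  have h1 : Equiv.swap b c * Equiv.swap a b * Equiv.swap b c = Equiv.swap c a :=
    Equiv.swap_mul_swap_mul_swap hab hac
  have h2 : Equiv.swap b a * Equiv.swap c b * Equiv.swap b a = Equiv.swap a c :=
    Equiv.swap_mul_swap_mul_swap hbc.symm hac.symm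
  rw [Equiv.swap_comm b a, Equiv.swap_comm c b] at h2
  rw [h1, h2, Equiv.swap_comm]

private lemma swap_swap_comm {α : Type} [DecidableEq α] (a b c d : α)
    (hac : a ≠ c) (had : a ≠ d) (hbc : b ≠ c) (hbd : b ≠ d) :
    Equiv.swap a b * Equiv.swap c d = Equiv.swap c d * Equiv.swap a b := by
  have h := Equiv.swap_apply_apply (Equiv.swap c d) a b
  rw [Equiv.swap_apply_of_ne_of_ne hac had, Equiv.swap_apply_of_ne_of_ne hbc hbd] at h
  exact eq_mul_inv_iff_mul_eq.mp h

/-- The transpositions which are the images of the braid generators. -/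
def braidGen (n : ℕ) (i : Fin (n - 1)) : Equiv.Perm (Fin n) :=
  Equiv.swap ⟨(i : ℕ), by have := i.2; omega⟩ ⟨(i : ℕ) + 1, by have := i.2; omega⟩

private lemma braidGen_braid (n : ℕ) (i j : Fin (n - 1)) (hij : (i : ℕ) + 1 = (j : ℕ)) :
    braidGen n i * braidGen n j * braidGen n i
      = braidGen n j * braidGen n i * braidGen n j := by
  obtain ⟨i, hi⟩ := i
  obtain ⟨j, hj⟩ := j
  simp only at hij
  subst hij
  unfold braidGen
  exact swap_braid _ _ _ (by simp only [ne_eq, Fin.mk.injEq]; omega)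
    (by simp only [ne_eq, Fin.mk.injEq]; omega) (by simp only [ne_eq, Fin.mk.injEq]; omega)

private lemma braidGen_comm (n : ℕ) (i j : Fin (n - 1)) (hij : (i : ℕ) + 1 < (j : ℕ)) :
    braidGen n i * braidGen n j = braidGen n j * braidGen n i := by
  unfold braidGen
  exact swap_swap_comm _ _ _ _ (by simp only [ne_eq, Fin.mk.injEq]; omega)
    (by simp only [ne_eq, Fin.mk.injEq]; omega) (by simp only [ne_eq, Fin.mk.injEq]; omega)
    (by simp only [ne_eq, Fin.mk.injEq]; omega)

/-- The canonical projection from the braid group to the symmetric group. -/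
def braidToPerm (n : ℕ) : BraidGroup n →* Equiv.Perm (Fin n) :=
  PresentedGroup.toGroup (f := braidGen n) (by
    rintro r ⟨i, j, (⟨hij, rfl⟩ | ⟨hij, rfl⟩)⟩ <;>
      simp only [map_mul, map_inv, FreeGroup.lift_apply_of] <;> rw [mul_inv_eq_one]
    · exact braidGen_braid n i j hij
    · exact braidGen_comm n i j hij)

end Groups

section GBsection

/-! The `G`-equivariant Brauer algebra `GB_n(δ)`: generators `s i` (transpositions),
`e i` (cap-cup hooks) and `t g j` (labels); a middle loop whose labels multiply to `g`
is deleted at the cost of the factor `(ρ g) δ = g•δ ∈ k`. -/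

inductive GBGen (n : ℕ) (G : Type) : Type
  | s : Fin (n - 1) → GBGen n G
  | e : Fin (n - 1) → GBGen n G
  | t : G → Fin n → GBGen n G

variable (k G : Type) [CommRing k] [CommGroup G] (ρ : G →* RingAut k) (n : ℕ) (δ : k)

abbrev GBs (i : Fin (n - 1)) : FreeAlgebra k (GBGen n G) := FreeAlgebra.ι k (GBGen.s i)
abbrev GBe (i : Fin (n - 1)) : FreeAlgebra k (GBGen n G) := FreeAlgebra.ι k (GBGen.e i)
abbrev GBt (g : G) (j : Fin n) : FreeAlgebra k (GBGen n G) := FreeAlgebra.ι k (GBGen.t g j)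

/-- The diagrammatic relations. -/
inductive GBRel : FreeAlgebra k (GBGen n G) → FreeAlgebra k (GBGen n G) → Prop
  | s_sq (i : Fin (n - 1)) :
      GBRel (GBs k G n i * GBs k G n i) (1)
  | s_braid (i j : Fin (n - 1)) (h : (j : ℕ) = (i : ℕ) + 1) :
      GBRel (GBs k G n i * GBs k G n j * GBs k G n i) (GBs k G n j * GBs k G n i * GBs k G n j)
  | ss_comm (i j : Fin (n - 1)) (h : (i : ℕ) + 1 < (j : ℕ)) :
      GBRel (GBs k G n i * GBs k G n j) (GBs k G n j * GBs k G n i)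
  | e_sq (i : Fin (n - 1)) :
      GBRel (GBe k G n i * GBe k G n i) (δ • GBe k G n i)
  | e_hook (i j : Fin (n - 1)) (h : (j : ℕ) = (i : ℕ) + 1 ∨ (i : ℕ) = (j : ℕ) + 1) :
      GBRel (GBe k G n i * GBe k G n j * GBe k G n i) (GBe k G n i)
  | ee_comm (i j : Fin (n - 1)) (h : (i : ℕ) + 1 < (j : ℕ)) :
      GBRel (GBe k G n i * GBe k G n j) (GBe k G n j * GBe k G n i)
  | se_absorb (i : Fin (n - 1)) :
      GBRel (GBs k G n i * GBe k G n i) (GBe k G n i)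
  | es_absorb (i : Fin (n - 1)) :
      GBRel (GBe k G n i * GBs k G n i) (GBe k G n i)
  | se_comm (i j : Fin (n - 1)) (h : (i : ℕ) + 1 < (j : ℕ) ∨ (j : ℕ) + 1 < (i : ℕ)) :
      GBRel (GBs k G n i * GBe k G n j) (GBe k G n j * GBs k G n i)
  | ese (i j : Fin (n - 1)) (h : (j : ℕ) = (i : ℕ) + 1 ∨ (i : ℕ) = (j : ℕ) + 1) :
      GBRel (GBe k G n i * GBs k G n j * GBe k G n i) (GBe k G n i)
  | sse (i j : Fin (n - 1)) (h : (j : ℕ) = (i : ℕ) + 1 ∨ (i : ℕ) = (j : ℕ) + 1) :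
      GBRel (GBs k G n i * GBs k G n j * GBe k G n i) (GBe k G n j * GBe k G n i)
  | ess (i j : Fin (n - 1)) (h : (j : ℕ) = (i : ℕ) + 1 ∨ (i : ℕ) = (j : ℕ) + 1) :
      GBRel (GBe k G n i * GBs k G n j * GBs k G n i) (GBe k G n i * GBe k G n j)
  | t_mul (g h' : G) (j : Fin n) :
      GBRel (GBt k G n g j * GBt k G n h' j) (GBt k G n (g * h') j)
  | t_one (j : Fin n) :
      GBRel (GBt k G n 1 j) (1)
  | tt_comm (g h' : G) (j l : Fin n) (h : j ≠ l) :
      GBRel (GBt k G n g j * GBt k G n h' l) (GBt k G n h' l * GBt k G n g j)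
  | st_comm (g : G) (i : Fin (n - 1)) (l : Fin n) (h : (l : ℕ) ≠ (i : ℕ) ∧ (l : ℕ) ≠ (i : ℕ) + 1) :
      GBRel (GBs k G n i * GBt k G n g l) (GBt k G n g l * GBs k G n i)
  | st_slide (g : G) (i : Fin (n - 1)) (j j' : Fin n) (h : (j : ℕ) = (i : ℕ)) (h' : (j' : ℕ) = (i : ℕ) + 1) :
      GBRel (GBs k G n i * GBt k G n g j) (GBt k G n g j' * GBs k G n i)
  | st_slide' (g : G) (i : Fin (n - 1)) (j j' : Fin n) (h : (j : ℕ) = (i : ℕ)) (h' : (j' : ℕ) = (i : ℕ) + 1) :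
      GBRel (GBs k G n i * GBt k G n g j') (GBt k G n g j * GBs k G n i)
  | et_comm (g : G) (i : Fin (n - 1)) (l : Fin n) (h : (l : ℕ) ≠ (i : ℕ) ∧ (l : ℕ) ≠ (i : ℕ) + 1) :
      GBRel (GBe k G n i * GBt k G n g l) (GBt k G n g l * GBe k G n i)
  | cap_slide_l (g : G) (i : Fin (n - 1)) (j j' : Fin n) (h : (j : ℕ) = (i : ℕ)) (h' : (j' : ℕ) = (i : ℕ) + 1) :
      GBRel (GBt k G n g j * GBe k G n i) (GBt k G n g j' * GBe k G n i)
  | cap_slide_r (g : G) (i : Fin (n - 1)) (j j' : Fin n) (h : (j : ℕ) = (i : ℕ)) (h' : (j' : ℕ) = (i : ℕ) + 1) :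
      GBRel (GBe k G n i * GBt k G n g j) (GBe k G n i * GBt k G n g j')
  | loop (g : G) (i : Fin (n - 1)) (j : Fin n) (h : (j : ℕ) = (i : ℕ)) :
      GBRel (GBe k G n i * GBt k G n g j * GBe k G n i) ((ρ g δ) • GBe k G n i)

/-- The diagram algebra: the quotient of the free algebra on the diagram generators by
the diagrammatic relations. -/
abbrev GBAlg : Type := RingQuot (GBRel k G ρ n δ)

/-- The augmentation corresponding to the trivial module `𝟙`: a diagram acts by `1`
if it has `n` left-to-right connections, and by `0` otherwise. -/
noncomputable def GBaug : GBAlg k G ρ n δ →ₐ[k] k :=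
  RingQuot.liftAlgHom k ⟨FreeAlgebra.lift k
      (fun x => match x with
        | GBGen.s _ => (1 : k)
        | GBGen.e _ => (0 : k)
        | GBGen.t _ _ => (1 : k)),
    by rintro x y h
       induction h <;>
         simp [GBs, GBe, GBt, FreeAlgebra.lift_ι_apply]⟩

end GBsection

/-!
Sending every diagram with fewer than `n` left-to-right connections to zero gives a surjection `π`
from `GB_n(δ)` onto the group algebra `k[G ≀ Σ_n]` which respects the augmentations. The diagrams in
`ker π` are those containing a right-to-right arc. For such an arc `α`, let `h_α` be the diagram
with this arc on both sides and horizontal strands elsewhere. Since `δ` is invertible, `δ⁻¹ h_α` is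
an idempotent, it is killed by the augmentation, and the left ideal it generates is spanned by the
diagrams with right arc `α`. Arcs of a common diagram are disjoint, so their idempotents commute and
the intersections of these left ideals are zero or again generated by an idempotent; hence they have
acyclic bar complexes. Mayer–Vietoris and passage to filtered unions show that the bar complex with
coefficients in `ker π` is acyclic, so `Tor_q^{GB_n(δ)}(𝟙, k[G ≀ Σ_n])` vanishes for `q > 0`, and
dimension shifting along free `k[G ≀ Σ_n]`-modules shows that `π` induces an isomorphism on Tor.

That the diagrams are a basis of the algebra given by generators and relations is seen in two steps:
the relations rewrite every product of generators as a scalar times a labelled permutation times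
hooks of pairwise disjoint arcs, and the action on the free module of labelled matchings separates
these products.
-/

namespace BrauerHomology

universe u

open CategoryTheory TensorProduct

/-! ### Bar complexes with coefficients -/

section FaceMaps

variable (R B M : Type u) [CommRing R] [Ring B] [Algebra R B]
  [AddCommGroup M] [Module R M] [Module B M] [IsScalarTower R B M]

/-- The scalar multiplication `b ⊗ m ↦ b • m` of a module over an `R`-algebra. -/
def actionMap : B ⊗[R] M →ₗ[R] M :=
  TensorProduct.lift (Algebra.lsmul R R M).toLinearMap

@[simp]
lemma actionMap_tmul (b : B) (m : M) : actionMap R B M (b ⊗ₜ m) = b • m := rfl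

lemma actionMap_smul (b : B) (x : B ⊗[R] M) : actionMap R B M (b • x) = b • actionMap R B M x := by
  induction x using TensorProduct.induction_on with
  | zero => simp only [smul_zero, map_zero]
  | add x y hx hy => simp only [smul_add, map_add, hx, hy]
  | tmul c m => simp [smul_tmul', mul_smul]

variable {R B}
variable {Y Y' : Type u} [AddCommGroup Y] [Module R Y] [AddCommGroup Y'] [Module R Y']

/-- The map `b ⊗ y ↦ ε(b) y`, the first face of the bar complex. -/
def augmentationMap (ε : B →ₐ[R] R) (Y : Type u) [AddCommGroup Y] [Module R Y] :
    B ⊗[R] Y →ₗ[R] Y :=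
  TensorProduct.lift ((LinearMap.lsmul R Y).comp ε.toLinearMap)

@[simp]
lemma augmentationMap_tmul (ε : B →ₐ[R] R) (b : B) (y : Y) :
    augmentationMap ε Y (b ⊗ₜ y) = ε b • y := rfl

/-- The action `a ⊗ b ⊗ y ↦ ab ⊗ y - a ⊗ β (b ⊗ y)` of `B` on `B ⊗ Y` built from an action `β`
of `B` on `Y`; neither is unital. -/
def extendAction (β : B ⊗[R] Y →ₗ[R] Y) : B ⊗[R] (B ⊗[R] Y) →ₗ[R] B ⊗[R] Y :=
  actionMap R B (B ⊗[R] Y) - β.lTensor B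

@[simp]
lemma extendAction_tmul (β : B ⊗[R] Y →ₗ[R] Y) (a : B) (x : B ⊗[R] Y) :
    extendAction β (a ⊗ₜ x) = a • x - a ⊗ₜ β x := rfl

lemma extendAction_assoc {β : B ⊗[R] Y →ₗ[R] Y} (hβ : ∀ a x, β (a • x) = β (a ⊗ₜ β x))
    (a : B) (x : B ⊗[R] (B ⊗[R] Y)) :
    extendAction β (a • x) = extendAction β (a ⊗ₜ extendAction β x) := by
  induction x using TensorProduct.induction_on with
  | zero => simp only [smul_zero, tmul_zero, map_zero]
  | add x y hx hy => simp only [smul_add, tmul_add, map_add, hx, hy]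
  | tmul b x =>
    have h : β (b • x - b ⊗ₜ β x) = 0 := by rw [map_sub, hβ, sub_self]
    rw [smul_tmul', extendAction_tmul, extendAction_tmul, extendAction_tmul, h, tmul_zero,
      sub_zero, smul_sub, smul_tmul', smul_eq_mul, mul_smul]

lemma augmentationMap_sub_comp_extendAction (ε : B →ₐ[R] R) {β : B ⊗[R] Y →ₗ[R] Y}
    (hβ : ∀ a x, β (a • x) = β (a ⊗ₜ β x)) :
    (augmentationMap ε Y - β) ∘ₗ (augmentationMap ε (B ⊗[R] Y) - extendAction β) = 0 := by
  refine TensorProduct.ext' fun a x => ?_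
  have h : augmentationMap ε Y (a • x) = ε a • augmentationMap ε Y x := by
    induction x using TensorProduct.induction_on with
    | zero => simp only [smul_zero, map_zero]
    | add x y hx hy => simp only [smul_add, map_add, hx, hy]
    | tmul b y =>
      simp only [smul_tmul', smul_eq_mul, augmentationMap_tmul, map_mul, mul_smul]
  simp only [LinearMap.comp_apply, LinearMap.sub_apply, map_sub, augmentationMap_tmul,
    extendAction_tmul, map_smul, h, hβ, smul_sub, LinearMap.zero_apply]
  abel

section Naturality

variable {B' : Type u} [Ring B'] [Algebra R B'] (π : B →ₐ[R] B') (g : Y →ₗ[R] Y')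

lemma map_smul_tensor (b : B) (x : B ⊗[R] Y) :
    TensorProduct.map π.toLinearMap g (b • x) = π b • TensorProduct.map π.toLinearMap g x := by
  induction x using TensorProduct.induction_on with
  | zero => simp only [smul_zero, map_zero]
  | add x y hx hy => simp only [smul_add, map_add, hx, hy]
  | tmul c y => simp [smul_tmul']

lemma map_actionMap {M M' : Type u} [AddCommGroup M] [Module R M] [Module B M]
    [IsScalarTower R B M] [AddCommGroup M'] [Module R M'] [Module B' M'] [IsScalarTower R B' M']
    {π : B →ₐ[R] B'} {f : M →ₗ[R] M'} (hf : ∀ (b : B) (m : M), f (b • m) = π b • f m)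
    (x : B ⊗[R] M) :
    f (actionMap R B M x) = actionMap R B' M' (TensorProduct.map π.toLinearMap f x) := by
  induction x using TensorProduct.induction_on with
  | zero => simp only [map_zero]
  | add x y hx hy => simp only [map_add, hx, hy]
  | tmul b m => simp [hf]

lemma map_extendAction {β : B ⊗[R] Y →ₗ[R] Y} {β' : B' ⊗[R] Y' →ₗ[R] Y'}
    (h : ∀ x, g (β x) = β' (TensorProduct.map π.toLinearMap g x)) (x : B ⊗[R] (B ⊗[R] Y)) :
    TensorProduct.map π.toLinearMap g (extendAction β x) =
      extendAction β' (TensorProduct.map π.toLinearMap (TensorProduct.map π.toLinearMap g) x) := by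
  induction x using TensorProduct.induction_on with
  | zero => simp only [map_zero]
  | add x y hx hy => simp only [map_add, hx, hy]
  | tmul b x => simp [map_smul_tensor, h]

lemma map_augmentationMap {ε : B →ₐ[R] R} {ε' : B' →ₐ[R] R} (hε : ε'.comp π = ε)
    (x : B ⊗[R] Y) :
    g (augmentationMap ε Y x) = augmentationMap ε' Y' (TensorProduct.map π.toLinearMap g x) := by
  subst hε
  induction x using TensorProduct.induction_on with
  | zero => simp only [map_zero]
  | add x y hx hy => simp only [map_add, hx, hy]
  | tmul b x => simp

end Naturality

end FaceMaps

section BarComplex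

variable (R B M : Type u) [CommRing R] [Ring B] [Algebra R B]
  [AddCommGroup M] [Module R M] [Module B M] [IsScalarTower R B M]

/-- The degree `q` part `B ⊗ ⋯ ⊗ B ⊗ M` of the bar complex with coefficients in `M`. -/
def barModule (M : Type u) [AddCommGroup M] [Module R M] : ℕ → ModuleCat.{u} R
  | 0 => ModuleCat.of R M
  | q + 1 => ModuleCat.of R (B ⊗[R] barModule M q)

/-- The alternating sum of all faces but the first, up to a sign. With this sign it is an
action of `B` on `barModule R B M q`, not unital for `q > 0`. -/
def barAction : ∀ q : ℕ, B ⊗[R] barModule R B M q →ₗ[R] barModule R B M q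
  | 0 => actionMap R B M
  | q + 1 => extendAction (barAction q)

lemma barAction_assoc : ∀ (q : ℕ) (a : B) (x : B ⊗[R] barModule R B M q),
    barAction R B M q (a • x) = barAction R B M q (a ⊗ₜ barAction R B M q x)
  | 0 => actionMap_smul R B M
  | q + 1 => extendAction_assoc (barAction_assoc q)

variable {R B} (ε : B →ₐ[R] R)

/-- The differential of the bar complex. -/
def barDifferential (q : ℕ) : B ⊗[R] barModule R B M q →ₗ[R] barModule R B M q :=
  augmentationMap ε (barModule R B M q) - barAction R B M q

/-- The bar complex computing `Tor^B(R, M)`, where `B` acts on `R` through `ε`. -/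
def barComplex : ChainComplex (ModuleCat.{u} R) ℕ :=
  ChainComplex.of (barModule R B M) (fun q => ModuleCat.ofHom (barDifferential M ε q)) fun q =>
    congrArg ModuleCat.ofHom
      (augmentationMap_sub_comp_extendAction ε (barAction_assoc R B M q))

lemma barComplex_d (q : ℕ) :
    (barComplex M ε).d (q + 1) q = ModuleCat.ofHom (barDifferential M ε q) :=
  ChainComplex.of_d (barModule R B M) (fun q => ModuleCat.ofHom (barDifferential M ε q)) q

variable {M} {ε}

lemma barComplex_exactAt_zero_iff :
    (barComplex M ε).ExactAt 0 ↔ Function.Surjective (barDifferential M ε 0) := by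
  rw [HomologicalComplex.exactAt_iff' _ 1 0 0 (by simp) (by simp),
    ShortComplex.moduleCat_exact_iff]
  simp only [HomologicalComplex.sc', HomologicalComplex.shortComplexFunctor'_obj_f,
    HomologicalComplex.shortComplexFunctor'_obj_g, barComplex_d,
    (barComplex M ε).shape 0 0 (by simp)]
  exact forall_congr' fun z => forall_prop_of_true rfl

lemma barComplex_exactAt_succ_iff (q : ℕ) :
    (barComplex M ε).ExactAt (q + 1) ↔ ∀ z, barDifferential M ε q z = 0 →
      z ∈ LinearMap.range (barDifferential M ε (q + 1)) := by
  rw [HomologicalComplex.exactAt_iff' _ (q + 2) (q + 1) q (by simp) (by simp),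
    ShortComplex.moduleCat_exact_iff]
  simp only [HomologicalComplex.sc', HomologicalComplex.shortComplexFunctor'_obj_f,
    HomologicalComplex.shortComplexFunctor'_obj_g, barComplex_d]
  rfl

section Map

variable {B' M' : Type u} [Ring B'] [Algebra R B'] [AddCommGroup M'] [Module R M']
  [Module B' M'] [IsScalarTower R B' M']
  {ε' : B' →ₐ[R] R} (π : B →ₐ[R] B') (f : M →ₗ[R] M')

/-- The map of bar modules induced by a map of algebras and a map of coefficients. -/
def barModuleMap : ∀ q : ℕ, barModule R B M q →ₗ[R] barModule R B' M' q
  | 0 => f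
  | q + 1 => TensorProduct.map π.toLinearMap (barModuleMap q)

variable {π f}

lemma barModuleMap_barAction (hf : ∀ (b : B) (m : M), f (b • m) = π b • f m) (q : ℕ)
    (x : B ⊗[R] barModule R B M q) :
    barModuleMap π f q (barAction R B M q x) =
      barAction R B' M' q (TensorProduct.map π.toLinearMap (barModuleMap π f q) x) := by
  induction q with
  | zero => exact map_actionMap hf x
  | succ q ih => exact map_extendAction π _ ih x

lemma barModuleMap_barDifferential (hε : ε'.comp π = ε)
    (hf : ∀ (b : B) (m : M), f (b • m) = π b • f m) (q : ℕ) (x : B ⊗[R] barModule R B M q) :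
    barModuleMap π f q (barDifferential M ε q x) =
      barDifferential M' ε' q (TensorProduct.map π.toLinearMap (barModuleMap π f q) x) := by
  rw [barDifferential, barDifferential, LinearMap.sub_apply, LinearMap.sub_apply, map_sub,
    barModuleMap_barAction hf, map_augmentationMap π _ hε]

/-- The map of bar complexes induced by a map of algebras and a map of coefficients. -/
def barMap (hε : ε'.comp π = ε) (hf : ∀ (b : B) (m : M), f (b • m) = π b • f m) :
    barComplex M ε ⟶ barComplex M' ε' :=
  ChainComplex.ofHom (fun q => ModuleCat.ofHom (barModuleMap π f q)) fun q => by
    rw [barComplex_d, barComplex_d]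
    ext x
    exact (barModuleMap_barDifferential hε hf q x).symm

end Map

end BarComplex

section Coefficients

variable {R B : Type u} [CommRing R] [Ring B] [Algebra R B] (ε : B →ₐ[R] R) {M₁ M₂ M₃ : Type u}
  [AddCommGroup M₁] [Module R M₁] [AddCommGroup M₂] [Module R M₂] [AddCommGroup M₃] [Module R M₃]

lemma barModuleMap_exact {f : M₁ →ₗ[R] M₂} {g : M₂ →ₗ[R] M₃} (hfg : Function.Exact f g)
    (hg : Function.Surjective g) : ∀ q, Function.Exact
      (barModuleMap (AlgHom.id R B) f q) (barModuleMap (AlgHom.id R B) g q) ∧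
      Function.Surjective (barModuleMap (AlgHom.id R B) g q)
  | 0 => ⟨hfg, hg⟩
  | q + 1 =>
    have h := barModuleMap_exact hfg hg q
    ⟨lTensor_exact B h.1 h.2, LinearMap.lTensor_surjective B h.2⟩

lemma barModuleMap_injective [Module.Flat R B] {f : M₁ →ₗ[R] M₂} (hf : Function.Injective f) :
    ∀ q, Function.Injective (barModuleMap (AlgHom.id R B) f q)
  | 0 => hf
  | q + 1 => Module.Flat.lTensor_preserves_injective_linearMap _ (barModuleMap_injective hf q)

lemma barModuleMap_comp {B' B'' : Type u} [Ring B'] [Algebra R B'] [Ring B''] [Algebra R B'']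
    (π' : B' →ₐ[R] B'') (π : B →ₐ[R] B') (g : M₂ →ₗ[R] M₃) (f : M₁ →ₗ[R] M₂) : ∀ q,
    barModuleMap (π'.comp π) (g ∘ₗ f) q = barModuleMap π' g q ∘ₗ barModuleMap π f q
  | 0 => rfl
  | q + 1 => (congrArg (TensorProduct.map _) (barModuleMap_comp π' π g f q)).trans
    (TensorProduct.map_comp π'.toLinearMap _ π.toLinearMap _)

variable [Module B M₁] [IsScalarTower R B M₁] [Module B M₂] [IsScalarTower R B M₂]
  [Module B M₃] [IsScalarTower R B M₃]

/-- The map of bar complexes induced by a `B`-linear map of coefficients. -/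
def barCoeffMap (f : M₁ →ₗ[B] M₂) : barComplex M₁ ε ⟶ barComplex M₂ ε :=
  barMap (π := AlgHom.id R B) (f := f.restrictScalars R) rfl f.map_smul

/-- The short complex of bar complexes of an exact sequence `M₁ → M₂ → M₃ → 0`. -/
@[simps]
def barShortComplex {f : M₁ →ₗ[B] M₂} {g : M₂ →ₗ[B] M₃} (hfg : Function.Exact f g)
    (hg : Function.Surjective g) : ShortComplex (ChainComplex (ModuleCat.{u} R) ℕ) where
  X₁ := barComplex M₁ ε
  X₂ := barComplex M₂ ε
  X₃ := barComplex M₃ ε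
  f := barCoeffMap ε f
  g := barCoeffMap ε g
  zero := by
    ext q x
    exact (barModuleMap_exact (f := f.restrictScalars R) (g := g.restrictScalars R)
      hfg hg q).1.apply_apply_eq_zero x

lemma barShortComplex_shortExact [Module.Flat R B] {f : M₁ →ₗ[B] M₂} {g : M₂ →ₗ[B] M₃}
    (hfg : Function.Exact f g) (hf : Function.Injective f) (hg : Function.Surjective g) :
    (barShortComplex ε hfg hg).ShortExact :=
  HomologicalComplex.shortExact_of_degreewise_shortExact _ fun q =>
    ModuleCat.shortComplex_shortExact _
      (barModuleMap_exact (f := f.restrictScalars R) (g := g.restrictScalars R) hfg hg q).1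
      (barModuleMap_injective (f := f.restrictScalars R) hf q)
      (barModuleMap_exact (f := f.restrictScalars R) (g := g.restrictScalars R) hfg hg q).2

end Coefficients

section Contraction

variable {R B M : Type u} [CommRing R] [Ring B] [Algebra R B] {ε : B →ₐ[R] R}
  [AddCommGroup M] [Module R M] [Module B M] [IsScalarTower R B M]

lemma augmentationMap_lTensor {Y : Type u} [AddCommGroup Y] [Module R Y] (h : Y →ₗ[R] B ⊗[R] Y)
    (y : B ⊗[R] Y) :
    augmentationMap ε (B ⊗[R] Y) (h.lTensor B y) = h (augmentationMap ε Y y) :=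
  (map_augmentationMap (AlgHom.id R B) h rfl y).symm

lemma extendAction_extendAction_lTensor {Y : Type u} [AddCommGroup Y] [Module R Y]
    {β : B ⊗[R] Y →ₗ[R] Y} {h : Y →ₗ[R] B ⊗[R] Y} {c : R}
    (hh : ∀ y, extendAction β (h.lTensor B y) = h (β y) - c • y) (y : B ⊗[R] (B ⊗[R] Y)) :
    extendAction (extendAction β) ((h.lTensor B).lTensor B y) =
      h.lTensor B (extendAction β y) - (-c) • y := by
  induction y using TensorProduct.induction_on with
  | zero => simp only [map_zero, smul_zero, sub_zero]
  | add x y hx hy => simp only [map_add, smul_add, hx, hy]; abel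
  | tmul a x =>
    have hs : a • h.lTensor B x = h.lTensor B (a • x) :=
      (map_smul_tensor (AlgHom.id R B) h a x).symm
    simp only [LinearMap.lTensor_tmul, extendAction_tmul, hh, hs, map_sub, tmul_sub, tmul_smul]
    module

/-- The extra degeneracy of the bar complex given by a section of the action map. -/
def barContraction (η : M →ₗ[R] B ⊗[R] M) :
    ∀ q : ℕ, barModule R B M q →ₗ[R] B ⊗[R] barModule R B M q
  | 0 => η
  | q + 1 => (barContraction η q).lTensor B

lemma barAction_barContraction {η : M →ₗ[B] B ⊗[R] M} (hη : ∀ m, actionMap R B M (η m) = m) :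
    ∀ (q : ℕ) (y : B ⊗[R] barModule R B M q),
      extendAction (barAction R B M q) ((barContraction (η.restrictScalars R) q).lTensor B y) =
        barContraction (η.restrictScalars R) q (barAction R B M q y) - ((-1) ^ q : R) • y
  | 0 => by
    have h (a : B) (m : M) : extendAction (actionMap R B M)
        ((η.restrictScalars R).lTensor B (a ⊗ₜ m)) = η (a • m) - a ⊗ₜ m := by
      simp [hη]
    intro y
    rw [pow_zero, one_smul]
    induction y using TensorProduct.induction_on with
    | zero => simp only [map_zero, sub_zero]
    | add x y hx hy => rw [map_add, map_add, hx, hy]; simp only [map_add]; abel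
    | tmul a m => exact h a m
  | q + 1 => by
    rw [pow_succ, mul_neg_one]
    exact extendAction_extendAction_lTensor (barAction_barContraction hη q)

lemma exists_of_augmentationMap_eq {Y : Type u} [AddCommGroup Y] [Module R Y]
    {β : B ⊗[R] Y →ₗ[R] Y} {h : Y →ₗ[R] B ⊗[R] Y} {c : R} (hc : c * c = 1)
    (hh : ∀ y, extendAction β (h.lTensor B y) = h (β y) - c • y) {z : B ⊗[R] Y}
    (hz : augmentationMap ε Y z = β z) :
    (augmentationMap ε (B ⊗[R] Y) - extendAction β) (c • h.lTensor B z) = z := by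
  rw [map_smul, LinearMap.sub_apply, augmentationMap_lTensor, hh, hz, sub_sub_cancel, smul_smul,
    hc, one_smul]

lemma barComplex_exactAt_succ_of_section {η : M →ₗ[B] B ⊗[R] M}
    (hη : ∀ m, actionMap R B M (η m) = m) (q : ℕ) : (barComplex M ε).ExactAt (q + 1) := by
  rw [barComplex_exactAt_succ_iff]
  intro z hz
  have hc : ((-1) ^ q : R) * (-1) ^ q = 1 := by rw [← mul_pow, neg_one_mul, neg_neg, one_pow]
  exact ⟨_, exists_of_augmentationMap_eq hc (barAction_barContraction hη q) (sub_eq_zero.mp hz)⟩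

lemma barComplex_exactAt_zero_of_section {η : M →ₗ[B] B ⊗[R] M}
    (hη : ∀ m, actionMap R B M (η m) = m) (h0 : ∀ m, augmentationMap ε M (η m) = 0) :
    (barComplex M ε).ExactAt 0 := by
  rw [barComplex_exactAt_zero_iff]
  have h (m : M) : (augmentationMap ε M - actionMap R B M) (-η m) = m := by simp [hη, h0]
  exact fun m => ⟨-η m, h m⟩

end Contraction

section Exactness

lemma exactAt_iff_forall {R : Type u} [Ring R] {ι : Type*} {c : ComplexShape ι}
    (K : HomologicalComplex (ModuleCat.{u} R) c) (i : ι) :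
    K.ExactAt i ↔ ∀ z : K.X i, K.d i (c.next i) z = 0 → ∃ w, K.d (c.prev i) i w = z :=
  ShortComplex.moduleCat_exact_iff _

lemma exactAt_of_sum_eq {R : Type u} [Ring R] {ι : Type*} {c : ComplexShape ι}
    {K : HomologicalComplex (ModuleCat.{u} R) c} {α : Type*}
    {L : α → HomologicalComplex (ModuleCat.{u} R) c} (f : ∀ a, L a ⟶ K) (g : ∀ a, K ⟶ L a) {i : ι}
    (hfg : ∀ z : K.X i, ∃ s : Finset α, ∑ a ∈ s, (f a).f i ((g a).f i z) = z)
    (hL : ∀ a, (L a).ExactAt i) : K.ExactAt i := by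
  rw [exactAt_iff_forall]
  intro z hz
  have hcycle (a : α) : (L a).d i (c.next i) ((g a).f i z) = 0 := by
    rw [← ModuleCat.comp_apply, (g a).comm, ModuleCat.comp_apply, hz, map_zero]
  choose w hw using fun a => (exactAt_iff_forall _ _).mp (hL a) _ (hcycle a)
  obtain ⟨s, hs⟩ := hfg z
  refine ⟨∑ a ∈ s, (f a).f _ (w a), ?_⟩
  rw [map_sum, ← hs]
  refine Finset.sum_congr rfl fun a _ => ?_
  rw [← ModuleCat.comp_apply, (f a).comm, ModuleCat.comp_apply, hw]

lemma exactAt_of_mem_range {R : Type u} [Ring R] {ι : Type*} {c : ComplexShape ι}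
    {K : HomologicalComplex (ModuleCat.{u} R) c} {α : Type*}
    {L : α → HomologicalComplex (ModuleCat.{u} R) c} (f : ∀ a, L a ⟶ K) {i : ι}
    (hinj : ∀ a, Function.Injective ((f a).f (c.next i)))
    (hf : ∀ z : K.X i, ∃ a y, (f a).f i y = z) (hL : ∀ a, (L a).ExactAt i) : K.ExactAt i := by
  rw [exactAt_iff_forall]
  intro z hz
  obtain ⟨a, y, rfl⟩ := hf z
  have hy : (L a).d i (c.next i) y = 0 := by
    refine hinj a ?_
    rw [← ModuleCat.comp_apply, ← (f a).comm, ModuleCat.comp_apply, hz, map_zero]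
  obtain ⟨w, rfl⟩ := (exactAt_iff_forall _ _).mp (hL a) y hy
  refine ⟨(f a).f _ w, ?_⟩
  rw [← ModuleCat.comp_apply, (f a).comm, ModuleCat.comp_apply]

lemma exactAt_X₃_of_acyclic {R : Type u} [Ring R] {ι : Type*} {c : ComplexShape ι}
    {S : ShortComplex (HomologicalComplex (ModuleCat.{u} R) c)} (hS : S.ShortExact)
    (h₁ : S.X₁.Acyclic) {i : ι} (h₂ : S.X₂.ExactAt i) : S.X₃.ExactAt i :=
  hS.exactAt_X₃ i (h₂.isZero_homology.epi _) fun j _ => (h₁ j).isZero_homology.mono _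

end Exactness

section Free

variable {R B M : Type u} [CommRing R] [Ring B] [Algebra R B] {ε : B →ₐ[R] R}
  [AddCommGroup M] [Module R M]

lemma eventually_sum_lTensor_lTensor {Y : Type*} [AddCommGroup Y] [Module R Y] {α : Type*}
    {Z : α → Type*} [∀ a, AddCommGroup (Z a)] [∀ a, Module R (Z a)] {f : ∀ a, Z a →ₗ[R] Y}
    {g : ∀ a, Y →ₗ[R] Z a}
    (h : ∀ y, ∀ᶠ s : Finset α in Filter.atTop, ∑ a ∈ s, f a (g a y) = y) (x : B ⊗[R] Y) :
    ∀ᶠ s : Finset α in Filter.atTop, ∑ a ∈ s, (f a).lTensor B ((g a).lTensor B x) = x := by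
  induction x using TensorProduct.induction_on with
  | zero => simp
  | tmul b y => exact (h y).mono fun s hs => by simp [← tmul_sum, hs]
  | add x y hx hy =>
    exact (hx.and hy).mono fun s hs => by simp [Finset.sum_add_distrib, hs.1, hs.2]

variable (R B M) in
lemma eventually_sum_barModuleMap_lsingle_lapply (N : Type u) : ∀ (q : ℕ)
    (x : barModule R B (N →₀ M) q), ∀ᶠ s : Finset N in Filter.atTop,
      ∑ n ∈ s, barModuleMap (AlgHom.id R B) (Finsupp.lsingle n) q
        (barModuleMap (AlgHom.id R B) (Finsupp.lapply n) q x) = x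
  | 0 => fun (x : N →₀ M) => by
    filter_upwards [Filter.eventually_ge_atTop x.support] with s hs
    exact (Finsupp.sum_of_support_subset x hs Finsupp.single (by simp)).symm.trans x.sum_single
  | q + 1 =>
    eventually_sum_lTensor_lTensor (eventually_sum_barModuleMap_lsingle_lapply N q)

lemma barComplex_exactAt_finsupp [Module B M] [IsScalarTower R B M] (N : Type u) (q : ℕ)
    (h : (barComplex M ε).ExactAt q) : (barComplex (N →₀ M) ε).ExactAt q :=
  exactAt_of_sum_eq (fun n => barCoeffMap ε (Finsupp.lsingle n))
    (fun n => barCoeffMap ε (Finsupp.lapply n))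
    (fun z => (eventually_sum_barModuleMap_lsingle_lapply R B M N q z).exists) fun _ => h

lemma barComplex_self_exactAt_succ (q : ℕ) : (barComplex B ε).ExactAt (q + 1) :=
  barComplex_exactAt_succ_of_section (η := LinearMap.toSpanSingleton B (B ⊗[R] B) (1 ⊗ₜ 1))
    (fun b => by simp [smul_tmul']) q

end Free

section Comparison

variable {R A B : Type u} [CommRing R] [Ring A] [Algebra R A] [Ring B] [Algebra R B]
  {εA : A →ₐ[R] R} {εB : B →ₐ[R] R} {π : A →ₐ[R] B} [Module A B]

lemma barComplex_exactAt_succ_of_surjective [IsScalarTower R A B] [Module.Flat R A]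
    (hA : ∀ a : A, a • (1 : B) = π a) (hπ : Function.Surjective π)
    (hker : (barComplex (RingHom.ker π) εA).Acyclic) (q : ℕ) :
    (barComplex B εA).ExactAt (q + 1) := by
  have hexact : Function.Exact (RingHom.ker π).subtype (LinearMap.toSpanSingleton A B 1) :=
    fun a => by simp [hA, RingHom.mem_ker]
  have hsurj : Function.Surjective (LinearMap.toSpanSingleton A B 1) := fun b => by
    obtain ⟨a, rfl⟩ := hπ b
    exact ⟨a, hA a⟩
  exact exactAt_X₃_of_acyclic
    (barShortComplex_shortExact εA hexact Subtype.val_injective hsurj) hker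
    (barComplex_self_exactAt_succ q)

section Map

variable {M : Type u} [AddCommGroup M] [Module R M]
  [Module A M] [IsScalarTower R A M] [Module B M] [IsScalarTower R B M] [IsScalarTower A B M]

variable (M) in
/-- The map from the bar complex of a `B`-module over `A` to that over `B`. -/
def barRestrictMap (hA : ∀ a : A, a • (1 : B) = π a) (hε : εB.comp π = εA) :
    barComplex M εA ⟶ barComplex M εB :=
  barMap (f := LinearMap.id) hε fun a m => by
    rw [LinearMap.id_apply, ← hA, smul_assoc, one_smul, LinearMap.id_apply]

lemma isIso_homologyMap_barRestrictMap_zero (hA : ∀ a : A, a • (1 : B) = π a)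
    (hε : εB.comp π = εA) (hπ : Function.Surjective π) :
    IsIso (HomologicalComplex.homologyMap (barRestrictMap M hA hε) 0) := by
  have h₁ : Epi ((barRestrictMap M hA hε).f 1) :=
    (ModuleCat.epi_iff_surjective _).mpr (TensorProduct.map_surjective hπ Function.surjective_id)
  have h₂ : IsIso ((barRestrictMap M hA hε).f 0) := inferInstanceAs (IsIso (𝟙 _))
  have h₃ : ShortComplex.QuasiIso ((HomologicalComplex.shortComplexFunctor' _ _ 1 0 0).map
      (barRestrictMap M hA hε)) :=
    @ShortComplex.quasiIso_of_epi_of_isIso_of_mono _ _ _ _ _ _ _ _ h₁ h₂ (IsIso.mono_of_iso (𝟙 _))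
  rwa [← quasiIsoAt_iff_isIso_homologyMap,
    quasiIsoAt_iff' _ 1 0 0 (by simp) (by simp)]

/-- The map of `barRestrictMap`s on an exact sequence of `B`-modules. -/
@[simps]
def barShortComplexRestrictMap {M₁ M₂ : Type u} [AddCommGroup M₁] [Module R M₁] [Module A M₁]
    [IsScalarTower R A M₁] [Module B M₁] [IsScalarTower R B M₁] [IsScalarTower A B M₁]
    [AddCommGroup M₂] [Module R M₂] [Module A M₂] [IsScalarTower R A M₂] [Module B M₂]
    [IsScalarTower R B M₂] [IsScalarTower A B M₂] (hA : ∀ a : A, a • (1 : B) = π a)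
    (hε : εB.comp π = εA) {f : M₁ →ₗ[B] M₂} {g : M₂ →ₗ[B] M} (hfg : Function.Exact f g)
    (hg : Function.Surjective g) :
    barShortComplex εA (f := f.restrictScalars A) (g := g.restrictScalars A) hfg hg ⟶
      barShortComplex εB hfg hg where
  τ₁ := barRestrictMap M₁ hA hε
  τ₂ := barRestrictMap M₂ hA hε
  τ₃ := barRestrictMap M hA hε
  comm₁₂ := by
    ext q x
    exact LinearMap.congr_fun
      ((barModuleMap_comp (.id R B) π (f.restrictScalars R) .id q).symm.trans
        (barModuleMap_comp π (.id R A) .id (f.restrictScalars R) q)) x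
  comm₂₃ := by
    ext q x
    exact LinearMap.congr_fun
      ((barModuleMap_comp (.id R B) π (g.restrictScalars R) .id q).symm.trans
        (barModuleMap_comp π (.id R A) .id (g.restrictScalars R) q)) x

end Map

variable [IsScalarTower A B B] [IsScalarTower R A B]

section Induction

variable [Module.Flat R A] (hA : ∀ a : A, a • (1 : B) = π a) (hε : εB.comp π = εA)
  (hπ : Function.Surjective π) (hker : (barComplex (RingHom.ker π) εA).Acyclic) (q : ℕ)

include hπ hker

lemma isIso_homologyMap_barRestrictMap_finsupp (N : Type u) :
    IsIso (HomologicalComplex.homologyMap (barRestrictMap (N →₀ B) hA hε) q) := by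
  cases q with
  | zero => exact isIso_homologyMap_barRestrictMap_zero hA hε hπ
  | succ q =>
    have hFA := barComplex_exactAt_finsupp N (q + 1)
      (barComplex_exactAt_succ_of_surjective hA hπ hker q)
    have hFB := barComplex_exactAt_finsupp N (q + 1) (barComplex_self_exactAt_succ (ε := εB) q)
    exact hFA.isZero_homology.isIso hFB.isZero_homology _

variable [Module.Flat R B]

/- Dimension shifting along `0 → K → F → M → 0` with `F` a free `B`-module: the bar complexes of
`F` over `A` and over `B` have no homology in positive degrees. -/
lemma homologyMap_barRestrictMap_succ_of_isIso (M : Type u) [AddCommGroup M] [Module R M]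
    [Module A M] [IsScalarTower R A M] [Module B M] [IsScalarTower R B M] [IsScalarTower A B M]
    (hK : IsIso (HomologicalComplex.homologyMap (barRestrictMap
      (LinearMap.ker (Finsupp.linearCombination B (id : M → M))) hA hε) q)) :
    Epi (HomologicalComplex.homologyMap (barRestrictMap M hA hε) (q + 1)) ∧
      (Epi (HomologicalComplex.homologyMap (barRestrictMap
        (LinearMap.ker (Finsupp.linearCombination B (id : M → M))) hA hε) (q + 1)) →
      IsIso (HomologicalComplex.homologyMap (barRestrictMap M hA hε) (q + 1))) := by
  set p : (M →₀ B) →ₗ[B] M := Finsupp.linearCombination B id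
  have hp : Function.Surjective p := Finsupp.linearCombination_id_surjective B M
  have hexact : Function.Exact (LinearMap.ker p).subtype p := p.exact_subtype_ker_map
  have hinj : Function.Injective (LinearMap.ker p).subtype := Subtype.val_injective
  have hSA := barShortComplex_shortExact εA (M₁ := LinearMap.ker p)
    (f := (LinearMap.ker p).subtype.restrictScalars A) (g := p.restrictScalars A) hexact hinj hp
  have hSB := barShortComplex_shortExact εB (M₁ := LinearMap.ker p) hexact hinj hp
  let φ := barShortComplexRestrictMap (M₁ := LinearMap.ker p) hA hε hexact hp
  have hfree (q : ℕ) : IsIso (HomologicalComplex.homologyMap φ.τ₂ q) :=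
    isIso_homologyMap_barRestrictMap_finsupp hA hε hπ hker q M
  have hK' (j : ℕ) (hj : (ComplexShape.down ℕ).Rel (q + 1) j) :
      IsIso (HomologicalComplex.homologyMap φ.τ₁ j) := by
    obtain rfl : q = j := (Nat.succ.inj hj).symm
    exact hK
  have hepi₃ : Epi (HomologicalComplex.homologyMap φ.τ₃ (q + 1)) := by
    refine HomologicalComplex.HomologySequence.epi_homologyMap_τ₃ φ hSA hSB (q + 1) inferInstance
      (fun j hj => ?_) fun j _ => inferInstance
    have := hK' j hj
    infer_instance
  refine ⟨hepi₃, fun h => ?_⟩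
  have hmono₃ : Mono (HomologicalComplex.homologyMap φ.τ₃ (q + 1)) := by
    refine HomologicalComplex.HomologySequence.mono_homologyMap_τ₃ φ hSA hSB (q + 1) h
      inferInstance fun j hj => ?_
    have := hK' j hj
    infer_instance
  exact isIso_of_mono_of_epi (HomologicalComplex.homologyMap φ.τ₃ (q + 1))

theorem isIso_homologyMap_barRestrictMap (M : Type u) [AddCommGroup M]
    [Module R M] [Module A M] [IsScalarTower R A M] [Module B M] [IsScalarTower R B M]
    [IsScalarTower A B M] :
    IsIso (HomologicalComplex.homologyMap (barRestrictMap M hA hε) q) := by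
  induction q generalizing M with
  | zero => exact isIso_homologyMap_barRestrictMap_zero hA hε hπ
  | succ q ih =>
    exact (homologyMap_barRestrictMap_succ_of_isIso hA hε hπ hker q M (ih _)).2
      (homologyMap_barRestrictMap_succ_of_isIso hA hε hπ hker q _ (ih _)).1

end Induction

end Comparison

/-! ### Comparison with the standard bar complex -/

section Tor

variable {R B : Type} [CommRing R] [Ring B] [Algebra R B]

lemma nonempty_homology_equiv_quotient (S : ShortComplex (ModuleCat R)) {Y : Type}
    [AddCommGroup Y] [Module R Y] (Z W : Submodule R Y) (e : S.X₂ ≃ₗ[R] Y)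
    (hZ : ∀ x, e x ∈ Z ↔ S.g x = 0) (hW : ∀ x, e x ∈ W ↔ ∃ w, S.f w = x) :
    Nonempty (S.homology ≃ₗ[R] Z ⧸ W.comap Z.subtype) := by
  have hker : (LinearMap.ker S.g.hom).map e.toLinearMap = Z := by
    rw [show LinearMap.ker S.g.hom = Z.comap e.toLinearMap from
      Submodule.ext fun x => (hZ x).symm]
    exact Submodule.map_comap_eq_of_surjective e.surjective Z
  refine ⟨S.moduleCatHomologyIso.toLinearEquiv.trans
    (Submodule.Quotient.equiv _ _ (LinearEquiv.ofSubmodules e _ _ hker) ?_)⟩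
  ext ⟨y, hy⟩
  obtain ⟨x, rfl⟩ := e.surjective y
  rw [Submodule.mem_map_equiv, Submodule.mem_comap, Submodule.subtype_apply, hW]
  refine exists_congr fun w => Subtype.ext_iff.trans ?_
  exact Eq.congr_right (e.symm_apply_apply x)

variable (R B) in
/-- The coefficients `R` of the bar complex split off as the last tensor factor. -/
def barCEquiv : ∀ q : ℕ, barModule R B R q ≃ₗ[R] barC R B q
  | 0 => LinearEquiv.refl R R
  | q + 1 => (barCEquiv q).lTensor B

section Action

variable (ε : B →ₐ[R] R)

/-- The action on `barC` corresponding to `barAction`. -/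
def barCAction (q : ℕ) : B ⊗[R] barC R B q →ₗ[R] barC R B q := -barB R B ε q

lemma barCAction_succ (q : ℕ) : barCAction ε (q + 1) = extendAction (barCAction ε q) := by
  refine TensorProduct.ext' fun a (x : B ⊗[R] barC R B q) => ?_
  have h (y : B ⊗[R] barC R B q) (z : barC R B q) : -(-y - a ⊗ₜ z) = y - a ⊗ₜ (-z) := by
    rw [tmul_neg]
    abel
  exact h (a • x) (barB R B ε q x)

lemma bard_eq (q : ℕ) : bard R B ε q = augmentationMap ε (barC R B q) - barCAction ε q :=
  (sub_neg_eq_add _ _).symm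

end Action

section Comparison

variable [Module B R] [IsScalarTower R B R] {ε : B →ₐ[R] R}

lemma barCEquiv_barAction (hε : ∀ (b : B) (r : R), b • r = ε b • r) (q : ℕ)
    (x : B ⊗[R] barModule R B R q) :
    barCEquiv R B q (barAction R B R q x) =
      barCAction ε q ((barCEquiv R B q).toLinearMap.lTensor B x) := by
  induction q with
  | zero =>
    induction x using TensorProduct.induction_on with
    | zero => simp only [map_zero]
    | add x y hx hy => simp only [map_add, hx, hy]
    | tmul b r => exact (hε b r).trans (neg_neg (ε b • r)).symm
  | succ q ih =>
    rw [barCAction_succ]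
    exact map_extendAction (.id R B) (barCEquiv R B q).toLinearMap ih x

lemma barCEquiv_barDifferential (hε : ∀ (b : B) (r : R), b • r = ε b • r) (q : ℕ)
    (x : B ⊗[R] barModule R B R q) :
    barCEquiv R B q (barDifferential R ε q x) =
      bard R B ε q ((barCEquiv R B q).toLinearMap.lTensor B x) := by
  rw [bard_eq, barDifferential, LinearMap.sub_apply, LinearMap.sub_apply, map_sub,
    barCEquiv_barAction hε]
  exact congrArg (· - _)
    (map_augmentationMap (.id R B) (barCEquiv R B q).toLinearMap (ε := ε) (ε' := ε) rfl x)

lemma barCEquiv_mem_barCycles (hε : ∀ (b : B) (r : R), b • r = ε b • r) (q : ℕ)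
    (x : barModule R B R q) : barCEquiv R B q x ∈ barCycles R B ε q ↔
      (barComplex R ε).d q ((ComplexShape.down ℕ).next q) x = 0 := by
  cases q with
  | zero =>
    rw [(barComplex R ε).shape 0 _ (by simp)]
    exact ⟨fun _ => rfl, fun _ => Submodule.mem_top⟩
  | succ q =>
    rw [ChainComplex.next_nat_succ, barComplex_d]
    exact (Eq.congr_left (barCEquiv_barDifferential hε q x).symm).trans
      (map_eq_zero_iff _ (barCEquiv R B q).injective)

lemma barCEquiv_mem_range_bard (hε : ∀ (b : B) (r : R), b • r = ε b • r) (q : ℕ)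
    (x : barModule R B R q) : barCEquiv R B q x ∈ LinearMap.range (bard R B ε q) ↔
      ∃ w, (barComplex R ε).d (q + 1) q w = x := by
  rw [barComplex_d]
  refine ((LinearEquiv.lTensor B (barCEquiv R B q)).surjective.exists.trans ?_)
  exact exists_congr fun w => (Eq.congr_left (barCEquiv_barDifferential hε q w).symm).trans
    (barCEquiv R B q).injective.eq_iff

lemma nonempty_homology_equiv_barTor (hε : ∀ (b : B) (r : R), b • r = ε b • r) (q : ℕ) :
    Nonempty ((barComplex R ε).homology q ≃ₗ[R] barTor R B ε q) := by
  obtain ⟨e⟩ := nonempty_homology_equiv_quotient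
    ((barComplex R ε).sc' (q + 1) q ((ComplexShape.down ℕ).next q)) (barCycles R B ε q)
    (LinearMap.range (bard R B ε q)) (barCEquiv R B q) (barCEquiv_mem_barCycles hε q)
    (barCEquiv_mem_range_bard hε q)
  exact ⟨((barComplex R ε).homologyIsoSc' (q + 1) q _ (by simp) rfl).toLinearEquiv.trans e⟩

end Comparison

theorem nonempty_barTor_equiv_of_surjective {A : Type} [Ring A] [Algebra R A] [Module.Flat R A]
    [Module.Flat R B] {εA : A →ₐ[R] R} {εB : B →ₐ[R] R} {π : A →ₐ[R] B}
    (hε : εB.comp π = εA) (hπ : Function.Surjective π)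
    (hker : (barComplex (RingHom.ker π) εA).Acyclic) (q : ℕ) :
    Nonempty (barTor R A εA q ≃ₗ[R] barTor R B εB q) := by
  let _ : Module B R := Module.compHom R εB.toRingHom
  let _ : Module A R := Module.compHom R εA.toRingHom
  let _ : Module A B := Module.compHom B π.toRingHom
  have hB (b : B) (r : R) : b • r = εB b * r := rfl
  have hA (a : A) (b : B) : a • b = π a * b := rfl
  have hAR (a : A) (r : R) : a • r = εB (π a) * r := congrArg (· * r) (DFunLike.congr_fun hε a).symm
  have : IsScalarTower R B R := ⟨fun r b s => by simp [hB, mul_assoc]⟩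
  have : IsScalarTower R A R := ⟨fun r a s => by simp [hAR, mul_assoc]⟩
  have : IsScalarTower R A B := ⟨fun r a b => by simp [hA]⟩
  have : IsScalarTower A B R := ⟨fun a b s => by simp [hA, hB, hAR, mul_assoc]⟩
  have : IsScalarTower A B B := ⟨fun a b c => mul_assoc _ b c⟩
  obtain ⟨eA⟩ := nonempty_homology_equiv_barTor (ε := εA) (fun _ _ => rfl) q
  obtain ⟨eB⟩ := nonempty_homology_equiv_barTor (ε := εB) (fun _ _ => rfl) q
  have := isIso_homologyMap_barRestrictMap (fun a => mul_one (π a)) hε hπ hker q R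
  exact ⟨(eA.symm.trans (asIso (HomologicalComplex.homologyMap
    (barRestrictMap R (fun a => mul_one (π a)) hε) q)).toLinearEquiv).trans eB⟩

end Tor

/-! ### Ideals covered by commuting idempotents -/

section Acyclic

variable {R B M : Type u} [CommRing R] [Ring B] [Algebra R B] {ε : B →ₐ[R] R}
  [AddCommGroup M] [Module R M] [Module B M] [IsScalarTower R B M]

lemma barComplex_acyclic_of_mul_eq {J : Ideal B} {e : B} (he : e ∈ J) (hJ : ∀ x ∈ J, x * e = x)
    (hε : ε e = 0) : (barComplex J ε).Acyclic := by
  let e' : J := ⟨e, he⟩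
  let η : J →ₗ[B] B ⊗[R] J :=
    (LinearMap.toSpanSingleton B (B ⊗[R] J) (1 ⊗ₜ e')).domRestrict J
  have hη (x : J) : η x = (x : B) ⊗ₜ e' := by simp [η, smul_tmul']
  have hact (x : J) : actionMap R B J (η x) = x := by
    rw [hη, actionMap_tmul]
    exact Subtype.ext (hJ x x.2)
  have hεJ (x : J) : ε x = 0 := by rw [← hJ x x.2, map_mul, hε, mul_zero]
  rintro (_ | q)
  · exact barComplex_exactAt_zero_of_section hact fun x => by
      rw [hη, augmentationMap_tmul, hεJ, zero_smul]
  · exact barComplex_exactAt_succ_of_section hact q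

lemma barComplex_acyclic_sup [Module.Flat R B] {p q : Submodule B M} (hp : (barComplex p ε).Acyclic)
    (hq : (barComplex q ε).Acyclic) (hpq : (barComplex ↥(p ⊓ q) ε).Acyclic) :
    (barComplex ↥(p ⊔ q) ε).Acyclic := by
  have hprod : (barComplex (p × q) ε).Acyclic := fun i =>
    (barShortComplex_shortExact ε (M₁ := p) (M₃ := q) (f := LinearMap.inl B p q)
      (g := LinearMap.snd B p q) Function.Exact.inl_snd
      LinearMap.inl_injective LinearMap.snd_surjective).exactAt_X₂ i (hp i) (hq i)
  let f : ↥(p ⊓ q) →ₗ[B] p × q :=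
    (Submodule.inclusion inf_le_left).prod (Submodule.inclusion inf_le_right)
  let g : p × q →ₗ[B] ↥(p ⊔ q) :=
    (Submodule.inclusion le_sup_left).coprod (-Submodule.inclusion le_sup_right)
  have hfg : Function.Exact f g := by
    rintro ⟨⟨x, hx⟩, ⟨y, hy⟩⟩
    have hg : g (⟨x, hx⟩, ⟨y, hy⟩) = 0 ↔ x = y := by
      simp [g, Subtype.ext_iff, ← sub_eq_add_neg, sub_eq_zero]
    rw [hg]
    constructor
    · rintro rfl
      exact ⟨⟨x, hx, hy⟩, rfl⟩
    · rintro ⟨z, hz⟩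
      exact (congrArg (fun w => (w.1 : M)) hz).symm.trans (congrArg (fun w => (w.2 : M)) hz)
  have hf : Function.Injective f := fun x y h =>
    Subtype.ext (congrArg (fun w => (w.1 : M)) h)
  have hg : Function.Surjective g := by
    rintro ⟨z, hz⟩
    obtain ⟨x, hx, y, hy, rfl⟩ := Submodule.mem_sup.mp hz
    exact ⟨(⟨x, hx⟩, ⟨-y, neg_mem hy⟩), Subtype.ext (by simp [g])⟩
  exact fun i => exactAt_X₃_of_acyclic (barShortComplex_shortExact ε (M₁ := ↥(p ⊓ q))
    (M₃ := ↥(p ⊔ q)) hfg hf hg) hpq (hprod i)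

lemma eventually_mem_range_lTensor {Y : Type*} [AddCommGroup Y] [Module R Y] {α : Type*}
    {l : Filter α} {Z : α → Type*} [∀ a, AddCommGroup (Z a)] [∀ a, Module R (Z a)]
    {f : ∀ a, Z a →ₗ[R] Y} (h : ∀ y, ∀ᶠ a in l, y ∈ LinearMap.range (f a)) (x : B ⊗[R] Y) :
    ∀ᶠ a in l, x ∈ LinearMap.range ((f a).lTensor B) := by
  induction x using TensorProduct.induction_on with
  | zero => exact .of_forall fun a => zero_mem _
  | tmul b y =>
    filter_upwards [h y] with a ⟨z, hz⟩
    exact ⟨b ⊗ₜ z, by rw [LinearMap.lTensor_tmul, hz]⟩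
  | add x y hx hy => exact (hx.and hy).mono fun a ha => add_mem ha.1 ha.2

lemma eventually_mem_range_barModuleMap {Y : Type u} [AddCommGroup Y] [Module R Y] {α : Type*}
    {l : Filter α} {Z : α → Type u} [∀ a, AddCommGroup (Z a)] [∀ a, Module R (Z a)]
    {f : ∀ a, Z a →ₗ[R] Y} (h : ∀ y, ∀ᶠ a in l, y ∈ LinearMap.range (f a)) :
    ∀ (n : ℕ) (x : barModule R B Y n),
      ∀ᶠ a in l, x ∈ LinearMap.range (barModuleMap (AlgHom.id R B) (f a) n)
  | 0 => h
  | n + 1 => eventually_mem_range_lTensor (eventually_mem_range_barModuleMap h n)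

lemma barComplex_acyclic_of_eventually_mem [Module.Flat R B] {α : Type*} {l : Filter α} [l.NeBot]
    {p : Submodule B M} {r : α → Submodule B M} (hr : ∀ a, r a ≤ p)
    (hp : ∀ x ∈ p, ∀ᶠ a in l, x ∈ r a) (h : ∀ a, (barComplex (r a) ε).Acyclic) :
    (barComplex p ε).Acyclic := fun n =>
  exactAt_of_mem_range (fun a => barCoeffMap ε (Submodule.inclusion (hr a)))
    (fun a => barModuleMap_injective (M₁ := r a) (M₂ := p)
      (f := (Submodule.inclusion (hr a)).restrictScalars R)
      (Submodule.inclusion_injective (hr a)) _)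
    (fun z => (eventually_mem_range_barModuleMap (Y := p) (Z := fun a => r a)
      (f := fun a => (Submodule.inclusion (hr a)).restrictScalars R)
      (fun y => (hp y y.2).mono fun _ ha => ⟨⟨y, ha⟩, rfl⟩) n z).exists) fun a => h a n

end Acyclic

section BasedIdeals

lemma prop_finset_sup_of_inf {L ι : Type*} [DistribLattice L] [BoundedOrder L] {P : L → Prop}
    (hbot : P ⊥) (hsup : ∀ x y, P x → P y → P (x ⊓ y) → P (x ⊔ y)) (F : Finset ι) :
    ∀ f : ι → L, (∀ F : Finset ι, F.Nonempty → P (F.inf f)) → P (F.sup f) := by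
  classical
  induction F using Finset.induction_on with
  | empty => exact fun _ _ => hbot
  | insert a F _ ih =>
    intro f hf
    rw [Finset.sup_insert]
    refine hsup _ _ (by simpa using hf {a} (Finset.singleton_nonempty a)) (ih f hf) ?_
    rw [Finset.sup_inf_distrib_left]
    refine ih _ fun F' hF' => ?_
    have hinf : F'.inf (fun i => f a ⊓ f i) = (insert a F').inf f := by
      refine (Finset.inf_inf (f := fun _ => f a)).trans ?_
      rw [Finset.inf_const hF', Finset.inf_insert]
    rw [hinf]
    exact hf _ (Finset.insert_nonempty _ _)

variable {R A D Λ : Type u} [CommRing R] [Ring A] [Algebra R A]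

/-- The sets of basis vectors spanning a left ideal with acyclic bar complex. -/
def SpansAcyclicIdeal (b : Module.Basis D R A) (ε : A →ₐ[R] R) (S : Set D) : Prop :=
  ∃ J : Ideal A, J.restrictScalars R = Submodule.span R (b '' S) ∧ (barComplex J ε).Acyclic

variable {b : Module.Basis D R A} {ε : A →ₐ[R] R}

lemma mem_iff_support_subset {S : Set D} {J : Ideal A}
    (hJ : J.restrictScalars R = Submodule.span R (b '' S)) {x : A} :
    x ∈ J ↔ ↑(b.repr x).support ⊆ S := by
  rw [← b.mem_span_image, ← hJ, Submodule.restrictScalars_mem]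

lemma spansAcyclicIdeal_empty : SpansAcyclicIdeal b ε ∅ :=
  ⟨⊥, by simp, barComplex_acyclic_of_mul_eq (e := 0) (zero_mem _) (by simp) (map_zero ε)⟩

lemma SpansAcyclicIdeal.union [Module.Flat R A] {S T : Set D} (hS : SpansAcyclicIdeal b ε S)
    (hT : SpansAcyclicIdeal b ε T) (hST : SpansAcyclicIdeal b ε (S ∩ T)) :
    SpansAcyclicIdeal b ε (S ∪ T) := by
  obtain ⟨J, hJ, hJac⟩ := hS
  obtain ⟨K, hK, hKac⟩ := hT
  obtain ⟨L, hL, hLac⟩ := hST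
  obtain rfl : L = J ⊓ K := Submodule.ext fun x => by
    rw [Submodule.mem_inf, mem_iff_support_subset hL, mem_iff_support_subset hJ,
      mem_iff_support_subset hK, Set.subset_inter_iff]
  refine ⟨J ⊔ K, ?_, barComplex_acyclic_sup hJac hKac hLac⟩
  rw [Submodule.restrictScalars_sup, hJ, hK, Set.image_union, Submodule.span_union]

section Idempotents

variable {e : Λ → A} {Rt : D → Set Λ} (hε : ∀ l, ε (e l) = 0)
  (hb : ∀ d, ∀ l ∈ Rt d, b d * e l = b d)
  (hmem : ∀ x l, x * e l ∈ Submodule.span R (b '' {d | l ∈ Rt d}))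

include hb hmem

lemma mem_span_iff_mul_eq (l : Λ) {x : A} :
    x ∈ Submodule.span R (b '' {d | l ∈ Rt d}) ↔ x * e l = x := by
  refine ⟨fun hx => ?_, fun hx => hx ▸ hmem x l⟩
  have hle : Submodule.span R (b '' {d | l ∈ Rt d}) ≤
      LinearMap.eqLocus (LinearMap.mulRight R (e l)) LinearMap.id :=
    Submodule.span_le.mpr (by rintro _ ⟨d, hd, rfl⟩; exact hb d l hd)
  exact hle hx

include hε

lemma spansAcyclicIdeal_subset (hcomm : ∀ d, (Rt d).Pairwise fun l m => Commute (e l) (e m))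
    {F : Finset Λ} (hF : F.Nonempty) : SpansAcyclicIdeal b ε {d | ↑F ⊆ Rt d} := by
  classical
  obtain hempty | ⟨d₀, hd₀⟩ := {d | ↑F ⊆ Rt d}.eq_empty_or_nonempty
  · exact hempty ▸ spansAcyclicIdeal_empty
  have hFcomm : (F : Set Λ).Pairwise fun l m => Commute (e l) (e m) := (hcomm d₀).mono hd₀
  let E := F.noncommProd e hFcomm
  have hE (l : Λ) (hl : l ∈ F) : E = (F.erase l).noncommProd e
      (hFcomm.mono (Finset.erase_subset l F)) * e l := (F.noncommProd_erase_mul hl e hFcomm).symm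
  have hidem (l : Λ) : e l * e l = e l :=
    (mem_span_iff_mul_eq hb hmem l).mp (by simpa using hmem 1 l)
  have hEe (l : Λ) (hl : l ∈ F) : E * e l = E := by rw [hE l hl, mul_assoc, hidem]
  have hxE {x : A} (hx : ∀ l ∈ F, x * e l = x) : x * E = x :=
    F.noncommProd_induction e hFcomm (fun y => x * y = x)
      (fun y z hy hz => by rw [← mul_assoc, hy, hz]) (mul_one x) hx
  have hmemE {x : A} (hx : x ∈ Ideal.span {E}) : ∀ l ∈ F, x * e l = x := by
    obtain ⟨a, rfl⟩ := Ideal.mem_span_singleton'.mp hx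
    exact fun l hl => by rw [mul_assoc, hEe l hl]
  refine ⟨Ideal.span {E}, le_antisymm (fun x hx => ?_) (Submodule.span_le.mpr ?_), ?_⟩
  · rw [b.mem_span_image]
    exact fun d hd l hl => b.mem_span_image.mp
      ((mem_span_iff_mul_eq hb hmem l).mpr (hmemE hx l hl)) hd
  · rintro _ ⟨d, hd, rfl⟩
    exact Ideal.mem_span_singleton'.mpr ⟨b d, hxE fun l hl => hb d l (hd hl)⟩
  · obtain ⟨l, hl⟩ := hF
    exact barComplex_acyclic_of_mul_eq (Ideal.mem_span_singleton_self E)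
      (fun x hx => hxE (hmemE hx)) (by rw [hE l hl, map_mul, hε, mul_zero])

theorem barComplex_acyclic_of_idempotents
    (hcomm : ∀ d, (Rt d).Pairwise fun l m => Commute (e l) (e m)) {I : Ideal A}
    (hI : I.restrictScalars R = Submodule.span R (b '' {d | (Rt d).Nonempty})) :
    (barComplex I ε).Acyclic := by
  have : Module.Free R A := .of_basis b
  have hfin (F : Finset Λ) : SpansAcyclicIdeal b ε (F.sup fun l => {d | l ∈ Rt d}) := by
    refine prop_finset_sup_of_inf spansAcyclicIdeal_empty (fun _ _ => .union) F _ fun F' hF' => ?_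
    convert spansAcyclicIdeal_subset hε hb hmem hcomm hF' using 1
    ext d
    simp [Finset.inf_set_eq_iInter, Set.subset_def]
  choose J hJ hJac using hfin
  have hmemJ (F : Finset Λ) (x : A) :
      x ∈ J F ↔ ∀ d ∈ (b.repr x).support, ∃ l ∈ F, l ∈ Rt d := by
    rw [mem_iff_support_subset (hJ F)]
    simp [Set.subset_def]
  have hmemI (x : A) : x ∈ I ↔ ∀ d ∈ (b.repr x).support, (Rt d).Nonempty :=
    mem_iff_support_subset hI
  refine barComplex_acyclic_of_eventually_mem (l := Filter.atTop) (r := J)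
    (fun F x hx => (hmemI x).mpr fun d hd => ?_) (fun x hx => ?_) hJac
  · obtain ⟨l, -, hl⟩ := (hmemJ F x).mp hx d hd
    exact ⟨l, hl⟩
  · simp only [hmemJ]
    refine (Finset.eventually_all _).mpr fun d hd => ?_
    obtain ⟨l, hl⟩ := (hmemI x).mp hx d hd
    filter_upwards [Filter.eventually_ge_atTop {l}] with F hF
    exact ⟨l, hF (Finset.mem_singleton_self l), hl⟩

end Idempotents

end BasedIdeals

/-! ### The Coxeter presentation of the symmetric group -/

section Coxeter

/-- The Coxeter relations of type `A` for the first `N` terms of a sequence in a monoid. -/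
structure IsTypeA {M : Type*} [Monoid M] (z : ℕ → M) (N : ℕ) : Prop where
  sq {i : ℕ} : i < N → z i * z i = 1
  braid {i : ℕ} : i + 1 < N → z i * z (i + 1) * z i = z (i + 1) * z i * z (i + 1)
  comm {i j : ℕ} : i + 1 < j → j < N → z i * z j = z j * z i

variable {M : Type*} [Monoid M] {z : ℕ → M} {N : ℕ}

variable (z) in
/-- The descending product `z (j + k - 1) * ⋯ * z (j + 1) * z j` of `k` factors. -/
def descProd (j : ℕ) : ℕ → M
  | 0 => 1
  | k + 1 => z (j + k) * descProd j k

lemma descProd_succ (j k : ℕ) : descProd z j (k + 1) = z (j + k) * descProd z j k := rfl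

lemma descProd_succ' (j k : ℕ) : descProd z j (k + 1) = descProd z (j + 1) k * z j := by
  induction k with
  | zero => simp [descProd]
  | succ k ih => rw [descProd, ih, descProd, ← mul_assoc, add_right_comm j 1 k, add_assoc j k 1]

lemma descProd_mem {S : Submonoid M} {j k : ℕ} (h : ∀ i, j ≤ i → i < j + k → z i ∈ S) :
    descProd z j k ∈ S := by
  induction k with
  | zero => exact one_mem S
  | succ k ih =>
    exact mul_mem (h _ (by omega) (by omega)) (ih fun i hi hik => h i hi (by omega))

lemma IsTypeA.descProd_mul_of_lt (hz : IsTypeA z N) {i j k : ℕ} (hij : i + 1 < j)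
    (hN : j + k ≤ N) : descProd z j k * z i = z i * descProd z j k := by
  induction k with
  | zero => simp [descProd]
  | succ k ih =>
    rw [descProd, mul_assoc, ih (by omega), ← mul_assoc, ← hz.comm (by omega) (by omega),
      mul_assoc]

lemma IsTypeA.descProd_mul_of_gt (hz : IsTypeA z N) {i j k : ℕ} (hi : j + k < i) (hN : i < N) :
    descProd z j k * z i = z i * descProd z j k := by
  induction k with
  | zero => simp [descProd]
  | succ k ih =>
    rw [descProd, mul_assoc, ih (by omega), ← mul_assoc, hz.comm (by omega) hN, mul_assoc]

lemma IsTypeA.descProd_mul (hz : IsTypeA z N) {j a b : ℕ} (hN : j + (a + 2 + b) ≤ N) :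
    descProd z j (a + 2 + b) * z (j + a + 1) = z (j + a) * descProd z j (a + 2 + b) := by
  induction b with
  | zero =>
    calc z (j + a + 1) * (z (j + a) * descProd z j a) * z (j + a + 1)
        = z (j + a + 1) * z (j + a) * z (j + a + 1) * descProd z j a := by
          simp only [mul_assoc, hz.descProd_mul_of_gt (show j + a < j + a + 1 by omega) (by omega)]
      _ = z (j + a) * (z (j + a + 1) * (z (j + a) * descProd z j a)) := by
          rw [← hz.braid (by omega)]; simp only [mul_assoc]
  | succ b ih =>
    rw [← add_assoc, descProd_succ, mul_assoc, ih (by omega), ← mul_assoc, ← mul_assoc,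
      hz.comm (i := j + a) (j := j + (a + 2 + b)) (by omega) (by omega)]

variable (z) in
/-- The submonoid generated by the first `m` terms of a sequence. -/
def closureLT (m : ℕ) : Submonoid M := Submonoid.closure (z '' Set.Iio m)

lemma mem_closureLT {i m : ℕ} (h : i < m) : z i ∈ closureLT z m :=
  Submonoid.subset_closure ⟨i, h, rfl⟩

lemma IsTypeA.exists_eq_mul_descProd (hz : IsTypeA z N) {m : ℕ} (hm : m + 1 ≤ N) {x : M}
    (hx : x ∈ closureLT z (m + 1)) :
    ∃ y ∈ closureLT z m, ∃ j k, j + k = m + 1 ∧ x = y * descProd z j k := by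
  induction hx using Submonoid.closure_induction_right with
  | one => exact ⟨1, one_mem _, m + 1, 0, rfl, by simp [descProd]⟩
  | mul_right x _ w hw ih =>
    obtain ⟨i, hi : i < m + 1, rfl⟩ := hw
    obtain ⟨y, hy, j, k, hjk, rfl⟩ := ih
    rcases lt_trichotomy (i + 1) j with hij | rfl | hji
    · exact ⟨y * z i, mul_mem hy (mem_closureLT (by omega)), j, k, hjk, by
        rw [mul_assoc, hz.descProd_mul_of_lt hij (by omega), mul_assoc]⟩
    · exact ⟨y, hy, i, k + 1, by omega, by rw [descProd_succ', mul_assoc]⟩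
    rcases Nat.lt_or_ge j i with hlt | hge
    · obtain ⟨a, rfl⟩ := Nat.exists_eq_add_of_lt hlt
      obtain ⟨b, rfl⟩ := Nat.exists_eq_add_of_le (show a + 2 ≤ k by omega)
      exact ⟨y * z (j + a), mul_mem hy (mem_closureLT (by omega)), j, _, hjk, by
        rw [mul_assoc, hz.descProd_mul (by omega), mul_assoc]⟩
    · obtain rfl : i = j := by omega
      obtain ⟨k, rfl⟩ := Nat.exists_eq_add_one_of_ne_zero (show k ≠ 0 by omega)
      exact ⟨y, hy, i + 1, k, by omega, by
        rw [descProd_succ', mul_assoc, mul_assoc, hz.sq (by omega), mul_one]⟩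

/-- The adjacent transposition `(i  i+1)` of `Fin n`, with junk value `1` unless `i + 1 < n`. -/
def adjSwap (n i : ℕ) : Equiv.Perm (Fin n) :=
  if h : i + 1 < n then Equiv.swap ⟨i, by omega⟩ ⟨i + 1, h⟩ else 1

variable {n : ℕ}

lemma adjSwap_left {i : ℕ} (h : i + 1 < n) : adjSwap n i ⟨i, by omega⟩ = ⟨i + 1, h⟩ := by
  simp [adjSwap, h]

lemma adjSwap_right {i : ℕ} (h : i + 1 < n) : adjSwap n i ⟨i + 1, h⟩ = ⟨i, by omega⟩ := by
  simp [adjSwap, h]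

lemma adjSwap_of_ne {i : ℕ} {v : Fin n} (hv : (v : ℕ) ≠ i) (hv' : (v : ℕ) ≠ i + 1) :
    adjSwap n i v = v := by
  unfold adjSwap
  split
  · exact Equiv.swap_apply_of_ne_of_ne (by simpa [Fin.ext_iff]) (by simpa [Fin.ext_iff])
  · rfl

lemma adjSwap_mul_self (i : ℕ) : adjSwap n i * adjSwap n i = 1 := by
  unfold adjSwap; split <;> simp

lemma adjSwap_eq_braidGen (i : Fin (n - 1)) : adjSwap n i = braidGen n i := by
  rw [adjSwap, dif_pos (by omega), braidGen]

lemma isTypeA_adjSwap : IsTypeA (adjSwap n) (n - 1) where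
  sq _ := adjSwap_mul_self _
  braid {i} hi := by
    simpa only [← adjSwap_eq_braidGen] using braidGen_braid n ⟨i, by omega⟩ ⟨i + 1, hi⟩ rfl
  comm {i j} hij hj := by
    simpa only [← adjSwap_eq_braidGen] using braidGen_comm n ⟨i, by omega⟩ ⟨j, hj⟩ hij

section Representation

variable {ψ : M →* Equiv.Perm (Fin n)} (hψ : ∀ i, i + 1 < n → ψ (z i) = adjSwap n i)
include hψ

lemma map_descProd_apply {j k : ℕ} (h : j + k < n) :
    ψ (descProd z j k) ⟨j, by omega⟩ = ⟨j + k, h⟩ := by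
  induction k with
  | zero => simp [descProd]
  | succ k ih =>
    rw [descProd, map_mul, Equiv.Perm.mul_apply, ih (by omega), hψ _ (by omega), adjSwap_left]
    rfl

lemma map_apply_of_mem_closureLT {m : ℕ} {x : M} (hx : x ∈ closureLT z m) {v : Fin n}
    (hv : m < v) : ψ x v = v := by
  induction hx using Submonoid.closure_induction with
  | mem x hx =>
    obtain ⟨i, hi : i < m, rfl⟩ := hx
    rw [hψ _ (by omega)]
    exact adjSwap_of_ne (by omega) (by omega)
  | one => simp
  | mul x y _ _ hx hy => simp [hx, hy]

lemma IsTypeA.eq_one_of_map_eq_one (hz : IsTypeA z N) {m : ℕ} (hm : m ≤ N) (hmn : m ≤ n - 1)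
    {x : M} (hx : x ∈ closureLT z m) (hx1 : ψ x = 1) : x = 1 := by
  induction m generalizing x with
  | zero => simpa [closureLT] using hx
  | succ m ih =>
    obtain ⟨y, hy, j, k, hjk, rfl⟩ := hz.exists_eq_mul_descProd hm hx
    have hk : k = 0 := by
      have hj := congrArg (fun π => π ⟨j, by omega⟩) hx1
      simp only [map_mul, Equiv.Perm.mul_apply, map_descProd_apply hψ (show j + k < n by omega),
        Equiv.Perm.one_apply] at hj
      rw [map_apply_of_mem_closureLT hψ hy (by simp; omega)] at hj
      simpa using hj
    subst hk
    rw [descProd, mul_one] at hx1 ⊢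
    exact ih (by omega) (by omega) hy hx1

end Representation

lemma mem_closure_adjSwap (a : ℕ) {π : Equiv.Perm (Fin n)}
    (hπ : ∀ v : Fin n, (v : ℕ) < a → π v = v) :
    π ∈ Submonoid.closure (adjSwap n '' {i | a ≤ i ∧ i + 1 < n}) := by
  obtain ⟨d, hd⟩ : ∃ d, n ≤ a + d := ⟨n, by omega⟩
  induction d generalizing a π with
  | zero =>
    obtain rfl : π = 1 := Equiv.ext fun v => hπ v (by omega)
    exact one_mem _
  | succ d ih =>
    by_cases ha : n ≤ a
    · exact ih a hπ (by omega)
    push Not at ha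
    obtain ⟨c, hc⟩ : ∃ c, ((π ⟨a, ha⟩ : Fin n) : ℕ) = a + c := by
      refine Nat.exists_eq_add_of_le (not_lt.mp fun hlt => hlt.ne ?_)
      exact congrArg Fin.val (π.injective (hπ _ hlt))
    let γ := descProd (adjSwap n) a c
    have hγa : γ ⟨a, ha⟩ = π ⟨a, ha⟩ :=
      (map_descProd_apply (ψ := MonoidHom.id _) (fun _ _ => rfl)
        (by omega : a + c < n)).trans (Fin.ext hc.symm)
    have hγ : γ ∈ Submonoid.closure (adjSwap n '' {i | a ≤ i ∧ i + 1 < n}) :=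
      descProd_mem fun i hi hic => Submonoid.subset_closure ⟨i, ⟨hi, by omega⟩, rfl⟩
    have hγfix (v : Fin n) (hv : (v : ℕ) < a) : γ v = v := by
      refine descProd_mem (S := MulAction.stabilizerSubmonoid (Equiv.Perm (Fin n)) v)
        fun i hi _ => ?_
      exact adjSwap_of_ne (by omega) (by omega)
    have hrest := ih (a + 1) (π := γ⁻¹ * π) (fun v hv => ?_) (by omega)
    · rw [← mul_inv_cancel_left γ π]
      refine mul_mem hγ (Submonoid.closure_mono (Set.image_mono ?_) hrest)
      exact fun i hi => ⟨by have := hi.1; omega, hi.2⟩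
    · rw [Equiv.Perm.mul_apply, Equiv.Perm.inv_eq_iff_eq]
      rcases (Nat.lt_succ_iff.mp hv).lt_or_eq with hlt | heq
      · rw [hπ v hlt, hγfix v hlt]
      · rw [show v = ⟨a, ha⟩ from Fin.ext heq, hγa]

end Coxeter

section SymmetricGroup

lemma injective_of_surjective_of_eq_one {M H : Type*} [Monoid M] [Group H] {f : M →* H}
    (hf : Function.Surjective f) (hone : ∀ x, f x = 1 → x = 1) : Function.Injective f := by
  intro x y hxy
  obtain ⟨c, hc⟩ := hf (f x)⁻¹
  exact left_inv_eq_right_inv (hone _ (by rw [map_mul, hc, mul_inv_cancel]))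
    (hone _ (by rw [map_mul, hc, hxy, inv_mul_cancel]))

variable {M : Type*} [Monoid M] {s : ℕ → M} {n : ℕ}

lemma IsTypeA.prod_adjSwap (hs : IsTypeA s (n - 1)) :
    IsTypeA (fun i => (s i, adjSwap n i)) (n - 1) where
  sq hi := Prod.ext (hs.sq hi) (isTypeA_adjSwap.sq hi)
  braid hi := Prod.ext (hs.braid hi) (isTypeA_adjSwap.braid hi)
  comm hij hj := Prod.ext (hs.comm hij hj) (isTypeA_adjSwap.comm hij hj)

variable (s n) in
/-- The graph of the homomorphism from the symmetric group to `M` sending the adjacent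
transpositions to the `s i`, as a submonoid of `M × Equiv.Perm (Fin n)`. -/
def permGraph : Submonoid (M × Equiv.Perm (Fin n)) :=
  closureLT (fun i => (s i, adjSwap n i)) (n - 1)

lemma IsTypeA.bijective_snd_permGraph (hs : IsTypeA s (n - 1)) :
    Function.Bijective ((MonoidHom.snd M _).comp (permGraph s n).subtype) := by
  have hsurj : Function.Surjective ((MonoidHom.snd M _).comp (permGraph s n).subtype) := by
    rw [← MonoidHom.mrange_eq_top, eq_top_iff]
    intro π _
    refine Submonoid.closure_le.mpr ?_ (mem_closure_adjSwap 0 (π := π) (by simp))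
    rintro _ ⟨i, ⟨-, hi⟩, rfl⟩
    exact ⟨⟨_, mem_closureLT (z := fun i => (s i, adjSwap n i)) (i := i) (by omega)⟩, rfl⟩
  refine ⟨injective_of_surjective_of_eq_one hsurj fun x hx => Subtype.ext ?_, hsurj⟩
  exact hs.prod_adjSwap.eq_one_of_map_eq_one (ψ := MonoidHom.snd M _) (fun _ _ => rfl) le_rfl
    le_rfl x.2 hx

/-- The homomorphism from the symmetric group determined by elements satisfying the Coxeter
relations of type `A`. -/
def IsTypeA.permHom (hs : IsTypeA s (n - 1)) : Equiv.Perm (Fin n) →* M :=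
  ((MonoidHom.fst M _).comp (permGraph s n).subtype).comp
    (MulEquiv.ofBijective _ hs.bijective_snd_permGraph).symm.toMonoidHom

lemma IsTypeA.permHom_adjSwap (hs : IsTypeA s (n - 1)) {i : ℕ} (hi : i + 1 < n) :
    hs.permHom (adjSwap n i) = s i := by
  have hmem : (s i, adjSwap n i) ∈ permGraph s n :=
    mem_closureLT (z := fun i => (s i, adjSwap n i)) (by omega)
  have hsymm : (MulEquiv.ofBijective _ hs.bijective_snd_permGraph).symm (adjSwap n i)
      = ⟨_, hmem⟩ :=
    (MulEquiv.symm_apply_eq _).mpr rfl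
  exact congrArg (fun x : permGraph s n => x.1.1) hsymm

end SymmetricGroup

/-! ### Algebras with generators of Brauer type -/

section BrauerSystem

/-- The wreath product `G ≀ Σ_n`, that is, `G^n ⋊ Σ_n`. -/
abbrev WreathProduct (G : Type) [CommGroup G] (n : ℕ) : Type :=
  (Fin n → G) ⋊[permMulAut G n] Equiv.Perm (Fin n)

lemma permMulAut_apply {G : Type} [Group G] {n : ℕ} (π : Equiv.Perm (Fin n)) (f : Fin n → G)
    (i : Fin n) : permMulAut G n π f i = f (π⁻¹ i) := rfl

/-- Generators `s i`, `e i`, `t g j` of a `k`-algebra satisfying relations of the `G`-equivariant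
Brauer algebra: enough of them to rewrite every product as a combination of diagrams. The hooks
`e i` and transpositions `s i` are only meaningful for `i + 1 < n`, and `φ g` is the value of a
closed loop with label `g`. -/
structure BrauerSystem (k : Type) [CommRing k] (G : Type) [CommGroup G] (n : ℕ) (φ : G → k)
    (A : Type) [Ring A] [Algebra k A] where
  s : ℕ → A
  e : ℕ → A
  t : G → Fin n → A
  isTypeA : IsTypeA s (n - 1)
  ee_comm {i j : ℕ} : i + 1 < j → j + 1 < n → e i * e j = e j * e i
  s_mul_e {i : ℕ} : i + 1 < n → s i * e i = e i
  e_mul_s {i : ℕ} : i + 1 < n → e i * s i = e i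
  se_comm {i j : ℕ} : i + 1 < n → j + 1 < n → (i + 1 < j ∨ j + 1 < i) → s i * e j = e j * s i
  sse {i j : ℕ} : i + 1 < n → j + 1 < n → (j = i + 1 ∨ i = j + 1) → s i * s j * e i = e j * e i
  ess {i j : ℕ} : i + 1 < n → j + 1 < n → (j = i + 1 ∨ i = j + 1) → e i * s j * s i = e i * e j
  t_mul (g h : G) (j : Fin n) : t g j * t h j = t (g * h) j
  t_one (j : Fin n) : t 1 j = 1
  tt_comm (g h : G) {j l : Fin n} : j ≠ l → t g j * t h l = t h l * t g j
  st (g : G) {i : ℕ} (l : Fin n) : i + 1 < n → s i * t g l = t g (adjSwap n i l) * s i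
  et_comm (g : G) {i : ℕ} {l : Fin n} : i + 1 < n → (l : ℕ) ≠ i → (l : ℕ) ≠ i + 1 →
    e i * t g l = t g l * e i
  slide_left (g : G) {i : ℕ} (h : i + 1 < n) : t g ⟨i, by omega⟩ * e i = t g ⟨i + 1, h⟩ * e i
  slide_right (g : G) {i : ℕ} (h : i + 1 < n) : e i * t g ⟨i, by omega⟩ = e i * t g ⟨i + 1, h⟩
  loop (g : G) {i : ℕ} (h : i + 1 < n) : e i * t g ⟨i, by omega⟩ * e i = φ g • e i
  adjoin_eq_top : Algebra.adjoin k
    ({x | ∃ i, i + 1 < n ∧ (x = s i ∨ x = e i)} ∪ {x | ∃ g j, x = t g j}) = ⊤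

namespace BrauerSystem

variable {k : Type} [CommRing k] {G : Type} [CommGroup G] {n : ℕ} {φ : G → k}
  {A : Type} [Ring A] [Algebra k A] (X : BrauerSystem k G n φ A)

/-- The permutation diagrams. -/
def perm : Equiv.Perm (Fin n) →* A := X.isTypeA.permHom

lemma perm_adjSwap {i : ℕ} (hi : i + 1 < n) : X.perm (adjSwap n i) = X.s i :=
  X.isTypeA.permHom_adjSwap hi

/-- The identity diagram with labels at the `j`-th strand. -/
def labelAt (j : Fin n) : G →* A where
  toFun g := X.t g j
  map_one' := X.t_one j
  map_mul' g h := (X.t_mul g h j).symm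

lemma pairwise_commute_labelAt :
    Pairwise fun i j : Fin n => ∀ x y : G, Commute (X.labelAt i x) (X.labelAt j y) :=
  fun _ _ hij x y => X.tt_comm x y hij

/-- The identity diagram with labelled strands. -/
def label : (Fin n → G) →* A := MonoidHom.noncommPiCoprod X.labelAt X.pairwise_commute_labelAt

lemma label_mulSingle (j : Fin n) (g : G) : X.label (Pi.mulSingle j g) = X.t g j :=
  MonoidHom.noncommPiCoprod_mulSingle X.labelAt j g

lemma commute_label {x : A} {f : Fin n → G} (h : ∀ j, Commute x (X.t (f j) j)) :
    Commute x (X.label f) := by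
  rw [label, MonoidHom.noncommPiCoprod_apply]
  exact Finset.noncommProd_commute _ _ _ _ fun j _ => h j

lemma s_mul_label {i : ℕ} (hi : i + 1 < n) (f : Fin n → G) :
    X.s i * X.label f = X.label (permMulAut G n (adjSwap n i) f) * X.s i := by
  induction f using Pi.mulSingle_induction with
  | one => simp
  | mul f g hf hg => rw [map_mul, ← mul_assoc, hf, mul_assoc, hg, map_mul, map_mul, mul_assoc]
  | mulSingle j g =>
    have hsingle : permMulAut G n (adjSwap n i) (Pi.mulSingle j g)
        = Pi.mulSingle (adjSwap n i j) g := by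
      funext l
      simp only [permMulAut_apply, Pi.mulSingle_apply, Equiv.Perm.inv_eq_iff_eq]
    rw [hsingle, label_mulSingle, label_mulSingle, X.st g j hi]

lemma perm_mul_label (π : Equiv.Perm (Fin n)) (f : Fin n → G) :
    X.perm π * X.label f = X.label (permMulAut G n π f) * X.perm π := by
  induction mem_closure_adjSwap 0 (π := π) (by simp) using Submonoid.closure_induction
    generalizing f with
  | mem x hx =>
    obtain ⟨i, ⟨-, hi⟩, rfl⟩ := hx
    rw [X.perm_adjSwap hi, X.s_mul_label hi]
  | one => simp
  | mul x y _ _ hx hy =>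
    rw [map_mul, mul_assoc, hy, ← mul_assoc, hx, mul_assoc, map_mul]
    rfl

/-- The labelled permutation diagrams. -/
def wreath : WreathProduct G n →* A where
  toFun u := X.label u.left * X.perm u.right
  map_one' := by simp
  map_mul' u v := by
    simp only [SemidirectProduct.mul_left, SemidirectProduct.mul_right, map_mul]
    rw [mul_assoc, mul_assoc, ← mul_assoc (X.perm u.right), X.perm_mul_label, mul_assoc]

lemma wreath_apply (u : WreathProduct G n) : X.wreath u = X.label u.left * X.perm u.right := rfl

lemma wreath_inl (f : Fin n → G) : X.wreath (SemidirectProduct.inl f) = X.label f := by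
  simp [wreath_apply]

lemma wreath_inr (π : Equiv.Perm (Fin n)) : X.wreath (SemidirectProduct.inr π) = X.perm π := by
  simp [wreath_apply]

lemma wreath_inr_adjSwap {i : ℕ} (hi : i + 1 < n) :
    X.wreath (SemidirectProduct.inr (adjSwap n i)) = X.s i := by
  rw [wreath_inr, X.perm_adjSwap hi]

lemma wreath_mul_inv (u : WreathProduct G n) : X.wreath u * X.wreath u⁻¹ = 1 := by
  rw [← map_mul, mul_inv_cancel, map_one]

lemma wreath_inv_mul (u : WreathProduct G n) : X.wreath u⁻¹ * X.wreath u = 1 := by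
  rw [← map_mul, inv_mul_cancel, map_one]

lemma wreath_conj_mul_conj (u : WreathProduct G n) (x y : A) :
    X.wreath u * x * X.wreath u⁻¹ * (X.wreath u * y * X.wreath u⁻¹)
      = X.wreath u * (x * y) * X.wreath u⁻¹ := by
  simp only [mul_assoc]
  rw [← mul_assoc (X.wreath u⁻¹), wreath_inv_mul, one_mul]

end BrauerSystem

end BrauerSystem

section Arc

/-- Oriented labelled arcs on `n` nodes. The arc from `i` to `j` with label `g` encodes the diagram
with a left arc joining `i` and `j` labelled `g⁻¹`, the opposite right arc labelled `g`, and
horizontal unlabelled strands elsewhere. -/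
@[ext] structure Arc (n : ℕ) (G : Type) where
  i : Fin n
  j : Fin n
  ne : i ≠ j
  g : G

lemma exists_perm_apply_castLE {m n : ℕ} {p : Fin m → Fin n} (hp : Function.Injective p)
    (h : m ≤ n) : ∃ π : Equiv.Perm (Fin n), ∀ x, π (Fin.castLE h x) = p x := by
  have := Equiv.Perm.isMultiplyPretransitive (Fin n) m
  obtain ⟨π, hπ⟩ := this.exists_smul_eq ⟨_, Fin.castLE_injective h⟩ ⟨p, hp⟩
  exact ⟨π, fun x => by simpa using congrArg (fun f => f x) hπ⟩

variable {G : Type} {n : ℕ}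

namespace Arc

lemma one_lt (α : Arc n G) : 1 < n := by
  have := α.ne
  rw [Ne, Fin.ext_iff] at this
  omega

/-- The arc with the opposite orientation; it encodes the same diagram. -/
def flip (α : Arc n G) : Arc n G := ⟨α.j, α.i, α.ne.symm, α.g⟩

/-- The two arcs have no common node. -/
def Disj (α β : Arc n G) : Prop := α.i ≠ β.i ∧ α.i ≠ β.j ∧ α.j ≠ β.i ∧ α.j ≠ β.j

lemma Disj.symm {α β : Arc n G} (h : α.Disj β) : β.Disj α :=
  ⟨h.1.symm, h.2.2.1.symm, h.2.1.symm, h.2.2.2.symm⟩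

variable [CommGroup G]

/-- The action of the wreath product by conjugation of diagrams. -/
instance : MulAction (WreathProduct G n) (Arc n G) where
  smul u α := ⟨u.right α.i, u.right α.j, u.right.injective.ne α.ne,
    α.g * (u.left (u.right α.i))⁻¹ * (u.left (u.right α.j))⁻¹⟩
  one_smul α := by ext <;> simp [HSMul.hSMul]
  mul_smul u v α := by
    simp only [HSMul.hSMul]
    ext
    · simp
    · simp
    · simp only [SemidirectProduct.mul_left, SemidirectProduct.mul_right, Pi.mul_apply,
        permMulAut_apply, Equiv.Perm.mul_apply, mul_inv,
        show ∀ y, u.right⁻¹ (u.right y) = y from u.right.symm_apply_apply]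
      ac_rfl

lemma smul_i (u : WreathProduct G n) (α : Arc n G) : (u • α).i = u.right α.i := rfl

lemma smul_j (u : WreathProduct G n) (α : Arc n G) : (u • α).j = u.right α.j := rfl

lemma smul_g (u : WreathProduct G n) (α : Arc n G) :
    (u • α).g = α.g * (u.left (u.right α.i))⁻¹ * (u.left (u.right α.j))⁻¹ := rfl

lemma flip_smul (u : WreathProduct G n) (α : Arc n G) : (u • α).flip = u • α.flip := by
  ext
  · rfl
  · rfl
  · simp only [flip, smul_g]
    ac_rfl

variable (G) in
/-- The unlabelled arc joining `l` and `l + 1`. -/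
def base (l : ℕ) (h : l + 1 < n) : Arc n G :=
  ⟨⟨l, by omega⟩, ⟨l + 1, h⟩, by simp, 1⟩

lemma flip_base_zero (h : 1 < n) : (base G 0 h).flip
    = (SemidirectProduct.inr (adjSwap n 0) : WreathProduct G n) • base G 0 h := by
  ext1
  · exact (adjSwap_left h).symm
  · exact (adjSwap_right h).symm
  · simp [flip, smul_g, base]

lemma exists_perm_smul_base (α : Arc n G) : ∃ π : Equiv.Perm (Fin n),
    (⟨Pi.mulSingle α.i α.g⁻¹, π⟩ : WreathProduct G n) • base G 0 α.one_lt = α := by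
  have hp : Function.Injective ![α.i, α.j] := by
    intro x y
    fin_cases x <;> fin_cases y <;> simp [α.ne, α.ne.symm]
  obtain ⟨π, hπ⟩ := exists_perm_apply_castLE hp α.one_lt
  have hi : π ⟨0, by have := α.one_lt; omega⟩ = α.i := hπ 0
  have hj : π ⟨1, α.one_lt⟩ = α.j := hπ 1
  refine ⟨π, ?_⟩
  ext
  · simp [smul_i, base, hi]
  · simp [smul_j, base, hj]
  · simp [smul_g, base, hi, hj, α.ne.symm]

lemma exists_smul_base (α : Arc n G) :
    ∃ u : WreathProduct G n, u • base G 0 α.one_lt = α :=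
  ⟨_, α.exists_perm_smul_base.choose_spec⟩

lemma Disj.exists_smul_base {α β : Arc n G} (h : α.Disj β) : ∃ hn : 3 < n,
    ∃ u : WreathProduct G n, u • base G 0 α.one_lt = α ∧ u • base G 2 hn = β := by
  obtain ⟨h1, h2, h3, h4⟩ := h
  have hp : Function.Injective ![α.i, α.j, β.i, β.j] := by
    intro x y
    fin_cases x <;> fin_cases y <;> simp [*, h1.symm, h2.symm, h3.symm, h4.symm, α.ne, β.ne,
      α.ne.symm, β.ne.symm]
  have hn : 4 ≤ n := by simpa using Fintype.card_le_of_injective _ hp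
  obtain ⟨π, hπ⟩ := exists_perm_apply_castLE hp hn
  have hαi : π ⟨0, by omega⟩ = α.i := hπ 0
  have hαj : π ⟨1, by omega⟩ = α.j := hπ 1
  have hβi : π ⟨2, by omega⟩ = β.i := hπ 2
  have hβj : π ⟨3, by omega⟩ = β.j := hπ 3
  refine ⟨hn, ⟨Pi.mulSingle α.i α.g⁻¹ * Pi.mulSingle β.i β.g⁻¹, π⟩, ?_, ?_⟩
  · ext
    · simp [smul_i, base, hαi]
    · simp [smul_j, base, hαj]
    · simp [smul_g, base, hαi, hαj, α.ne.symm, h1, h3]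
  · ext
    · simp [smul_i, base, hβi]
    · simp [smul_j, base, hβj]
    · simp [smul_g, base, hβi, hβj, β.ne.symm, h1.symm, h2.symm]

lemma exists_smul_base_of_chain {α β : Arc n G} (h : α.j = β.i) (h' : α.i ≠ β.j) :
    ∃ hn : 2 < n, ∃ u : WreathProduct G n,
      u • base G 0 α.one_lt = α ∧ u • base G 1 hn = β := by
  have hβ : α.j ≠ β.j := h ▸ β.ne
  have hp : Function.Injective ![α.i, α.j, β.j] := by
    intro x y
    fin_cases x <;> fin_cases y <;> simp [α.ne, hβ, h', α.ne.symm, hβ.symm, h'.symm]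
  have hn : 3 ≤ n := by simpa using Fintype.card_le_of_injective _ hp
  obtain ⟨π, hπ⟩ := exists_perm_apply_castLE hp hn
  have hαi : π ⟨0, by omega⟩ = α.i := hπ 0
  have hαj : π ⟨1, by omega⟩ = α.j := hπ 1
  have hβj : π ⟨2, by omega⟩ = β.j := hπ 2
  refine ⟨hn, ⟨Pi.mulSingle α.i α.g⁻¹ * Pi.mulSingle β.j β.g⁻¹, π⟩, ?_, ?_⟩
  · ext
    · simp [smul_i, base, hαi]
    · simp [smul_j, base, hαj]
    · simp [smul_g, base, hαi, hαj, α.ne.symm, hβ, h']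
  · ext
    · simp [smul_i, base, hαj, h]
    · simp [smul_j, base, hβj]
    · simp [smul_g, base, hαj, hβj, α.ne.symm, hβ, h'.symm]

end Arc

end Arc

section Hook

namespace BrauerSystem

variable {k : Type} [CommRing k] {G : Type} [CommGroup G] {n : ℕ} {φ : G → k}
  {A : Type} [Ring A] [Algebra k A] (X : BrauerSystem k G n φ A)

lemma commute_perm_e_zero (h : 1 < n) {π : Equiv.Perm (Fin n)}
    (h0 : π ⟨0, by omega⟩ = ⟨0, by omega⟩) (h1 : π ⟨1, h⟩ = ⟨1, h⟩) :
    Commute (X.perm π) (X.e 0) := by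
  have hπ : ∀ v : Fin n, (v : ℕ) < 2 → π v = v := by
    rintro ⟨v, hv⟩ hv2
    obtain rfl | rfl : v = 0 ∨ v = 1 := by simp only at hv2; omega
    exacts [h0, h1]
  replace hπ := mem_closure_adjSwap 2 hπ
  clear h0 h1
  induction hπ using Submonoid.closure_induction with
  | mem x hx =>
    obtain ⟨i, ⟨hi2, hi⟩, rfl⟩ := hx
    rw [X.perm_adjSwap hi]
    exact X.se_comm hi h (by omega)
  | one => rw [map_one]; exact Commute.one_left _
  | mul x y _ _ hx hy => rw [map_mul]; exact hx.mul_left hy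

lemma commute_label_e_zero (h : 1 < n) {f : Fin n → G} (h0 : f ⟨0, by omega⟩ = 1)
    (h1 : f ⟨1, h⟩ = 1) : Commute (X.label f) (X.e 0) := by
  refine (X.commute_label fun j => ?_).symm
  by_cases hj0 : j = ⟨0, by omega⟩
  · rw [hj0, h0, X.t_one]; exact Commute.one_right _
  by_cases hj1 : j = ⟨1, h⟩
  · rw [hj1, h1, X.t_one]; exact Commute.one_right _
  rw [Fin.ext_iff] at hj0 hj1
  exact X.et_comm _ h hj0 hj1

lemma label_mul_e_zero (h : 1 < n) (x : G) :
    X.label (Pi.mulSingle ⟨0, by omega⟩ x * Pi.mulSingle ⟨1, h⟩ x⁻¹) * X.e 0 = X.e 0 := by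
  rw [map_mul, label_mulSingle, label_mulSingle, mul_assoc, ← X.slide_left _ h, ← mul_assoc,
    X.t_mul, mul_inv_cancel, X.t_one, one_mul]

lemma e_zero_mul_label (h : 1 < n) (x : G) :
    X.e 0 * X.label (Pi.mulSingle ⟨0, by omega⟩ x * Pi.mulSingle ⟨1, h⟩ x⁻¹) = X.e 0 := by
  rw [map_mul, label_mulSingle, label_mulSingle, ← mul_assoc, X.slide_right _ h, mul_assoc,
    X.t_mul, mul_inv_cancel, X.t_one, mul_one]

lemma commute_wreath_e_zero (h : 1 < n) {u : WreathProduct G n}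
    (hu : u • Arc.base G 0 h = Arc.base G 0 h) : Commute (X.wreath u) (X.e 0) := by
  have h0 : u.right ⟨0, by omega⟩ = ⟨0, by omega⟩ := congrArg Arc.i hu
  have h1 : u.right ⟨1, h⟩ = ⟨1, h⟩ := congrArg Arc.j hu
  have hg : u.left ⟨1, h⟩ = (u.left ⟨0, by omega⟩)⁻¹ := by
    have hprod : (u.left ⟨0, by omega⟩)⁻¹ * (u.left ⟨1, h⟩)⁻¹ = 1 := by
      simpa [Arc.smul_g, Arc.base, h0, h1] using congrArg Arc.g hu
    exact (inv_inj.mp (mul_eq_one_iff_inv_eq.mp hprod)).symm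
  set c : Fin n → G := Pi.mulSingle ⟨0, by omega⟩ (u.left ⟨0, by omega⟩) *
    Pi.mulSingle ⟨1, h⟩ (u.left ⟨0, by omega⟩)⁻¹ with hc
  have hcomm : Commute (X.label c) (X.e 0) :=
    (X.label_mul_e_zero h _).trans (X.e_zero_mul_label h _).symm
  have hrest : Commute (X.label (c⁻¹ * u.left)) (X.e 0) :=
    X.commute_label_e_zero h (by simp [hc]) (by simp [hc, hg])
  rw [wreath_apply, ← mul_inv_cancel_left c u.left, map_mul]
  exact (hcomm.mul_left hrest).mul_left (X.commute_perm_e_zero h h0 h1)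

/-- The diagram of an arc, obtained from `e 0` by conjugation. -/
def hook (α : Arc n G) : A :=
  X.wreath α.exists_smul_base.choose * X.e 0 * X.wreath α.exists_smul_base.choose⁻¹

lemma hook_smul_base (h : 1 < n) (u : WreathProduct G n) :
    X.hook (u • Arc.base G 0 h) = X.wreath u * X.e 0 * X.wreath u⁻¹ := by
  set v := (u • Arc.base G 0 h).exists_smul_base.choose
  have hvu : v • Arc.base G 0 h = u • Arc.base G 0 h :=
    (u • Arc.base G 0 h).exists_smul_base.choose_spec
  have hcomm : X.wreath (u⁻¹ * v) * X.e 0 = X.e 0 * X.wreath (u⁻¹ * v) :=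
    X.commute_wreath_e_zero h (by rw [mul_smul, hvu, inv_smul_smul])
  calc X.wreath v * X.e 0 * X.wreath v⁻¹
      = X.wreath u * (X.wreath (u⁻¹ * v) * X.e 0) * X.wreath v⁻¹ := by
        rw [← mul_assoc, ← map_mul, mul_inv_cancel_left]
    _ = X.wreath u * X.e 0 * X.wreath u⁻¹ := by
        rw [hcomm, map_mul]
        simp only [mul_assoc, wreath_mul_inv, mul_one]

lemma hook_smul (u : WreathProduct G n) (α : Arc n G) :
    X.hook (u • α) = X.wreath u * X.hook α * X.wreath u⁻¹ := by
  obtain ⟨v, hv⟩ := α.exists_smul_base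
  rw [← hv, ← mul_smul, hook_smul_base, hook_smul_base, mul_inv_rev, map_mul, map_mul]
  simp only [mul_assoc]

lemma hook_mul_wreath (α : Arc n G) (u : WreathProduct G n) :
    X.hook α * X.wreath u = X.wreath u * X.hook (u⁻¹ • α) := by
  rw [hook_smul, inv_inv, ← mul_assoc, ← mul_assoc, wreath_mul_inv, one_mul]

lemma hook_base {l : ℕ} (h : l + 1 < n) : X.hook (Arc.base G l h) = X.e l := by
  induction l with
  | zero => simpa using X.hook_smul_base h 1
  | succ l ih =>
    set u : WreathProduct G n := SemidirectProduct.inr (adjSwap n l * adjSwap n (l + 1)) with hu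
    have hbase : u • Arc.base G l (by omega) = Arc.base G (l + 1) h := by
      ext1
      · change adjSwap n l (adjSwap n (l + 1) _) = _
        rw [adjSwap_of_ne (i := l + 1) (by simp [Arc.base]) (by simp [Arc.base]; omega)]
        exact adjSwap_left (by omega)
      · change adjSwap n l (adjSwap n (l + 1) ⟨l + 1, _⟩) = _
        rw [adjSwap_left h, adjSwap_of_ne (by simp; omega) (by simp)]
        rfl
      · simp [Arc.smul_g, hu, Arc.base]
    have hw : X.wreath u = X.s l * X.s (l + 1) := by
      rw [hu, wreath_inr, map_mul, X.perm_adjSwap (by omega), X.perm_adjSwap h]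
    rw [← hbase, hook_smul, ih (by omega), hw, X.sse (by omega) h (by omega),
      ← X.ess h (by omega) (by omega), mul_assoc (X.e (l + 1)), ← hw, mul_assoc, wreath_mul_inv,
      mul_one]

lemma hook_flip (α : Arc n G) : X.hook α.flip = X.hook α := by
  obtain ⟨u, hu⟩ := α.exists_smul_base
  have h : 0 + 1 < n := α.one_lt
  have hinv : (SemidirectProduct.inr (adjSwap n 0) : WreathProduct G n)⁻¹
      = SemidirectProduct.inr (adjSwap n 0) := by
    rw [← map_inv, inv_eq_of_mul_eq_one_right (adjSwap_mul_self 0)]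
  rw [← hu, Arc.flip_smul, hook_smul, hook_smul, Arc.flip_base_zero, hook_smul, hinv,
    X.wreath_inr_adjSwap h, X.hook_base h, X.s_mul_e h, X.e_mul_s h]

lemma commute_hook {α β : Arc n G} (h : α.Disj β) : Commute (X.hook α) (X.hook β) := by
  obtain ⟨hn, u, hα, hβ⟩ := h.exists_smul_base
  rw [← hα, ← hβ, hook_smul, hook_smul, Commute, SemiconjBy, wreath_conj_mul_conj,
    wreath_conj_mul_conj, X.hook_base α.one_lt, X.hook_base hn, X.ee_comm (by omega) hn]

lemma hook_mul_hook_self (α : Arc n G) : X.hook α * X.hook α = φ 1 • X.hook α := by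
  obtain ⟨u, hu⟩ := α.exists_smul_base
  have hloop := X.loop 1 (i := 0) α.one_lt
  rw [X.t_one, mul_one] at hloop
  rw [← hu, hook_smul, wreath_conj_mul_conj, X.hook_base α.one_lt, hloop, mul_smul_comm,
    smul_mul_assoc]

lemma exists_swap_mul_hook (α : Arc n G) :
    ∃ v : WreathProduct G n, v.right = Equiv.swap α.i α.j ∧ X.wreath v * X.hook α = X.hook α := by
  obtain ⟨u, hu⟩ := α.exists_smul_base
  have h : 0 + 1 < n := α.one_lt
  refine ⟨u * SemidirectProduct.inr (adjSwap n 0) * u⁻¹, ?_, ?_⟩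
  · rw [← hu, Arc.smul_i, Arc.smul_j, Equiv.swap_apply_apply]
    simp [Arc.base, adjSwap, h]
  · rw [← hu, hook_smul, map_mul, map_mul, wreath_conj_mul_conj, X.wreath_inr_adjSwap h,
      X.hook_base h, X.s_mul_e h]

lemma label_mul_hook (α : Arc n G) (x : G) :
    X.label (Pi.mulSingle α.i x * Pi.mulSingle α.j x⁻¹) * X.hook α = X.hook α := by
  obtain ⟨u, hu⟩ := α.exists_smul_base
  have h : 0 + 1 < n := α.one_lt
  set f : Fin n → G := Pi.mulSingle ⟨0, by omega⟩ x * Pi.mulSingle ⟨1, h⟩ x⁻¹ with hf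
  have hconj : (SemidirectProduct.inl (Pi.mulSingle α.i x * Pi.mulSingle α.j x⁻¹) :
      WreathProduct G n) = u * SemidirectProduct.inl f * u⁻¹ := by
    rw [eq_mul_inv_iff_mul_eq, ← hu, hf]
    ext l
    · simp only [SemidirectProduct.mul_left, SemidirectProduct.left_inl,
        SemidirectProduct.right_inl, Pi.mul_apply, permMulAut_apply, map_one, MulAut.one_apply,
        Pi.mulSingle_apply, Arc.smul_i, Arc.smul_j, Arc.base, Equiv.Perm.inv_eq_iff_eq]
      rw [mul_comm]
    · simp
  rw [← wreath_inl, hconj, ← hu, hook_smul, map_mul, map_mul, wreath_conj_mul_conj,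
    wreath_inl, X.hook_base h, X.label_mul_e_zero h]

lemma exists_hook_mul_hook_of_chain {α β : Arc n G} (h : α.j = β.i) (h' : α.i ≠ β.j) :
    ∃ v : WreathProduct G n, X.hook β * X.hook α = X.wreath v * X.hook α := by
  obtain ⟨hn, u, hα, hβ⟩ := Arc.exists_smul_base_of_chain h h'
  refine ⟨u * SemidirectProduct.inr (adjSwap n 0 * adjSwap n 1) * u⁻¹, ?_⟩
  rw [← hα, ← hβ, hook_smul, hook_smul, map_mul, map_mul, wreath_conj_mul_conj,
    wreath_conj_mul_conj, X.hook_base α.one_lt, X.hook_base hn, wreath_inr, map_mul,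
    X.perm_adjSwap α.one_lt, X.perm_adjSwap hn, X.sse α.one_lt hn (by omega)]

lemma exists_hook_mul_hook_of_same {α β : Arc n G} (h : α.i = β.i) (h' : α.j = β.j) :
    ∃ (c : k) (v : WreathProduct G n), X.hook β * X.hook α = c • (X.wreath v * X.hook α) := by
  obtain ⟨u, hu⟩ := α.exists_smul_base
  obtain ⟨γ, rfl⟩ : ∃ γ, β = u • γ := ⟨u⁻¹ • β, by simp⟩
  have hn : 0 + 1 < n := α.one_lt
  rw [← hu] at h h' ⊢
  have hi : ⟨0, by omega⟩ = γ.i := u.right.injective h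
  have hj : ⟨1, hn⟩ = γ.j := u.right.injective h'
  have hγ : γ = (SemidirectProduct.inl (Pi.mulSingle ⟨0, by omega⟩ γ.g⁻¹) : WreathProduct G n) •
      Arc.base G 0 hn := by
    ext1
    · simp [Arc.smul_i, Arc.base, ← hi]
    · simp [Arc.smul_j, Arc.base, ← hj]
    · simp [Arc.smul_g, Arc.base]
  have hmul : X.hook γ * X.e 0 = φ γ.g • (X.t γ.g⁻¹ ⟨0, by omega⟩ * X.e 0) := by
    rw [hγ, hook_smul, X.hook_base hn, ← map_inv, ← Pi.mulSingle_inv, inv_inv, wreath_inl,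
      wreath_inl, label_mulSingle, label_mulSingle, ← hγ, mul_assoc, mul_assoc, ← mul_assoc (X.e 0),
      X.loop _ hn, mul_smul_comm]
  refine ⟨φ γ.g, u * SemidirectProduct.inl (Pi.mulSingle ⟨0, by omega⟩ γ.g⁻¹) * u⁻¹, ?_⟩
  rw [hook_smul, hook_smul, map_mul, map_mul, wreath_conj_mul_conj, wreath_conj_mul_conj,
    X.hook_base hn, hmul, wreath_inl, label_mulSingle, mul_smul_comm, smul_mul_assoc]

lemma exists_hook_mul_hook {α β : Arc n G} (h : ¬ α.Disj β) :
    ∃ (c : k) (v : WreathProduct G n), X.hook β * X.hook α = c • (X.wreath v * X.hook α) := by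
  have chain : ∀ {α β : Arc n G}, α.j = β.i → α.i ≠ β.j →
      ∃ (c : k) (v : WreathProduct G n), X.hook β * X.hook α = c • (X.wreath v * X.hook α) := by
    intro α β h h'
    obtain ⟨v, hv⟩ := X.exists_hook_mul_hook_of_chain h h'
    exact ⟨1, v, by rw [hv, one_smul]⟩
  by_cases hii : α.i = β.i
  · by_cases hjj : α.j = β.j
    · exact X.exists_hook_mul_hook_of_same hii hjj
    · simpa only [hook_flip] using chain (α := α.flip) hii hjj
  by_cases hjj : α.j = β.j
  · simpa only [hook_flip] using chain (β := β.flip) hjj hii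
  by_cases hij : α.i = β.j
  · by_cases hji : α.j = β.i
    · simpa only [hook_flip] using X.exists_hook_mul_hook_of_same (β := β.flip) hij hji
    · simpa only [hook_flip] using chain (α := α.flip) (β := β.flip) hij hji
  by_cases hji : α.j = β.i
  · exact chain hji hij
  · exact absurd ⟨hii, hij, hji, hjj⟩ h

lemma swap_add_two_eq {i : ℕ} (h : i + 2 < n) :
    Equiv.swap (⟨i, by omega⟩ : Fin n) ⟨i + 2, h⟩
      = adjSwap n i * adjSwap n (i + 1) * adjSwap n i := by
  rw [adjSwap, adjSwap, dif_pos (by omega), dif_pos h, Equiv.swap_comm (⟨i, _⟩ : Fin n) ⟨i + 1, _⟩,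
    Equiv.swap_comm (⟨i + 1, _⟩ : Fin n) ⟨i + 1 + 1, _⟩,
    Equiv.swap_mul_swap_mul_swap (by simp) (by simp; omega)]

lemma perm_swap_mul_e_mul_e (h : 3 < n) :
    X.perm (Equiv.swap ⟨0, by omega⟩ ⟨2, by omega⟩ * Equiv.swap ⟨1, by omega⟩ ⟨3, h⟩)
      * (X.e 0 * X.e 2) = X.e 0 * X.e 2 := by
  have h02 : X.perm (Equiv.swap ⟨0, by omega⟩ ⟨2, by omega⟩) = X.s 0 * X.s 1 * X.s 0 := by
    rw [swap_add_two_eq (by omega), map_mul, map_mul, X.perm_adjSwap (by omega),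
      X.perm_adjSwap (by omega)]
  have h13 : X.perm (Equiv.swap ⟨1, by omega⟩ ⟨3, h⟩) = X.s 2 * X.s 1 * X.s 2 := by
    rw [swap_add_two_eq (by omega), map_mul, map_mul, X.perm_adjSwap (by omega),
      X.perm_adjSwap (by omega)]
    exact X.isTypeA.braid (by omega)
  have hleft : X.s 0 * X.s 1 * X.s 0 * (X.e 0 * X.e 2) = X.e 1 * (X.e 0 * X.e 2) := by
    rw [mul_assoc, ← mul_assoc (X.s 0) (X.e 0), X.s_mul_e (by omega), ← mul_assoc,
      X.sse (by omega) (by omega) (by omega), mul_assoc]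
  have hright : X.s 2 * X.s 1 * X.s 2 * (X.e 0 * X.e 2) = X.e 1 * (X.e 0 * X.e 2) := by
    rw [X.ee_comm (by omega) (by omega), mul_assoc, ← mul_assoc (X.s 2) (X.e 2),
      X.s_mul_e (by omega), ← mul_assoc, X.sse (by omega) (by omega) (by omega), mul_assoc]
  rw [map_mul, mul_assoc, h13, hright, ← hleft, ← h02, ← mul_assoc, ← map_mul,
    Equiv.swap_mul_self, map_one, one_mul]

lemma exists_swap_mul_hook_mul_hook {α β : Arc n G} (h : α.Disj β) :
    ∃ v : WreathProduct G n, v.right = Equiv.swap α.i β.i * Equiv.swap α.j β.j ∧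
      X.wreath v * (X.hook α * X.hook β) = X.hook α * X.hook β := by
  obtain ⟨hn, u, hα, hβ⟩ := h.exists_smul_base
  refine ⟨u * SemidirectProduct.inr (Equiv.swap ⟨0, by omega⟩ ⟨2, by omega⟩ *
    Equiv.swap ⟨1, by omega⟩ ⟨3, hn⟩) * u⁻¹, ?_, ?_⟩
  · rw [← hα, ← hβ]
    simp only [Arc.smul_i, Arc.smul_j, Equiv.swap_apply_apply, SemidirectProduct.mul_right,
      SemidirectProduct.right_inr, SemidirectProduct.inv_right, Arc.base]
    group
  · rw [← hα, ← hβ, hook_smul, hook_smul, wreath_conj_mul_conj, map_mul, map_mul,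
      wreath_conj_mul_conj, X.hook_base α.one_lt, X.hook_base hn, wreath_inr,
      X.perm_swap_mul_e_mul_e hn]

end BrauerSystem

end Hook

section HookProd

namespace BrauerSystem

variable {k : Type} [CommRing k] {G : Type} [CommGroup G] {n : ℕ} {φ : G → k}
  {A : Type} [Ring A] [Algebra k A] (X : BrauerSystem k G n φ A)

/-- The diagram whose non-horizontal edges are given by the arcs in `L`, for pairwise disjoint
arcs. -/
def hookProd (L : List (Arc n G)) : A := (L.map X.hook).prod

lemma hookProd_nil : X.hookProd [] = 1 := rfl

lemma hookProd_cons (α : Arc n G) (L : List (Arc n G)) :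
    X.hookProd (α :: L) = X.hook α * X.hookProd L := List.prod_cons

lemma hookProd_eq_of_perm {L M : List (Arc n G)} (h : L.Perm M) (hL : L.Pairwise Arc.Disj) :
    X.hookProd L = X.hookProd M :=
  (h.map X.hook).prod_eq' (List.pairwise_map.mpr (hL.imp X.commute_hook))

lemma exists_hookProd_eq_hook_mul {L : List (Arc n G)} (hL : L.Pairwise Arc.Disj) {α : Arc n G}
    (hα : α ∈ L) : ∃ M : List (Arc n G), L.Perm (α :: M) ∧
      X.hookProd L = X.hook α * X.hookProd M := by
  classical
  have hperm := List.perm_cons_erase hα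
  exact ⟨L.erase α, hperm, by rw [X.hookProd_eq_of_perm hperm hL, hookProd_cons]⟩

lemma commute_hook_hookProd {α : Arc n G} {L : List (Arc n G)} (h : ∀ β ∈ L, α.Disj β) :
    Commute (X.hook α) (X.hookProd L) :=
  Commute.list_prod_right _ _ fun _ hx => by
    obtain ⟨β, hβ, rfl⟩ := List.mem_map.mp hx
    exact X.commute_hook (h β hβ)

lemma hookProd_mul_hook {L : List (Arc n G)} (hL : L.Pairwise Arc.Disj) {α : Arc n G}
    (hα : α ∈ L) : X.hookProd L * X.hook α = φ 1 • X.hookProd L := by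
  obtain ⟨M, hperm, hM⟩ := X.exists_hookProd_eq_hook_mul hL hα
  have hdisj : ∀ β ∈ M, α.Disj β :=
    (List.pairwise_cons.mp ((hperm.pairwise_iff Arc.Disj.symm).mp hL)).1
  rw [hM, mul_assoc, ← X.commute_hook_hookProd hdisj, ← mul_assoc, hook_mul_hook_self,
    smul_mul_assoc]

lemma exists_hook_mul_hookProd {L : List (Arc n G)} (hL : L.Pairwise Arc.Disj) (β : Arc n G) :
    ∃ (c : k) (v : WreathProduct G n) (M : List (Arc n G)), M.Pairwise Arc.Disj ∧ L ⊆ M ∧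
      X.hook β * X.hookProd L = c • (X.wreath v * X.hookProd M) := by
  by_cases h : ∀ α ∈ L, β.Disj α
  · exact ⟨1, 1, β :: L, List.pairwise_cons.mpr ⟨h, hL⟩, List.subset_cons_self _ _,
      by rw [map_one, one_mul, one_smul, hookProd_cons]⟩
  · push Not at h
    obtain ⟨α, hα, hαβ⟩ := h
    obtain ⟨c, v, hc⟩ := X.exists_hook_mul_hook fun h => hαβ (Arc.Disj.symm h)
    obtain ⟨M, -, hM⟩ := X.exists_hookProd_eq_hook_mul hL hα
    exact ⟨c, v, L, hL, List.Subset.refl L, by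
      rw [hM, ← mul_assoc, hc, smul_mul_assoc, mul_assoc]⟩

/-- The diagrams, as elements of `A`, which contain the arcs in `B`. -/
def diagrams (B : List (Arc n G)) : Set A :=
  {x | ∃ (u : WreathProduct G n) (L : List (Arc n G)),
    L.Pairwise Arc.Disj ∧ B ⊆ L ∧ x = X.wreath u * X.hookProd L}

lemma mul_mem_span_of_forall {S : Set A} {a : A} (h : ∀ x ∈ S, a * x ∈ Submodule.span k S)
    {x : A} (hx : x ∈ Submodule.span k S) : a * x ∈ Submodule.span k S :=
  have hle : Submodule.span k S ≤ (Submodule.span k S).comap (LinearMap.mulLeft k a) :=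
    Submodule.span_le.mpr h
  hle hx

lemma wreath_mul_mem_span (B : List (Arc n G)) (u : WreathProduct G n) {x : A}
    (hx : x ∈ Submodule.span k (X.diagrams B)) :
    X.wreath u * x ∈ Submodule.span k (X.diagrams B) := by
  refine mul_mem_span_of_forall ?_ hx
  rintro _ ⟨v, L, hL, hB, rfl⟩
  exact Submodule.subset_span ⟨u * v, L, hL, hB, by rw [map_mul, mul_assoc]⟩

lemma hook_mul_mem_span (B : List (Arc n G)) (α : Arc n G) {x : A}
    (hx : x ∈ Submodule.span k (X.diagrams B)) :
    X.hook α * x ∈ Submodule.span k (X.diagrams B) := by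
  refine mul_mem_span_of_forall ?_ hx
  rintro _ ⟨v, L, hL, hB, rfl⟩
  obtain ⟨c, v', M, hM, hLM, hmul⟩ := X.exists_hook_mul_hookProd hL (v⁻¹ • α)
  rw [← mul_assoc, hook_mul_wreath, mul_assoc, hmul]
  exact X.wreath_mul_mem_span B v <| Submodule.smul_mem _ c <|
    Submodule.subset_span ⟨v', M, hM, List.Subset.trans hB hLM, rfl⟩

lemma mul_mem_span_diagrams (B : List (Arc n G)) (a : A) {x : A}
    (hx : x ∈ Submodule.span k (X.diagrams B)) : a * x ∈ Submodule.span k (X.diagrams B) := by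
  induction X.adjoin_eq_top.ge (Algebra.mem_top : a ∈ ⊤) using Algebra.adjoin_induction
    generalizing x with
  | mem y hy =>
    rcases hy with ⟨i, hi, rfl | rfl⟩ | ⟨g, j, rfl⟩
    · rw [← X.wreath_inr_adjSwap hi]
      exact X.wreath_mul_mem_span B _ hx
    · rw [← X.hook_base hi]
      exact X.hook_mul_mem_span B _ hx
    · rw [← label_mulSingle, ← wreath_inl]
      exact X.wreath_mul_mem_span B _ hx
  | algebraMap r => rw [← Algebra.smul_def]; exact Submodule.smul_mem _ _ hx
  | add y z _ _ hy hz => rw [add_mul]; exact add_mem (hy hx) (hz hx)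
  | mul y z _ _ hy hz => rw [mul_assoc]; exact hy (hz hx)

lemma span_diagrams_nil : Submodule.span k (X.diagrams []) = ⊤ := by
  refine eq_top_iff.mpr fun x _ => ?_
  rw [← mul_one x]
  exact X.mul_mem_span_diagrams _ _ <| Submodule.subset_span
    ⟨1, [], List.Pairwise.nil, List.Subset.refl _, by rw [map_one, hookProd_nil, mul_one]⟩

lemma mul_hook_mem_span (x : A) (β : Arc n G) :
    x * X.hook β ∈ Submodule.span k (X.diagrams [β]) :=
  X.mul_mem_span_diagrams _ _ <| Submodule.subset_span
    ⟨1, [β], List.pairwise_singleton _ _, List.Subset.refl _,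
      by rw [map_one, one_mul, hookProd_cons, hookProd_nil, mul_one]⟩

end BrauerSystem

end HookProd

/-! ### Labelled matchings -/

section LabelledMatching

/-- Fixed-point free involutions `τ` of `V` whose orbits carry labels `l` in `G`, that is, perfect
matchings on `V` with labelled edges. -/
@[ext] structure LabelledMatching (V G : Type) where
  τ : V → V
  l : V → G
  τ_τ : ∀ x, τ (τ x) = x
  τ_ne : ∀ x, τ x ≠ x
  l_τ : ∀ x, l (τ x) = l x

namespace LabelledMatching

variable {V G : Type}

/-- The matching transported along a permutation of the nodes. -/
def relabel (σ : Equiv.Perm V) (d : LabelledMatching V G) : LabelledMatching V G where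
  τ x := σ (d.τ (σ.symm x))
  l x := d.l (σ.symm x)
  τ_τ x := by simp [d.τ_τ]
  τ_ne x h := d.τ_ne (σ.symm x) (by rw [Equiv.eq_symm_apply]; exact h)
  l_τ x := by simp [d.l_τ]

lemma relabel_one (d : LabelledMatching V G) : d.relabel 1 = d := rfl

lemma relabel_mul (σ σ' : Equiv.Perm V) (d : LabelledMatching V G) :
    d.relabel (σ * σ') = (d.relabel σ').relabel σ := rfl

section Twist

variable [CommGroup G]

/-- The matching obtained by composing each edge at `x` with a strand labelled `f x`. -/
def twist (f : V → G) (d : LabelledMatching V G) : LabelledMatching V G where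
  τ := d.τ
  l x := f x * f (d.τ x) * d.l x
  τ_τ := d.τ_τ
  τ_ne := d.τ_ne
  l_τ x := by rw [d.τ_τ, d.l_τ, mul_comm (f x)]

lemma twist_one (d : LabelledMatching V G) : d.twist 1 = d := by
  ext <;> simp [twist]

lemma twist_mul (f f' : V → G) (d : LabelledMatching V G) :
    d.twist (f * f') = (d.twist f').twist f := by
  ext x
  · rfl
  · simp only [twist, Pi.mul_apply]
    ac_rfl

lemma relabel_twist (σ : Equiv.Perm V) (f : V → G) (d : LabelledMatching V G) :
    (d.twist f).relabel σ = (d.relabel σ).twist (f ∘ σ.symm) := by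
  ext x
  · rfl
  · simp [twist, relabel]

end Twist

variable [DecidableEq V] {k : Type} [CommRing k] (φ : G → k)

/-- The scalar arising from `attach`: a loop is closed if `a` and `b` are already joined. -/
def loopFactor (a b : V) (d : LabelledMatching V G) : k := if d.τ a = b then φ (d.l a) else 1

lemma loopFactor_relabel (σ : Equiv.Perm V) (a b : V) (d : LabelledMatching V G) :
    loopFactor φ (σ a) (σ b) (d.relabel σ) = loopFactor φ a b d := by
  simp [loopFactor, relabel]

lemma loopFactor_symm (a b : V) (d : LabelledMatching V G) :
    loopFactor φ a b d = loopFactor φ b a d := by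
  have := d.τ_τ
  have := d.l_τ
  simp only [loopFactor]; grind

variable [CommGroup G]

/-- The effect on a matching of composing with the diagram that has one cup and one cap joining
`a` and `b`: the edges at `a` and `b` are merged into one, and `a` gets joined to `b`. -/
def attach {a b : V} (hab : a ≠ b) (d : LabelledMatching V G) : LabelledMatching V G where
  τ x := if x = a then b else if x = b then a else if x = d.τ a then d.τ b else
    if x = d.τ b then d.τ a else d.τ x
  l x := if x = a then 1 else if x = b then 1 else if x = d.τ a then d.l a * d.l b else
    if x = d.τ b then d.l a * d.l b else d.l x
  τ_τ x := by have := d.τ_τ; have := d.τ_ne; grind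
  τ_ne x := by have := d.τ_τ; have := d.τ_ne; grind
  l_τ x := by have := d.τ_τ; have := d.τ_ne; have := d.l_τ; grind

lemma relabel_attach (σ : Equiv.Perm V) {a b : V} (h : a ≠ b) (d : LabelledMatching V G) :
    (d.attach h).relabel σ = (d.relabel σ).attach (σ.injective.ne h) := by
  have hσ (x y) : x = σ y ↔ σ.symm x = y := by rw [Equiv.symm_apply_eq]
  ext x
  · simp only [attach, relabel, Equiv.symm_apply_apply, hσ]
    split_ifs <;> simp
  · simp only [attach, relabel, Equiv.symm_apply_apply, hσ]

lemma attach_symm {a b : V} (h : a ≠ b) (d : LabelledMatching V G) :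
    d.attach h = d.attach h.symm := by
  have := d.τ_τ
  ext x
  · simp only [attach]; grind
  · simp only [attach, mul_comm]; grind

lemma relabel_swap_attach {a b : V} (h : a ≠ b) (d : LabelledMatching V G) :
    (d.attach h).relabel (Equiv.swap a b) = d.attach h := by
  have := d.τ_τ
  have := d.τ_ne
  ext x
  · simp only [attach, relabel, Equiv.symm_swap, Equiv.swap_apply_def]; grind
  · simp only [attach, relabel, Equiv.symm_swap, Equiv.swap_apply_def]; grind

lemma attach_of_τ_eq {a b c : V} (h : b ≠ c) (hac : a ≠ c) {d : LabelledMatching V G}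
    (hd : d.τ a = b) (hl : d.l b = 1) : d.attach h = d.relabel (Equiv.swap a c) := by
  have hτ := d.τ_τ
  have := d.τ_ne
  have hdb : d.τ b = a := by rw [← hd, hτ]
  have := d.l_τ
  ext x
  · simp only [attach, relabel, Equiv.symm_swap, Equiv.swap_apply_def]; grind
  · simp only [attach, relabel, Equiv.symm_swap, Equiv.swap_apply_def, hl, one_mul]; grind

lemma attach_attach {a b c : V} (h : a ≠ b) (h' : b ≠ c) (hac : a ≠ c)
    (d : LabelledMatching V G) :
    (d.attach h).attach h' = (d.attach h).relabel (Equiv.swap a c) :=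
  attach_of_τ_eq h' hac (by simp [attach]) (by simp [attach])

lemma loopFactor_attach {a b c : V} (h : a ≠ b) (hac : a ≠ c) (d : LabelledMatching V G) :
    loopFactor φ b c (d.attach h) = 1 := by
  simp [loopFactor, attach, h.symm, hac]

lemma attach_comm {a b c e : V} (h : a ≠ b) (h' : c ≠ e) (hac : a ≠ c) (hae : a ≠ e) (hbc : b ≠ c)
    (hbe : b ≠ e) (d : LabelledMatching V G) :
    (d.attach h').attach h = (d.attach h).attach h' := by
  have := d.τ_τ
  have := d.τ_ne
  have := d.l_τ
  ext x
  · simp only [attach]; grind (splits := 40)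
  · simp only [attach]; grind (splits := 40)

lemma loopFactor_attach_mul {a b c e : V} (h : a ≠ b) (h' : c ≠ e) (hac : a ≠ c) (hae : a ≠ e)
    (hbc : b ≠ c) (hbe : b ≠ e) (d : LabelledMatching V G) :
    loopFactor φ a b (d.attach h') * loopFactor φ c e d
      = loopFactor φ c e (d.attach h) * loopFactor φ a b d := by
  have := d.τ_τ
  have := d.τ_ne
  have := d.l_τ
  simp only [attach, loopFactor]; grind

lemma attach_twist_of_ne {a b c : V} (h : a ≠ b) (hca : c ≠ a) (hcb : c ≠ b) (g : G)
    (d : LabelledMatching V G) :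
    (d.twist (Pi.mulSingle c g)).attach h = (d.attach h).twist (Pi.mulSingle c g) := by
  have := d.τ_τ
  have := d.τ_ne
  have := d.l_τ
  ext x
  · rfl
  · simp only [attach, twist, Pi.mulSingle_apply]; grind

lemma loopFactor_twist_of_ne {a b c : V} (hca : c ≠ a) (hcb : c ≠ b) (g : G)
    (d : LabelledMatching V G) :
    loopFactor φ a b (d.twist (Pi.mulSingle c g)) = loopFactor φ a b d := by
  simp only [loopFactor, twist, Pi.mulSingle_apply]
  split_ifs <;> simp_all

lemma twist_attach_slide {a b : V} (h : a ≠ b) (g : G) (d : LabelledMatching V G) :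
    (d.attach h).twist (Pi.mulSingle a g) = (d.attach h).twist (Pi.mulSingle b g) := by
  have := d.τ_τ
  have := d.τ_ne
  have := d.l_τ
  ext x
  · rfl
  · simp only [attach, twist, Pi.mulSingle_apply]; grind

lemma attach_twist_slide {a b : V} (h : a ≠ b) (g : G) (d : LabelledMatching V G) :
    (d.twist (Pi.mulSingle a g)).attach h = (d.twist (Pi.mulSingle b g)).attach h := by
  have := d.τ_τ
  have := d.τ_ne
  have := d.l_τ
  ext x
  · rfl
  · simp only [attach, twist, Pi.mulSingle_apply]; grind

lemma loopFactor_twist_slide {a b : V} (h : a ≠ b) (g : G) (d : LabelledMatching V G) :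
    loopFactor φ a b (d.twist (Pi.mulSingle a g))
      = loopFactor φ a b (d.twist (Pi.mulSingle b g)) := by
  have := d.τ_ne
  simp only [loopFactor, twist, Pi.mulSingle_apply]; grind

lemma attach_twist_attach {a b : V} (h : a ≠ b) (g : G) (d : LabelledMatching V G) :
    ((d.attach h).twist (Pi.mulSingle a g)).attach h = d.attach h := by
  have := d.τ_τ
  have := d.τ_ne
  have := d.l_τ
  ext x
  · simp only [attach, twist]; grind
  · simp only [attach, twist, Pi.mulSingle_apply]; grind

lemma loopFactor_twist_attach {a b : V} (h : a ≠ b) (g : G) (d : LabelledMatching V G) :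
    loopFactor φ a b ((d.attach h).twist (Pi.mulSingle a g)) = φ g := by
  simp [loopFactor, twist, attach, h.symm]

end LabelledMatching

end LabelledMatching

section Operators

namespace LabelledMatching

/-- The linear extension of `relabel`. -/
def relabelOp (k V G : Type) [CommRing k] :
    Equiv.Perm V →* Module.End k (LabelledMatching V G →₀ k) where
  toFun σ := Finsupp.lmapDomain k k (relabel σ)
  map_one' := Finsupp.lhom_ext fun d r => by simp [relabel_one]
  map_mul' σ σ' := Finsupp.lhom_ext fun d r => by simp [relabel_mul]

/-- The linear extension of `twist`. -/
def twistOp (k V G : Type) [CommRing k] [CommGroup G] :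
    (V → G) →* Module.End k (LabelledMatching V G →₀ k) where
  toFun f := Finsupp.lmapDomain k k (twist f)
  map_one' := Finsupp.lhom_ext fun d r => by simp [twist_one]
  map_mul' f f' := Finsupp.lhom_ext fun d r => by simp [twist_mul]

variable {V G k : Type} [CommRing k]

@[simp] lemma relabelOp_single (σ : Equiv.Perm V) (d : LabelledMatching V G) (r : k) :
    relabelOp k V G σ (Finsupp.single d r) = Finsupp.single (relabel σ d) r :=
  Finsupp.mapDomain_single

lemma swap_mul_swap_mul [DecidableEq V] (a b : V)
    (x : Module.End k (LabelledMatching V G →₀ k)) :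
    relabelOp k V G (Equiv.swap a b) * (relabelOp k V G (Equiv.swap a b) * x) = x := by
  rw [← mul_assoc, ← map_mul, Equiv.swap_mul_self, map_one, one_mul]

variable [CommGroup G]

@[simp] lemma twistOp_single (f : V → G) (d : LabelledMatching V G) (r : k) :
    twistOp k V G f (Finsupp.single d r) = Finsupp.single (twist f d) r :=
  Finsupp.mapDomain_single

lemma relabelOp_mul_twistOp (σ : Equiv.Perm V) (f : V → G) :
    relabelOp k V G σ * twistOp k V G f = twistOp k V G (f ∘ σ.symm) * relabelOp k V G σ :=
  Finsupp.lhom_ext fun d r => by simp [relabel_twist]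

variable [DecidableEq V] (φ : G → k)

/-- The action on matchings of the diagram with one cup and one cap joining `a` and `b`. -/
def hookOp {a b : V} (h : a ≠ b) : Module.End k (LabelledMatching V G →₀ k) :=
  Finsupp.linearCombination k fun d => Finsupp.single (attach h d) (loopFactor φ a b d)

@[simp] lemma hookOp_single {a b : V} (h : a ≠ b) (d : LabelledMatching V G) (r : k) :
    hookOp φ h (Finsupp.single d r) = Finsupp.single (attach h d) (r * loopFactor φ a b d) := by
  simp [hookOp, Finsupp.linearCombination_single]

lemma relabelOp_mul_hookOp {σ : Equiv.Perm V} {a b c d : V} (hac : σ a = c) (hbd : σ b = d)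
    (h : a ≠ b) (h' : c ≠ d) :
    relabelOp k V G σ * hookOp φ h = hookOp φ h' * relabelOp k V G σ := by
  subst hac hbd
  exact Finsupp.lhom_ext fun d r => by
    simp [-Finsupp.single_mul, relabel_attach, loopFactor_relabel]

lemma hookOp_symm {a b : V} (h : a ≠ b) : hookOp φ h = hookOp φ h.symm :=
  Finsupp.lhom_ext fun d r => by simp [-Finsupp.single_mul, attach_symm h, loopFactor_symm φ a b]

lemma swap_mul_hookOp {a b : V} (h : a ≠ b) :
    relabelOp k V G (Equiv.swap a b) * hookOp φ h = hookOp φ h :=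
  Finsupp.lhom_ext fun d r => by simp [-Finsupp.single_mul, relabel_swap_attach]

lemma hookOp_mul_swap {a b : V} (h : a ≠ b) :
    hookOp φ h * relabelOp k V G (Equiv.swap a b) = hookOp φ h := by
  rw [← relabelOp_mul_hookOp φ (Equiv.swap_apply_right a b) (Equiv.swap_apply_left a b) h.symm h,
    ← hookOp_symm φ h, swap_mul_hookOp]

lemma hookOp_mul_hookOp {a b c : V} (h : a ≠ b) (h' : b ≠ c) (hac : a ≠ c) :
    hookOp φ h' * hookOp φ h = relabelOp k V G (Equiv.swap a c) * hookOp φ h :=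
  Finsupp.lhom_ext fun d r => by
    simp [-Finsupp.single_mul, attach_attach h h' hac, loopFactor_attach φ h hac]

lemma hookOp_mul_hookOp_mul_hookOp {a b c : V} (h : a ≠ b) (h' : b ≠ c) (hac : a ≠ c) :
    hookOp φ h * hookOp φ h' * hookOp φ h = hookOp φ h := by
  rw [mul_assoc, hookOp_mul_hookOp φ h h' hac, ← mul_assoc,
    ← relabelOp_mul_hookOp φ (Equiv.swap_apply_right a c)
      (Equiv.swap_apply_of_ne_of_ne h.symm h') h'.symm h, mul_assoc, ← hookOp_symm φ h',
    hookOp_mul_hookOp φ h h' hac, swap_mul_swap_mul]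

lemma hookOp_mul_swap_mul_hookOp {a b c : V} (h : a ≠ b) (h' : b ≠ c) (hac : a ≠ c) :
    hookOp φ h * relabelOp k V G (Equiv.swap b c) * hookOp φ h = hookOp φ h := by
  rw [← relabelOp_mul_hookOp φ (Equiv.swap_apply_of_ne_of_ne h hac) (Equiv.swap_apply_right b c)
    hac h, hookOp_symm φ h, mul_assoc, hookOp_mul_hookOp φ h.symm hac h', swap_mul_swap_mul]

lemma swap_mul_swap_mul_hookOp {a b c : V} (h : a ≠ b) (h' : b ≠ c) (hac : a ≠ c) :
    relabelOp k V G (Equiv.swap a b) * relabelOp k V G (Equiv.swap b c) * hookOp φ h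
      = hookOp φ h' * hookOp φ h := by
  have hswap : Equiv.swap a b * Equiv.swap b c = Equiv.swap a c * Equiv.swap a b := by
    ext x; simp only [Equiv.Perm.mul_apply, Equiv.swap_apply_def]; grind
  rw [hookOp_mul_hookOp φ h h' hac, ← map_mul, hswap, map_mul, mul_assoc, swap_mul_hookOp]

lemma hookOp_mul_swap_mul_swap {a b c : V} (h : a ≠ b) (h' : b ≠ c) (hac : a ≠ c) :
    hookOp φ h * relabelOp k V G (Equiv.swap b c) * relabelOp k V G (Equiv.swap a b)
      = hookOp φ h * hookOp φ h' := by
  have hswap : Equiv.swap b c * Equiv.swap a b = Equiv.swap c a * Equiv.swap b c := by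
    ext x; simp only [Equiv.Perm.mul_apply, Equiv.swap_apply_def]; grind
  rw [hookOp_symm φ h', hookOp_symm φ h, hookOp_mul_hookOp φ h'.symm h.symm hac.symm, mul_assoc,
    ← map_mul, hswap, ← relabelOp_mul_hookOp φ (a := c) (b := b) (by simp
      [Equiv.swap_apply_of_ne_of_ne h' h.symm]) (by simp) h'.symm h.symm, map_mul, mul_assoc,
    ← hookOp_symm φ h', swap_mul_hookOp]

lemma hookOp_comm {a b c e : V} (h : a ≠ b) (h' : c ≠ e) (hac : a ≠ c) (hae : a ≠ e) (hbc : b ≠ c)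
    (hbe : b ≠ e) : hookOp φ h * hookOp φ h' = hookOp φ h' * hookOp φ h :=
  Finsupp.lhom_ext fun d r => by
    simp only [Module.End.mul_apply, hookOp_single, mul_assoc, attach_comm h h' hac hae hbc hbe,
      mul_comm (loopFactor φ c e d), mul_comm (loopFactor φ a b d),
      loopFactor_attach_mul φ h h' hac hae hbc hbe]

lemma hookOp_mul_twistOp_of_ne {a b c : V} (h : a ≠ b) (hca : c ≠ a) (hcb : c ≠ b) (g : G) :
    hookOp φ h * twistOp k V G (Pi.mulSingle c g)
      = twistOp k V G (Pi.mulSingle c g) * hookOp φ h :=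
  Finsupp.lhom_ext fun d r => by
    simp [-Finsupp.single_mul, attach_twist_of_ne h hca hcb, loopFactor_twist_of_ne φ hca hcb]

lemma twistOp_mul_hookOp {a b : V} (h : a ≠ b) (g : G) :
    twistOp k V G (Pi.mulSingle a g) * hookOp φ h
      = twistOp k V G (Pi.mulSingle b g) * hookOp φ h :=
  Finsupp.lhom_ext fun d r => by simp [-Finsupp.single_mul, twist_attach_slide h]

lemma hookOp_mul_twistOp {a b : V} (h : a ≠ b) (g : G) :
    hookOp φ h * twistOp k V G (Pi.mulSingle a g)
      = hookOp φ h * twistOp k V G (Pi.mulSingle b g) :=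
  Finsupp.lhom_ext fun d r => by
    simp [-Finsupp.single_mul, attach_twist_slide h, loopFactor_twist_slide φ h]

lemma hookOp_mul_twistOp_mul_hookOp {a b : V} (h : a ≠ b) (g : G) :
    hookOp φ h * twistOp k V G (Pi.mulSingle a g) * hookOp φ h = φ g • hookOp φ h :=
  Finsupp.lhom_ext fun d r => by
    simp [-Finsupp.single_mul, attach_twist_attach h, loopFactor_twist_attach φ h, mul_comm,
      mul_left_comm]

end LabelledMatching

end Operators

/-! ### The diagram algebra -/

section DiagramAlgebra

variable {k G : Type} [CommRing k] [CommGroup G] {ρ : G →* RingAut k} {n : ℕ} {δ : k}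

variable (k G ρ n δ) in
/-- The quotient map onto the diagram algebra. -/
def toGBAlg : FreeAlgebra k (GBGen n G) →ₐ[k] GBAlg k G ρ n δ := RingQuot.mkAlgHom k _

lemma toGBAlg_eq {x y : FreeAlgebra k (GBGen n G)} (h : GBRel k G ρ n δ x y) :
    toGBAlg k G ρ n δ x = toGBAlg k G ρ n δ y := RingQuot.mkAlgHom_rel k h

lemma adjoin_range_toGBAlg_ι :
    Algebra.adjoin k (Set.range fun x => toGBAlg k G ρ n δ (FreeAlgebra.ι k x)) = ⊤ := by
  rw [Set.range_comp' (toGBAlg k G ρ n δ), ← AlgHom.map_adjoin, FreeAlgebra.adjoin_range_ι,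
    Algebra.map_top]
  exact (AlgHom.range_eq_top _).2 (RingQuot.mkAlgHom_surjective k _)

variable (k G ρ n δ)

/-- The permutation generators, extended by `1` to all indices. -/
def genS (i : ℕ) : GBAlg k G ρ n δ :=
  if h : i + 1 < n then toGBAlg k G ρ n δ (GBs k G n ⟨i, by omega⟩) else 1

/-- The cup-cap generators, extended by `0` to all indices. -/
def genE (i : ℕ) : GBAlg k G ρ n δ :=
  if h : i + 1 < n then toGBAlg k G ρ n δ (GBe k G n ⟨i, by omega⟩) else 0

lemma genS_of_lt {i : ℕ} (h : i + 1 < n) :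
    genS k G ρ n δ i = toGBAlg k G ρ n δ (GBs k G n ⟨i, by omega⟩) := dif_pos h

lemma genE_of_lt {i : ℕ} (h : i + 1 < n) :
    genE k G ρ n δ i = toGBAlg k G ρ n δ (GBe k G n ⟨i, by omega⟩) := dif_pos h

lemma isTypeA_genS : IsTypeA (genS k G ρ n δ) (n - 1) where
  sq {i} h := by
    rw [genS_of_lt _ _ _ _ _ (by omega)]
    simpa using toGBAlg_eq (.s_sq ⟨i, h⟩)
  braid {i} h := by
    rw [genS_of_lt _ _ _ _ _ (by omega), genS_of_lt _ _ _ _ _ (by omega)]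
    simpa using toGBAlg_eq (.s_braid ⟨i, by omega⟩ ⟨i + 1, h⟩ rfl)
  comm {i j} hij hj := by
    rw [genS_of_lt _ _ _ _ _ (by omega), genS_of_lt _ _ _ _ _ (by omega)]
    simpa using toGBAlg_eq (.ss_comm ⟨i, by omega⟩ ⟨j, hj⟩ hij)

lemma genS_mul_t (g : G) {i : ℕ} (l : Fin n) (h : i + 1 < n) :
    genS k G ρ n δ i * toGBAlg k G ρ n δ (GBt k G n g l)
      = toGBAlg k G ρ n δ (GBt k G n g (adjSwap n i l)) * genS k G ρ n δ i := by
  have hi : i < n - 1 := by omega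
  simp only [genS_of_lt _ _ _ _ _ h, ← map_mul]
  by_cases hl : (l : ℕ) = i
  · have hl : l = ⟨i, by omega⟩ := Fin.ext hl
    rw [hl, adjSwap_left h]
    exact toGBAlg_eq (.st_slide g ⟨i, hi⟩ _ _ rfl rfl)
  by_cases hl' : (l : ℕ) = i + 1
  · have hl : l = ⟨i + 1, h⟩ := Fin.ext hl'
    rw [hl, adjSwap_right h]
    exact toGBAlg_eq (.st_slide' g ⟨i, hi⟩ _ _ rfl rfl)
  · rw [adjSwap_of_ne hl hl']
    exact toGBAlg_eq (.st_comm g ⟨i, hi⟩ l ⟨hl, hl'⟩)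

lemma adjoin_gens_eq_top : Algebra.adjoin k
    ({x | ∃ i, i + 1 < n ∧ (x = genS k G ρ n δ i ∨ x = genE k G ρ n δ i)} ∪
      {x | ∃ g j, x = toGBAlg k G ρ n δ (GBt k G n g j)}) = ⊤ := by
  rw [eq_top_iff, ← adjoin_range_toGBAlg_ι]
  refine Algebra.adjoin_mono ?_
  rintro _ ⟨x, rfl⟩
  cases x with
  | s i =>
    have hi : (i : ℕ) + 1 < n := by omega
    exact .inl ⟨i, hi, .inl (genS_of_lt _ _ _ _ _ hi).symm⟩
  | e i =>
    have hi : (i : ℕ) + 1 < n := by omega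
    exact .inl ⟨i, hi, .inr (genE_of_lt _ _ _ _ _ hi).symm⟩
  | t g j => exact .inr ⟨g, j, rfl⟩

/-- The generators of the diagram algebra. -/
def brauerSystem : BrauerSystem k G n (fun g => ρ g δ) (GBAlg k G ρ n δ) where
  s := genS k G ρ n δ
  e := genE k G ρ n δ
  t g j := toGBAlg k G ρ n δ (GBt k G n g j)
  isTypeA := isTypeA_genS k G ρ n δ
  ee_comm {i j} hij hj := by
    simp only [genE_of_lt _ _ _ _ _ hj, genE_of_lt k G ρ n δ (i := i) (by omega), ← map_mul]
    exact toGBAlg_eq (.ee_comm ⟨i, by omega⟩ ⟨j, by omega⟩ hij)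
  s_mul_e {i} hi := by
    simp only [genS_of_lt _ _ _ _ _ hi, genE_of_lt _ _ _ _ _ hi, ← map_mul]
    exact toGBAlg_eq (.se_absorb _)
  e_mul_s {i} hi := by
    simp only [genS_of_lt _ _ _ _ _ hi, genE_of_lt _ _ _ _ _ hi, ← map_mul]
    exact toGBAlg_eq (.es_absorb _)
  se_comm {i j} hi hj hij := by
    simp only [genS_of_lt _ _ _ _ _ hi, genE_of_lt _ _ _ _ _ hj, ← map_mul]
    exact toGBAlg_eq (.se_comm _ _ hij)
  sse {i j} hi hj hij := by
    simp only [genS_of_lt _ _ _ _ _ hi, genS_of_lt _ _ _ _ _ hj, genE_of_lt _ _ _ _ _ hi,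
      genE_of_lt _ _ _ _ _ hj, ← map_mul]
    exact toGBAlg_eq (.sse _ _ hij)
  ess {i j} hi hj hij := by
    simp only [genS_of_lt _ _ _ _ _ hi, genS_of_lt _ _ _ _ _ hj, genE_of_lt _ _ _ _ _ hi,
      genE_of_lt _ _ _ _ _ hj, ← map_mul]
    exact toGBAlg_eq (.ess _ _ hij)
  t_mul g h j := by rw [← map_mul]; exact toGBAlg_eq (.t_mul g h j)
  t_one j := by rw [← map_one (toGBAlg k G ρ n δ)]; exact toGBAlg_eq (.t_one j)
  tt_comm g h j l hjl := by simp only [← map_mul]; exact toGBAlg_eq (.tt_comm g h j l hjl)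
  st g _ l hi := genS_mul_t k G ρ n δ g l hi
  et_comm g {i l} hi hl hl' := by
    simp only [genE_of_lt _ _ _ _ _ hi, ← map_mul]
    exact toGBAlg_eq (.et_comm g _ l ⟨hl, hl'⟩)
  slide_left g {i} hi := by
    simp only [genE_of_lt _ _ _ _ _ hi, ← map_mul]
    exact toGBAlg_eq (.cap_slide_l g ⟨i, by omega⟩ _ _ rfl rfl)
  slide_right g {i} hi := by
    simp only [genE_of_lt _ _ _ _ _ hi, ← map_mul]
    exact toGBAlg_eq (.cap_slide_r g ⟨i, by omega⟩ _ _ rfl rfl)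
  loop g {i} hi := by
    simp only [genE_of_lt _ _ _ _ _ hi, ← map_mul, ← map_smul]
    exact toGBAlg_eq (.loop g ⟨i, by omega⟩ _ rfl)
  adjoin_eq_top := adjoin_gens_eq_top k G ρ n δ

end DiagramAlgebra

section DiagramRep

open LabelledMatching

variable {k G : Type} [CommRing k] [CommGroup G] {n : ℕ}

/-- `G`-Brauer `n`-diagrams: the left column consists of the nodes `Sum.inl j`, the right one of the
nodes `Sum.inr j`. -/
abbrev Diagram (n : ℕ) (G : Type) : Type := LabelledMatching (Fin n ⊕ Fin n) G

/-- The lower of the two positions on which the `i`-th generators act. -/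
abbrev lowerPos (i : Fin (n - 1)) : Fin n := ⟨i, by omega⟩

/-- The upper of the two positions on which the `i`-th generators act. -/
abbrev upperPos (i : Fin (n - 1)) : Fin n := ⟨i + 1, by omega⟩

lemma inl_ne_inl {i j : Fin n} (h : (i : ℕ) ≠ j) : (Sum.inl i : Fin n ⊕ Fin n) ≠ Sum.inl j :=
  Sum.inl_injective.ne (Fin.val_ne_iff.1 h)

/-- Left multiplication by the generators on the module spanned by all diagrams. -/
def genOp (φ : G → k) : GBGen n G → Module.End k (Diagram n G →₀ k)
  | .s i => relabelOp k _ G (Equiv.swap (.inl (lowerPos i)) (.inl (upperPos i)))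
  | .e i => hookOp φ (a := .inl (lowerPos i)) (b := .inl (upperPos i)) (inl_ne_inl (by simp))
  | .t g j => twistOp k _ G (Pi.mulSingle (Sum.inl j) g)

lemma exists_genOp_eq_of_adjacent (φ : G → k) {i j : Fin (n - 1)}
    (h : (j : ℕ) = i + 1 ∨ (i : ℕ) = j + 1) :
    ∃ (a b c : Fin n ⊕ Fin n) (hab : a ≠ b) (hbc : b ≠ c), a ≠ c ∧
      genOp φ (.s i) = relabelOp k _ G (Equiv.swap a b) ∧ genOp φ (.e i) = hookOp φ hab ∧
      genOp φ (.s j) = relabelOp k _ G (Equiv.swap b c) ∧ genOp φ (.e j) = hookOp φ hbc := by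
  obtain ⟨i, hi⟩ := i
  obtain ⟨j, hj⟩ := j
  obtain rfl | rfl : j = i + 1 ∨ i = j + 1 := h
  · exact ⟨.inl (lowerPos ⟨i, hi⟩), .inl (upperPos ⟨i, hi⟩), .inl (upperPos ⟨i + 1, hj⟩),
      inl_ne_inl (by simp), inl_ne_inl (by simp), inl_ne_inl (by simp; omega), rfl, rfl, rfl, rfl⟩
  · refine ⟨.inl (upperPos ⟨j + 1, hi⟩), .inl (upperPos ⟨j, hj⟩), .inl (lowerPos ⟨j, hj⟩),
      inl_ne_inl (by simp), inl_ne_inl (by simp), inl_ne_inl (by simp; omega), ?_, ?_, ?_, ?_⟩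
    · rw [Equiv.swap_comm]; rfl
    · exact hookOp_symm φ _
    · rw [Equiv.swap_comm]; rfl
    · exact hookOp_symm φ _

lemma genOp_adjacent (φ : G → k) {i j : Fin (n - 1)} (h : (j : ℕ) = i + 1 ∨ (i : ℕ) = j + 1) :
    genOp φ (.e i) * genOp φ (.e j) * genOp φ (.e i) = genOp φ (.e i) ∧
      genOp φ (.e i) * genOp φ (.s j) * genOp φ (.e i) = genOp φ (.e i) ∧
      genOp φ (.s i) * genOp φ (.s j) * genOp φ (.e i) = genOp φ (.e j) * genOp φ (.e i) ∧
      genOp φ (.e i) * genOp φ (.s j) * genOp φ (.s i) = genOp φ (.e i) * genOp φ (.e j) := by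
  obtain ⟨a, b, c, hab, hbc, hac, hi, hi', hj, hj'⟩ := exists_genOp_eq_of_adjacent φ h
  rw [hi, hi', hj, hj']
  exact ⟨hookOp_mul_hookOp_mul_hookOp φ hab hbc hac, hookOp_mul_swap_mul_hookOp φ hab hbc hac,
    swap_mul_swap_mul_hookOp φ hab hbc hac, hookOp_mul_swap_mul_swap φ hab hbc hac⟩

lemma relabelOp_mul_twistOp_mulSingle {V : Type} [DecidableEq V] (σ : Equiv.Perm V) (c : V)
    (g : G) : relabelOp k V G σ * twistOp k V G (Pi.mulSingle c g)
      = twistOp k V G (Pi.mulSingle (σ c) g) * relabelOp k V G σ := by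
  rw [relabelOp_mul_twistOp]
  congr 2
  funext x
  simp only [Function.comp_apply, Pi.mulSingle_apply, Equiv.symm_apply_eq]

lemma genOp_s_mul_t (φ : G → k) {i : Fin (n - 1)} {l l' : Fin n} (g : G)
    (h : Equiv.swap (.inl (lowerPos i)) (.inl (upperPos i)) (.inl l : Fin n ⊕ Fin n) = .inl l') :
    genOp φ (.s i) * genOp φ (.t g l) = genOp φ (.t g l') * genOp φ (.s i) := by
  rw [genOp, genOp, genOp, relabelOp_mul_twistOp_mulSingle, h]

lemma genOp_loop (φ : G → k) {i : Fin (n - 1)} {j : Fin n} (h : (j : ℕ) = i) (g : G) :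
    genOp φ (.e i) * genOp φ (.t g j) * genOp φ (.e i) = φ g • genOp φ (.e i) := by
  obtain rfl : j = lowerPos i := Fin.ext h
  exact hookOp_mul_twistOp_mul_hookOp φ _ g

lemma lift_genOp_eq (ρ : G →* RingAut k) (δ : k) {x y : FreeAlgebra k (GBGen n G)}
    (h : GBRel k G ρ n δ x y) : FreeAlgebra.lift k (genOp fun g => ρ g δ) x
      = FreeAlgebra.lift k (genOp fun g => ρ g δ) y := by
  cases h <;> simp only [map_mul, map_one, map_smul, FreeAlgebra.lift_ι_apply]
  case s_sq => rw [genOp, ← map_mul, Equiv.swap_mul_self, map_one]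
  case s_braid i j h =>
    obtain ⟨a, b, c, hab, hbc, hac, hi, -, hj, -⟩ :=
      exists_genOp_eq_of_adjacent (fun g => ρ g δ) (.inl h)
    simp only [hi, hj, ← map_mul, swap_braid a b c hab hac hbc]
  case ss_comm i j h =>
    rw [genOp, genOp, ← map_mul, ← map_mul, (Equiv.Perm.disjoint_swap_swap ?_).commute.eq]
    simp
    omega
  case e_sq i => simpa [genOp] using genOp_loop (fun g => ρ g δ) (i := i) (j := lowerPos i) rfl 1
  case e_hook h => exact (genOp_adjacent _ h).1
  case ee_comm i j h =>
    refine hookOp_comm _ _ _ ?_ ?_ ?_ ?_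
    all_goals exact inl_ne_inl (by simp; omega)
  case se_absorb => exact swap_mul_hookOp _ _
  case es_absorb => exact hookOp_mul_swap _ _
  case se_comm i j h =>
    refine relabelOp_mul_hookOp _ (Equiv.swap_apply_of_ne_of_ne ?_ ?_)
      (Equiv.swap_apply_of_ne_of_ne ?_ ?_) _ _
    all_goals exact inl_ne_inl (by simp; omega)
  case ese h => exact (genOp_adjacent _ h).2.1
  case sse h => exact (genOp_adjacent _ h).2.2.1
  case ess h => exact (genOp_adjacent _ h).2.2.2
  case t_mul => rw [genOp, genOp, ← map_mul, ← Pi.mulSingle_mul]; rfl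
  case t_one => rw [genOp, Pi.mulSingle_one, map_one]
  case tt_comm => rw [genOp, genOp, ← map_mul, ← map_mul, mul_comm]
  case st_comm i l h =>
    refine genOp_s_mul_t _ _ (Equiv.swap_apply_of_ne_of_ne ?_ ?_)
    all_goals exact inl_ne_inl (by simp; omega)
  case st_slide g i j j' h h' =>
    obtain rfl : j = lowerPos i := Fin.ext h
    obtain rfl : j' = upperPos i := Fin.ext h'
    exact genOp_s_mul_t _ _ (Equiv.swap_apply_left _ _)
  case st_slide' g i j j' h h' =>
    obtain rfl : j = lowerPos i := Fin.ext h
    obtain rfl : j' = upperPos i := Fin.ext h'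
    exact genOp_s_mul_t _ _ (Equiv.swap_apply_right _ _)
  case et_comm g i l h =>
    exact hookOp_mul_twistOp_of_ne _ _ (inl_ne_inl (by simp; omega)) (inl_ne_inl (by simp; omega)) g
  case cap_slide_l g i j j' h h' =>
    obtain rfl : j = lowerPos i := Fin.ext h
    obtain rfl : j' = upperPos i := Fin.ext h'
    exact twistOp_mul_hookOp _ _ g
  case cap_slide_r g i j j' h h' =>
    obtain rfl : j = lowerPos i := Fin.ext h
    obtain rfl : j' = upperPos i := Fin.ext h'
    exact hookOp_mul_twistOp _ _ g
  case loop g i j h => exact genOp_loop _ h g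

variable {A : Type} [Ring A] [Algebra k A]

/-- A representation of `A` on the module spanned by all diagrams, in which the generators act as
under left multiplication of diagrams. -/
structure BrauerSystem.IsDiagramRep {φ : G → k} (X : BrauerSystem k G n φ A)
    (Θ : A →ₐ[k] Module.End k (Diagram n G →₀ k)) : Prop where
  s (i : Fin (n - 1)) : Θ (X.s i) = genOp φ (.s i)
  e (i : Fin (n - 1)) : Θ (X.e i) = genOp φ (.e i)
  t (g : G) (j : Fin n) : Θ (X.t g j) = genOp φ (.t g j)

lemma exists_isDiagramRep (ρ : G →* RingAut k) (n : ℕ) (δ : k) :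
    ∃ Θ, (brauerSystem k G ρ n δ).IsDiagramRep Θ := by
  let Θ : GBAlg k G ρ n δ →ₐ[k] Module.End k (Diagram n G →₀ k) :=
    RingQuot.liftAlgHom k ⟨FreeAlgebra.lift k (genOp fun g => ρ g δ), fun _ _ => lift_genOp_eq ρ δ⟩
  have hΘ (x : GBGen n G) :
      Θ (toGBAlg k G ρ n δ (FreeAlgebra.ι k x)) = genOp (fun g => ρ g δ) x :=
    (RingQuot.liftAlgHom_mkAlgHom_apply ..).trans (FreeAlgebra.lift_ι_apply _ _)
  have hi (i : Fin (n - 1)) : (i : ℕ) + 1 < n := by omega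
  exact ⟨Θ, fun i => by rw [← hΘ, ← genS_of_lt _ _ _ _ _ (hi i)]; rfl,
    fun i => by rw [← hΘ, ← genE_of_lt _ _ _ _ _ (hi i)]; rfl, fun g j => hΘ (.t g j)⟩

end DiagramRep

section Diagram

open LabelledMatching

namespace Diagram

variable {G : Type} {n : ℕ}

section WreathAction

variable [CommGroup G]

/-- Left multiplication of diagrams by labelled permutation diagrams. -/
instance : MulAction (WreathProduct G n) (Diagram n G) where
  smul u d := (d.relabel (Equiv.Perm.sumCongr u.right 1)).twist (Sum.elim u.left 1)
  one_smul d := by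
    change (d.relabel (Equiv.Perm.sumCongr 1 1)).twist (Sum.elim (1 : Fin n → G) 1) = d
    rw [Sum.elim_one_one, Equiv.Perm.sumCongr_one, relabel_one, twist_one]
  mul_smul u v d := by
    change (d.relabel (Equiv.Perm.sumCongr (u.right * v.right) 1)).twist
        (Sum.elim (u.left * permMulAut G n u.right v.left) 1)
      = (((d.relabel (Equiv.Perm.sumCongr v.right 1)).twist (Sum.elim v.left 1)).relabel
          (Equiv.Perm.sumCongr u.right 1)).twist (Sum.elim u.left 1)
    rw [relabel_twist, ← relabel_mul, ← twist_mul, Equiv.Perm.sumCongr_mul, one_mul]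
    congr 1
    funext x
    cases x
    · rfl
    · exact (one_mul 1).symm

lemma smul_def (u : WreathProduct G n) (d : Diagram n G) :
    u • d = (d.relabel (Equiv.Perm.sumCongr u.right 1)).twist (Sum.elim u.left 1) := rfl

lemma smul_τ_inl (u : WreathProduct G n) (d : Diagram n G) (x : Fin n) :
    (u • d).τ (.inl (u.right x)) = Sum.map u.right id (d.τ (.inl x)) := by
  simp [smul_def, twist, relabel]

lemma smul_τ_inr_eq_inr_iff (u : WreathProduct G n) (d : Diagram n G) (x y : Fin n) :
    (u • d).τ (.inr x) = .inr y ↔ d.τ (.inr x) = .inr y := by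
  have h : (u • d).τ (.inr x) = Sum.map u.right id (d.τ (.inr x)) := rfl
  rw [h]
  cases d.τ (.inr x) <;> simp

lemma smul_l_inl (u : WreathProduct G n) (d : Diagram n G) (x : Fin n) :
    (u • d).l (.inl (u.right x))
      = u.left (u.right x) * Sum.elim (u.left ∘ u.right) 1 (d.τ (.inl x)) * d.l (.inl x) := by
  simp only [smul_def, twist, relabel]
  cases h : d.τ (.inl x) <;> simp [h]

lemma smul_l_inr (u : WreathProduct G n) (d : Diagram n G) {x y : Fin n}
    (h : d.τ (.inr x) = .inr y) : (u • d).l (.inr x) = d.l (.inr x) := by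
  have hl : (u • d).l (.inr x) = 1 * Sum.elim u.left 1 (Sum.map u.right id (d.τ (.inr x)))
    * d.l (.inr x) := rfl
  simp [hl, h]

end WreathAction

/-- The identity diagram. -/
def identity [One G] : Diagram n G where
  τ := Sum.swap
  l _ := 1
  τ_τ x := by simp
  τ_ne x := by cases x <;> simp
  l_τ _ := rfl

end Diagram

namespace BrauerSystem.IsDiagramRep

variable {k G A : Type} [CommRing k] [CommGroup G] {n : ℕ} [Ring A] [Algebra k A] {φ : G → k}
  {X : BrauerSystem k G n φ A} {Θ : A →ₐ[k] Module.End k (Diagram n G →₀ k)}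

lemma map_perm (hΘ : X.IsDiagramRep Θ) (π : Equiv.Perm (Fin n)) :
    Θ (X.perm π) = relabelOp k _ G (Equiv.Perm.sumCongr π 1) := by
  induction mem_closure_adjSwap 0 (π := π) (by simp) using Submonoid.closure_induction with
  | mem x hx =>
    obtain ⟨i, ⟨-, hi⟩, rfl⟩ := hx
    rw [X.perm_adjSwap hi, hΘ.s ⟨i, by omega⟩, genOp, adjSwap, dif_pos hi,
      Equiv.Perm.sumCongr_swap_one]
  | one => simp
  | mul x y _ _ hx hy =>
    rw [map_mul, map_mul, hx, hy, ← map_mul, Equiv.Perm.sumCongr_mul, one_mul]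

lemma map_label (hΘ : X.IsDiagramRep Θ) (f : Fin n → G) :
    Θ (X.label f) = twistOp k _ G (Sum.elim f 1) := by
  induction f using Pi.mulSingle_induction with
  | one => simp [Sum.elim_one_one]
  | mul f g hf hg => rw [map_mul, map_mul, hf, hg, ← map_mul, ← Sum.elim_mul_mul, one_mul]
  | mulSingle j g => rw [X.label_mulSingle, hΘ.t, genOp, Sum.elim_mulSingle_one]

lemma map_wreath_single (hΘ : X.IsDiagramRep Θ) (u : WreathProduct G n) (d : Diagram n G) (r : k) :
    Θ (X.wreath u) (Finsupp.single d r) = Finsupp.single (u • d) r := by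
  rw [X.wreath_apply, map_mul, hΘ.map_label, hΘ.map_perm]
  simp [Diagram.smul_def]

lemma map_hook (hΘ : X.IsDiagramRep Θ) (α : Arc n G) : Θ (X.hook α)
    = twistOp k _ G (Pi.mulSingle (.inl α.i) α.g⁻¹) * hookOp φ (Sum.inl_injective.ne α.ne)
      * twistOp k _ G (Pi.mulSingle (.inl α.i) α.g) := by
  have hn := α.one_lt
  obtain ⟨π, hπ⟩ := α.exists_perm_smul_base
  have hi : π (Arc.base G 0 α.one_lt).i = α.i := congrArg Arc.i hπ
  have hj : π (Arc.base G 0 α.one_lt).j = α.j := congrArg Arc.j hπ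
  have hu : (⟨Pi.mulSingle α.i α.g⁻¹, π⟩ : WreathProduct G n)
      = SemidirectProduct.inl (Pi.mulSingle α.i α.g⁻¹) * SemidirectProduct.inr π :=
    SemidirectProduct.mk_eq_inl_mul_inr ..
  have hu' : X.wreath (⟨Pi.mulSingle α.i α.g⁻¹, π⟩ : WreathProduct G n)⁻¹
      = X.perm π⁻¹ * X.label (Pi.mulSingle α.i α.g) := by
    rw [hu, mul_inv_rev, map_mul, ← map_inv, ← map_inv, X.wreath_inr, X.wreath_inl,
      ← Pi.mulSingle_inv, inv_inv]
  have hconj : relabelOp k _ G (Equiv.Perm.sumCongr π 1) * genOp φ (.e ⟨0, by omega⟩)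
      * relabelOp k _ G (Equiv.Perm.sumCongr π⁻¹ 1) = hookOp φ (Sum.inl_injective.ne α.ne) := by
    rw [genOp, relabelOp_mul_hookOp φ (congrArg Sum.inl hi) (congrArg Sum.inl hj), mul_assoc,
      ← map_mul, Equiv.Perm.sumCongr_mul, mul_inv_cancel, one_mul, Equiv.Perm.sumCongr_one,
      map_one, mul_one]
  conv_lhs => rw [← hπ]
  rw [X.hook_smul_base, hu', X.wreath_apply, map_mul, map_mul, map_mul, map_mul, hΘ.map_label,
    hΘ.map_label, hΘ.map_perm, hΘ.map_perm, hΘ.e ⟨0, by omega⟩, Sum.elim_mulSingle_one,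
    Sum.elim_mulSingle_one, ← hconj]
  simp only [mul_assoc]

end BrauerSystem.IsDiagramRep

namespace Diagram

variable {G : Type} [CommGroup G] {n : ℕ} {L : List (Arc n G)} {d d' : Diagram n G}

/-- The left multiple of a diagram by the diagram of an arc, without the scalar. -/
def attachArc (α : Arc n G) (d : Diagram n G) : Diagram n G :=
  ((d.twist (Pi.mulSingle (.inl α.i) α.g)).attach (Sum.inl_injective.ne α.ne)).twist
    (Pi.mulSingle (.inl α.i) α.g⁻¹)

/-- The diagram `d` is the product of the diagrams of the pairwise disjoint arcs in `L`. -/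
structure HasArcs (L : List (Arc n G)) (d : Diagram n G) : Prop where
  τ_inl : ∀ α ∈ L, d.τ (.inl α.i) = .inl α.j
  τ_inr : ∀ α ∈ L, d.τ (.inr α.i) = .inr α.j
  l_inl : ∀ α ∈ L, d.l (.inl α.i) = α.g⁻¹
  l_inr : ∀ α ∈ L, d.l (.inr α.i) = α.g
  τ_inl_of_forall_ne : ∀ x, (∀ α ∈ L, x ≠ α.i ∧ x ≠ α.j) → d.τ (.inl x) = .inr x
  l_inl_of_forall_ne : ∀ x, (∀ α ∈ L, x ≠ α.i ∧ x ≠ α.j) → d.l (.inl x) = 1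

lemma hasArcs_nil : HasArcs [] (identity : Diagram n G) :=
  ⟨by simp, by simp, by simp, by simp, fun _ _ => rfl, fun _ _ => rfl⟩

lemma HasArcs.attachArc (hd : HasArcs L d) {α : Arc n G} (h : ∀ β ∈ L, α.Disj β) :
    HasArcs (α :: L) (attachArc α d) := by
  have hτi := hd.τ_inl_of_forall_ne α.i fun β hβ => ⟨(h β hβ).1, (h β hβ).2.1⟩
  have hτj := hd.τ_inl_of_forall_ne α.j fun β hβ => ⟨(h β hβ).2.2.1, (h β hβ).2.2.2⟩
  have hli := hd.l_inl_of_forall_ne α.i fun β hβ => ⟨(h β hβ).1, (h β hβ).2.1⟩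
  have hlj := hd.l_inl_of_forall_ne α.j fun β hβ => ⟨(h β hβ).2.2.1, (h β hβ).2.2.2⟩
  have := α.ne
  obtain ⟨h₁, h₂, h₃, h₄, h₅, h₆⟩ := hd
  simp only [Arc.Disj] at h
  constructor <;> simp only [Diagram.attachArc, twist, attach, Pi.mulSingle_apply, List.mem_cons]
  all_goals grind

lemma HasArcs.loopFactor_eq_one {k : Type} [CommRing k] (φ : G → k) (hd : HasArcs L d) {α : Arc n G}
    (h : ∀ β ∈ L, α.Disj β) :
    loopFactor φ (.inl α.i) (.inl α.j) (d.twist (Pi.mulSingle (.inl α.i) α.g)) = 1 := by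
  have hτ := hd.τ_inl_of_forall_ne α.i fun β hβ => ⟨(h β hβ).1, (h β hβ).2.1⟩
  simp [loopFactor, twist, hτ]

lemma HasArcs.unique (hd : HasArcs L d) (hd' : HasArcs L d') : d = d' := by
  have := d.τ_τ
  have := d'.τ_τ
  have := d.l_τ
  have := d'.l_τ
  obtain ⟨h₁, h₂, h₃, h₄, h₅, h₆⟩ := hd
  obtain ⟨h₁', h₂', h₃', h₄', h₅', h₆'⟩ := hd'
  have hx (x : Fin n) : d.τ (.inl x) = d'.τ (.inl x) ∧ d.τ (.inr x) = d'.τ (.inr x) ∧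
      d.l (.inl x) = d'.l (.inl x) ∧ d.l (.inr x) = d'.l (.inr x) := by
    by_cases h : ∀ α ∈ L, x ≠ α.i ∧ x ≠ α.j
    · grind
    · push Not at h
      grind
  ext (x | x)
  · exact (hx x).1
  · exact (hx x).2.1
  · exact (hx x).2.2.1
  · exact (hx x).2.2.2

end Diagram

lemma BrauerSystem.IsDiagramRep.exists_hasArcs {k G A : Type} [CommRing k] [CommGroup G] {n : ℕ}
    [Ring A] [Algebra k A] {φ : G → k} {X : BrauerSystem k G n φ A}
    {Θ : A →ₐ[k] Module.End k (Diagram n G →₀ k)} (hΘ : X.IsDiagramRep Θ) {L : List (Arc n G)}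
    (hL : L.Pairwise Arc.Disj) : ∃ d, Diagram.HasArcs L d ∧
      Θ (X.hookProd L) (Finsupp.single Diagram.identity 1) = Finsupp.single d 1 := by
  induction L with
  | nil => exact ⟨_, Diagram.hasArcs_nil, by simp [hookProd_nil]⟩
  | cons α L ih =>
    rw [List.pairwise_cons] at hL
    obtain ⟨d, hd, hdL⟩ := ih hL.2
    refine ⟨_, hd.attachArc hL.1, ?_⟩
    rw [hookProd_cons, map_mul, Module.End.mul_apply, hdL, hΘ.map_hook]
    simp only [Module.End.mul_apply, twistOp_single, hookOp_single, one_mul,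
      hd.loopFactor_eq_one φ hL.1, Diagram.attachArc]

end Diagram

/-! ### Labelled permutations absorbed by a product of hooks -/

section Stabilizer

open LabelledMatching

lemma subgroup_le_of_exists_measure_lt {Γ : Type*} [Group Γ] {H K : Subgroup Γ} (μ : Γ → ℕ)
    (hKH : K ≤ H) (h : ∀ v ∈ H, v ∈ K ∨ ∃ u ∈ K, μ (u * v) < μ v) : H ≤ K := by
  intro v hv
  induction hN : μ v using Nat.strong_induction_on generalizing v with
  | _ N ih =>
    subst hN
    obtain hv' | ⟨u, hu, hlt⟩ := h v hv
    · exact hv'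
    · exact (K.mul_mem_cancel_left hu).mp (ih _ hlt (H.mul_mem (hKH hu) hv) rfl)

lemma card_support_mul_lt {α : Type*} [Fintype α] [DecidableEq α] {σ τ : Equiv.Perm α} {x : α}
    (hx : σ x ≠ x) (hτ : τ (σ x) = x) (h : ∀ y, σ y = y → τ y = y) :
    (τ * σ).support.card < σ.support.card := by
  refine Finset.card_lt_card ((Finset.ssubset_iff_of_subset fun y hy => ?_).mpr ⟨x, ?_, ?_⟩)
  · rw [Equiv.Perm.mem_support] at hy ⊢
    exact fun hy' => hy (by rw [Equiv.Perm.mul_apply, hy', h y hy'])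
  · simpa using hx
  · simpa using hτ

variable {G : Type} {n : ℕ}

/-- Membership of an arc up to orientation. -/
def Arc.MemFlip (α : Arc n G) (L : List (Arc n G)) : Prop := α ∈ L ∨ α.flip ∈ L

variable {L L' : List (Arc n G)} {d d' : Diagram n G} {α β : Arc n G}

lemma Arc.memFlip_iff_of_pairwise_cons (h : (α :: L).Pairwise Arc.Disj) :
    β.MemFlip L ↔ β.MemFlip (α :: L) ∧ β.i ≠ α.i ∧ β.i ≠ α.j := by
  have hL := (List.pairwise_cons.mp h).1
  constructor
  · rintro (hβ | hβ)
    · exact ⟨.inl (.tail _ hβ), (hL β hβ).1.symm, (hL β hβ).2.2.1.symm⟩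
    · exact ⟨.inr (.tail _ hβ), (hL _ hβ).2.1.symm, (hL _ hβ).2.2.2.symm⟩
  · rintro ⟨hβ | hβ, hi, hj⟩ <;> rw [List.mem_cons] at hβ
    · exact .inl (hβ.resolve_left fun h => hi (congrArg Arc.i h))
    · exact .inr (hβ.resolve_left fun h => hj (congrArg Arc.j h))

variable [CommGroup G]

namespace Diagram.HasArcs

lemma τ_inl_of_memFlip (hd : HasArcs L d) (h : α.MemFlip L) : d.τ (.inl α.i) = .inl α.j := by
  rcases h with h | h
  · exact hd.τ_inl α h
  · rw [← d.τ_τ (.inl α.j)]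
    exact (congrArg d.τ (hd.τ_inl _ h)).symm

lemma τ_inr_of_memFlip (hd : HasArcs L d) (h : α.MemFlip L) : d.τ (.inr α.i) = .inr α.j := by
  rcases h with h | h
  · exact hd.τ_inr α h
  · rw [← d.τ_τ (.inr α.j)]
    exact (congrArg d.τ (hd.τ_inr _ h)).symm

lemma l_inr_of_memFlip (hd : HasArcs L d) (h : α.MemFlip L) : d.l (.inr α.i) = α.g := by
  rcases h with h | h
  · exact hd.l_inr α h
  · have hτ : d.τ (.inr α.j) = .inr α.i := hd.τ_inr _ h
    have hl : d.l (.inr α.j) = α.g := hd.l_inr _ h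
    rw [← hτ, d.l_τ, hl]

lemma exists_memFlip_or_τ_inl (hd : HasArcs L d) (x : Fin n) :
    (∃ α : Arc n G, α.MemFlip L ∧ α.i = x) ∨ d.τ (.inl x) = .inr x := by
  by_cases h : ∀ α ∈ L, x ≠ α.i ∧ x ≠ α.j
  · exact .inr (hd.τ_inl_of_forall_ne x h)
  · push Not at h
    obtain ⟨α, hα, h⟩ := h
    by_cases hx : x = α.i
    · exact .inl ⟨α, .inl hα, hx.symm⟩
    · exact .inl ⟨α.flip, .inr hα, (h hx).symm⟩

lemma exists_of_τ_inl (hd : HasArcs L d) {x y : Fin n} (h : d.τ (.inl x) = .inl y) :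
    ∃ α : Arc n G, α.MemFlip L ∧ α.i = x ∧ α.j = y := by
  obtain ⟨α, hα, rfl⟩ | hx := hd.exists_memFlip_or_τ_inl x
  · exact ⟨α, hα, rfl, Sum.inl_injective ((hd.τ_inl_of_memFlip hα).symm.trans h)⟩
  · simp [hx] at h

lemma memFlip_iff (hd : HasArcs L d) :
    α.MemFlip L ↔ d.τ (.inr α.i) = .inr α.j ∧ d.l (.inr α.i) = α.g := by
  refine ⟨fun h => ⟨hd.τ_inr_of_memFlip h, hd.l_inr_of_memFlip h⟩, fun ⟨hτ, hl⟩ => ?_⟩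
  obtain ⟨β, hβ, hi⟩ | hx := hd.exists_memFlip_or_τ_inl α.i
  · suffices β = α from this ▸ hβ
    ext1
    · exact hi
    · exact Sum.inr_injective ((hd.τ_inr_of_memFlip hβ).symm.trans (hi ▸ hτ))
    · exact (hd.l_inr_of_memFlip hβ).symm.trans (hi ▸ hl)
  · rw [← hx, d.τ_τ] at hτ
    simp at hτ

lemma memFlip_iff_of_smul_eq (hd : HasArcs L d) (hd' : HasArcs L' d') {u u' : WreathProduct G n}
    (h : u • d = u' • d') : α.MemFlip L ↔ α.MemFlip L' := by
  rw [hd.memFlip_iff, hd'.memFlip_iff, ← smul_τ_inr_eq_inr_iff u d, h,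
    smul_τ_inr_eq_inr_iff u' d']
  refine and_congr_right fun hτ => ?_
  have hτ' := (smul_τ_inr_eq_inr_iff u' d' _ _).mpr hτ
  rw [← smul_l_inr u' d' hτ, ← h, smul_l_inr u d ((smul_τ_inr_eq_inr_iff u d _ _).mp (h ▸ hτ'))]

end Diagram.HasArcs

namespace BrauerSystem

variable {k : Type} [CommRing k] {φ : G → k} {A : Type} [Ring A] [Algebra k A]
  (X : BrauerSystem k G n φ A)

lemma exists_hookProd_eq_hook_mul_of_memFlip (hL : L.Pairwise Arc.Disj) (hα : α.MemFlip L) :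
    ∃ M : List (Arc n G), M.Pairwise Arc.Disj ∧ X.hookProd L = X.hook α * X.hookProd M ∧
      ∀ β : Arc n G, β.MemFlip M ↔ β.MemFlip L ∧ β.i ≠ α.i ∧ β.i ≠ α.j := by
  rcases hα with h | h <;> obtain ⟨M, hM, hLM⟩ := X.exists_hookProd_eq_hook_mul hL h <;>
    have hM' := (hM.pairwise_iff Arc.Disj.symm).mp hL
  · exact ⟨M, hM'.of_cons, hLM, fun β => by
      rw [Arc.memFlip_iff_of_pairwise_cons hM', Arc.MemFlip, ← hM.mem_iff, ← hM.mem_iff]; rfl⟩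
  · exact ⟨M, hM'.of_cons, by rw [hLM, hook_flip], fun β => by
      rw [Arc.memFlip_iff_of_pairwise_cons hM', Arc.MemFlip, ← hM.mem_iff, ← hM.mem_iff,
        and_comm (a := β.i ≠ α.flip.i)]; rfl⟩

lemma exists_hookProd_eq_hook_mul_hook_mul (hL : L.Pairwise Arc.Disj) (hα : α.MemFlip L)
    (hβ : β.MemFlip L) (h : α.Disj β) :
    ∃ M : List (Arc n G), X.hookProd L = X.hook α * X.hook β * X.hookProd M := by
  obtain ⟨M, hM, hLM, hαM⟩ := X.exists_hookProd_eq_hook_mul_of_memFlip hL hα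
  obtain ⟨N, -, hMN, -⟩ := X.exists_hookProd_eq_hook_mul_of_memFlip hM
    ((hαM β).mpr ⟨hβ, h.1.symm, h.2.2.1.symm⟩)
  exact ⟨N, by rw [hLM, hMN, mul_assoc]⟩

lemma hookProd_eq_of_memFlip_iff (hL : L.Pairwise Arc.Disj) (hL' : L'.Pairwise Arc.Disj)
    (h : ∀ α : Arc n G, α.MemFlip L ↔ α.MemFlip L') : X.hookProd L = X.hookProd L' := by
  induction L generalizing L' with
  | nil =>
    obtain rfl : L' = [] := List.eq_nil_iff_forall_not_mem.mpr fun α hα => by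
      simpa [Arc.MemFlip] using (h α).mpr (.inl hα)
    rfl
  | cons α L ih =>
    obtain ⟨M, hM, hLM, hαM⟩ := X.exists_hookProd_eq_hook_mul_of_memFlip hL'
      ((h α).mp (.inl List.mem_cons_self))
    rw [hLM, hookProd_cons, ih hL.of_cons hM fun β => by
      rw [hαM, ← h, Arc.memFlip_iff_of_pairwise_cons hL]]

/-- The elements of the wreath product that are absorbed by a product of hooks. -/
def absorbing (L : List (Arc n G)) : Subgroup (WreathProduct G n) where
  carrier := {v | X.wreath v * X.hookProd L = X.hookProd L}
  one_mem' := by simp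
  mul_mem' {u v} hu hv := by
    rw [Set.mem_ofPred_eq, map_mul, mul_assoc, hv, hu]
  inv_mem' {v} hv := by
    rw [Set.mem_ofPred_eq] at hv ⊢
    conv_lhs => rw [← hv, ← mul_assoc, wreath_inv_mul, one_mul]

lemma mem_absorbing {v : WreathProduct G n} :
    v ∈ X.absorbing L ↔ X.wreath v * X.hookProd L = X.hookProd L := Iff.rfl

lemma mem_absorbing_of_mul_hook (hL : L.Pairwise Arc.Disj) (hα : α.MemFlip L)
    {v : WreathProduct G n} (hv : X.wreath v * X.hook α = X.hook α) : v ∈ X.absorbing L := by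
  obtain ⟨M, -, hM, -⟩ := X.exists_hookProd_eq_hook_mul_of_memFlip hL hα
  rw [mem_absorbing, hM, ← mul_assoc, hv]

lemma comap_inl_stabilizer_le (hL : L.Pairwise Arc.Disj) (hd : Diagram.HasArcs L d)
    (h : X.absorbing L ≤ MulAction.stabilizer (WreathProduct G n) d) :
    (MulAction.stabilizer (WreathProduct G n) d).comap SemidirectProduct.inl
      ≤ (X.absorbing L).comap SemidirectProduct.inl := by
  refine subgroup_le_of_exists_measure_lt (fun f => (Function.mulSupport f).ncard)
    (Subgroup.comap_mono h) fun f hf => ?_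
  by_cases hf1 : f = 1
  · exact .inl (hf1 ▸ one_mem _)
  obtain ⟨x, hx⟩ := Function.ne_iff.mp hf1
  have hl (x : Fin n) : f x * Sum.elim f 1 (d.τ (.inl x)) = 1 := by
    have := Diagram.smul_l_inl (SemidirectProduct.inl f) d x
    rw [MulAction.mem_stabilizer_iff.mp hf] at this
    exact mul_eq_right.mp this.symm
  obtain ⟨α, hα, rfl⟩ | hx' := hd.exists_memFlip_or_τ_inl x
  · have hfj : f α.j = (f α.i)⁻¹ := by
      have := hl α.i
      rw [hd.τ_inl_of_memFlip hα] at this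
      exact eq_inv_of_mul_eq_one_right this
    refine .inr ⟨Pi.mulSingle α.i (f α.i)⁻¹ * Pi.mulSingle α.j (f α.i), ?_, ?_⟩
    · refine X.mem_absorbing_of_mul_hook hL hα ?_
      simpa [wreath_inl] using X.label_mul_hook α (f α.i)⁻¹
    · refine Set.ncard_lt_ncard ((Set.ssubset_iff_of_subset fun y hy => ?_).mpr ⟨α.i, hx, ?_⟩)
      · contrapose! hy
        rw [Function.notMem_mulSupport] at hy ⊢
        have hi : y ≠ α.i := fun h => hx (h ▸ hy)
        have hj : y ≠ α.j := fun h => hx (inv_eq_one.mp (hfj ▸ h ▸ hy))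
        simp [hy, hi, hj]
      · simp [α.ne]
  · exact absurd (by simpa [hx'] using hl x) hx

lemma exists_mem_absorbing_apply_eq (hL : L.Pairwise Arc.Disj) (hd : Diagram.HasArcs L d)
    {v : WreathProduct G n} (hv : v • d = d) {x : Fin n} (hx : v.right x ≠ x) :
    ∃ u ∈ X.absorbing L, u.right (v.right x) = x ∧ ∀ y, v.right y = y → u.right y = y := by
  have hτ (x : Fin n) : d.τ (.inl (v.right x)) = Sum.map v.right id (d.τ (.inl x)) := by
    simpa only [hv] using Diagram.smul_τ_inl v d x
  have hτ_τ := d.τ_τ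
  have hinj := v.right.injective
  obtain ⟨α, hα, rfl⟩ | hx' := hd.exists_memFlip_or_τ_inl x
  · have hτα := hd.τ_inl_of_memFlip hα
    have hτv : d.τ (.inl (v.right α.i)) = .inl (v.right α.j) := by rw [hτ, hτα]; rfl
    by_cases hc : v.right α.i = α.j
    · obtain ⟨u, hu, hu'⟩ := X.exists_swap_mul_hook α
      refine ⟨u, X.mem_absorbing_of_mul_hook hL hα hu', by rw [hu, hc, Equiv.swap_apply_right], ?_⟩
      intro y hy
      rw [hu]
      exact Equiv.swap_apply_of_ne_of_ne (by grind) (by grind)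
    · obtain ⟨β, hβ, hβi, hβj⟩ := hd.exists_of_τ_inl hτv
      have hαβ : α.Disj β := by
        rw [Arc.Disj]
        grind
      obtain ⟨u, hu, hu'⟩ := X.exists_swap_mul_hook_mul_hook hαβ
      obtain ⟨M, hM⟩ := X.exists_hookProd_eq_hook_mul_hook_mul hL hα hβ hαβ
      refine ⟨u, by rw [mem_absorbing, hM, ← mul_assoc, hu'], ?_, fun y hy => ?_⟩
      · rw [hu, ← hβi, Equiv.Perm.mul_apply, Equiv.swap_apply_of_ne_of_ne hαβ.2.2.1.symm β.ne,
          Equiv.swap_apply_right]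
      · rw [hu, Equiv.Perm.mul_apply, Equiv.swap_apply_of_ne_of_ne (by grind) (by grind),
          Equiv.swap_apply_of_ne_of_ne (by grind) (by grind)]
  · have := hτ x
    rw [hx', Sum.map_inr, id, ← hx'] at this
    grind

lemma stabilizer_le_absorbing (hL : L.Pairwise Arc.Disj) (hd : Diagram.HasArcs L d)
    (h : X.absorbing L ≤ MulAction.stabilizer (WreathProduct G n) d) :
    MulAction.stabilizer (WreathProduct G n) d ≤ X.absorbing L := by
  refine subgroup_le_of_exists_measure_lt (fun v => v.right.support.card) h fun v hv => ?_
  by_cases hv1 : v.right = 1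
  · have hv' : SemidirectProduct.inl v.left = v := by ext1 <;> simp [hv1]
    rw [← hv'] at hv ⊢
    exact .inl (X.comap_inl_stabilizer_le hL hd h hv)
  · obtain ⟨x, hx⟩ : ∃ x, v.right x ≠ x := by
      by_contra! h
      exact hv1 (Equiv.ext h)
    obtain ⟨u, hu, hux, huy⟩ := X.exists_mem_absorbing_apply_eq hL hd hv hx
    exact .inr ⟨u, hu, card_support_mul_lt hx hux huy⟩

end BrauerSystem

end Stabilizer

/-! ### The diagram basis and the projection to the group algebra -/

section DiagramBasis

variable {k G A : Type} [CommRing k] [CommGroup G] {n : ℕ} [Ring A] [Algebra k A] {φ : G → k}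

namespace BrauerSystem

variable (X : BrauerSystem k G n φ A)

lemma diagrams_anti {B B' : List (Arc n G)} (h : B ⊆ B') : X.diagrams B' ⊆ X.diagrams B := by
  rintro _ ⟨u, L, hL, hB, rfl⟩
  exact ⟨u, L, hL, List.Subset.trans h hB, rfl⟩

lemma mul_hook_of_mem_diagrams {α : Arc n G} {x : A} (hx : x ∈ X.diagrams [α]) :
    x * X.hook α = φ 1 • x := by
  obtain ⟨u, L, hL, hα, rfl⟩ := hx
  rw [mul_assoc, X.hookProd_mul_hook hL (hα List.mem_cons_self), mul_smul_comm]

namespace IsDiagramRep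

variable {X} {Θ : A →ₐ[k] Module.End k (Diagram n G →₀ k)} (hΘ : X.IsDiagramRep Θ)
  {L L' : List (Arc n G)} {d d' : Diagram n G}
include hΘ

lemma map_wreath_mul_hookProd (hL : L.Pairwise Arc.Disj) (hd : Diagram.HasArcs L d)
    (u : WreathProduct G n) : Θ (X.wreath u * X.hookProd L) (Finsupp.single Diagram.identity 1)
      = Finsupp.single (u • d) 1 := by
  obtain ⟨d', hd', h⟩ := hΘ.exists_hasArcs hL
  rw [map_mul, Module.End.mul_apply, h, hΘ.map_wreath_single, hd.unique hd']

variable [Nontrivial k]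

lemma absorbing_eq_stabilizer (hL : L.Pairwise Arc.Disj) (hd : Diagram.HasArcs L d) :
    X.absorbing L = MulAction.stabilizer (WreathProduct G n) d := by
  have h : X.absorbing L ≤ MulAction.stabilizer (WreathProduct G n) d := fun v hv => by
    have h₁ := hΘ.map_wreath_mul_hookProd hL hd v
    rw [X.mem_absorbing.mp hv, ← one_mul (X.hookProd L), ← map_one X.wreath,
      hΘ.map_wreath_mul_hookProd hL hd, one_smul] at h₁
    exact (Finsupp.single_left_injective one_ne_zero h₁).symm
  exact le_antisymm h (X.stabilizer_le_absorbing hL hd h)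

lemma wreath_mul_hookProd_eq (hL : L.Pairwise Arc.Disj) (hL' : L'.Pairwise Arc.Disj)
    (hd : Diagram.HasArcs L d) (hd' : Diagram.HasArcs L' d') {u u' : WreathProduct G n}
    (h : u • d = u' • d') : X.wreath u * X.hookProd L = X.wreath u' * X.hookProd L' := by
  have hLL' : X.hookProd L = X.hookProd L' :=
    X.hookProd_eq_of_memFlip_iff hL hL' fun _ => hd.memFlip_iff_of_smul_eq hd' h
  obtain rfl : d = d' := by
    have h₁ := hΘ.map_wreath_mul_hookProd hL hd 1
    rw [hLL', hΘ.map_wreath_mul_hookProd hL' hd', one_smul, one_smul] at h₁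
    exact (Finsupp.single_left_injective one_ne_zero h₁).symm
  have hu : u'⁻¹ * u ∈ X.absorbing L := by
    rw [hΘ.absorbing_eq_stabilizer hL hd, MulAction.mem_stabilizer_iff, mul_smul, h,
      inv_smul_smul]
  rw [← hLL', ← mul_inv_cancel_left u' u, map_mul, mul_assoc, X.mem_absorbing.mp hu]

lemma linearIndependent_diagrams :
    LinearIndependent k ((↑) : X.diagrams [] → A) := by
  have hdiag (x : X.diagrams []) : ∃ (u : WreathProduct G n) (L : List (Arc n G))
      (d : Diagram n G), L.Pairwise Arc.Disj ∧ Diagram.HasArcs L d ∧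
        (x : A) = X.wreath u * X.hookProd L := by
    obtain ⟨_, u, L, hL, -, rfl⟩ := x
    obtain ⟨d, hd, -⟩ := hΘ.exists_hasArcs hL
    exact ⟨u, L, d, hL, hd, rfl⟩
  choose u L d hL hd hx using hdiag
  have hinj : Function.Injective fun x => u x • d x := fun x y hxy => Subtype.ext <| by
    rw [hx x, hx y, hΘ.wreath_mul_hookProd_eq (hL x) (hL y) (hd x) (hd y) hxy]
  refine LinearIndependent.of_comp
    ((LinearMap.applyₗ (Finsupp.single Diagram.identity 1)).comp Θ.toLinearMap) ?_
  convert (Finsupp.linearIndependent_single_one k (Diagram n G)).comp _ hinj using 1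
  funext x
  change Θ x (Finsupp.single Diagram.identity 1) = Finsupp.single (u x • d x) 1
  rw [hx x, hΘ.map_wreath_mul_hookProd (hL x) (hd x)]

lemma commute_hook {α β : Arc n G} {x : A} (hα : x ∈ X.diagrams [α]) (hβ : x ∈ X.diagrams [β]) :
    Commute (X.hook α) (X.hook β) := by
  obtain ⟨u, L, hL, hαL, rfl⟩ := hα
  obtain ⟨u', L', hL', hβL', h⟩ := hβ
  obtain ⟨d, hd, -⟩ := hΘ.exists_hasArcs hL
  obtain ⟨d', hd', -⟩ := hΘ.exists_hasArcs hL'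
  have hdd' : u • d = u' • d' := by
    have h₁ := hΘ.map_wreath_mul_hookProd hL hd u
    rw [h, hΘ.map_wreath_mul_hookProd hL' hd'] at h₁
    exact (Finsupp.single_left_injective one_ne_zero h₁).symm
  have hcomm {γ : Arc n G} (hγ : γ ∈ L) : Commute (X.hook α) (X.hook γ) := by
    by_cases hαγ : α = γ
    · rw [hαγ]
    · have : Std.Symm (Arc.Disj (n := n) (G := G)) := ⟨fun _ _ => Arc.Disj.symm⟩
      exact X.commute_hook (hL.forall (hαL List.mem_cons_self) hγ hαγ)
  obtain h | h : β.MemFlip L :=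
    (hd.memFlip_iff_of_smul_eq hd' hdd').mpr (.inl (hβL' List.mem_cons_self))
  · exact hcomm h
  · exact X.hook_flip β ▸ hcomm h

/-- The basis of `A` given by the diagrams. -/
def diagramBasis : Module.Basis (X.diagrams []) k A :=
  .mk hΘ.linearIndependent_diagrams (by rw [Subtype.range_coe, X.span_diagrams_nil])

lemma coe_diagramBasis : ⇑hΘ.diagramBasis = (↑) := Module.Basis.coe_mk _ _

end IsDiagramRep

end BrauerSystem

end DiagramBasis

section WreathProjection

variable {k G A : Type} [CommRing k] [CommGroup G] {n : ℕ} [Ring A] [Algebra k A] {φ : G → k}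

/-- The algebra map `π` is the projection of `A` onto the group algebra of the wreath product which
kills the diagrams with fewer than `n` left-to-right connections. -/
structure BrauerSystem.IsWreathProjection (X : BrauerSystem k G n φ A)
    (π : A →ₐ[k] MonoidAlgebra k (WreathProduct G n)) : Prop where
  s {i : ℕ} : i + 1 < n → π (X.s i) = MonoidAlgebra.of k _ (SemidirectProduct.inr (adjSwap n i))
  e {i : ℕ} : i + 1 < n → π (X.e i) = 0
  t (g : G) (j : Fin n) :
    π (X.t g j) = MonoidAlgebra.of k _ (SemidirectProduct.inl (Pi.mulSingle j g))

namespace BrauerSystem.IsWreathProjection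

variable {X : BrauerSystem k G n φ A} {π : A →ₐ[k] MonoidAlgebra k (WreathProduct G n)}
  (hπ : X.IsWreathProjection π)
include hπ

lemma map_wreath (u : WreathProduct G n) : π (X.wreath u) = MonoidAlgebra.of k _ u := by
  have hperm (σ : Equiv.Perm (Fin n)) :
      π (X.perm σ) = MonoidAlgebra.of k _ (SemidirectProduct.inr σ) := by
    induction mem_closure_adjSwap 0 (π := σ) (by simp) using Submonoid.closure_induction with
    | mem x hx =>
      obtain ⟨i, ⟨-, hi⟩, rfl⟩ := hx
      rw [X.perm_adjSwap hi, hπ.s hi]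
    | one => simp only [map_one]
    | mul x y _ _ hx hy => simp only [map_mul, hx, hy]
  have hlabel (f : Fin n → G) :
      π (X.label f) = MonoidAlgebra.of k _ (SemidirectProduct.inl f) := by
    induction f using Pi.mulSingle_induction with
    | one => simp only [map_one]
    | mul f g hf hg => simp only [map_mul, hf, hg]
    | mulSingle j g => rw [X.label_mulSingle, hπ.t]
  rw [X.wreath_apply, map_mul, hperm, hlabel, ← map_mul, SemidirectProduct.inl_left_mul_inr_right]

lemma map_hook (α : Arc n G) : π (X.hook α) = 0 := by
  obtain ⟨u, hu⟩ := α.exists_smul_base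
  rw [← hu, X.hook_smul_base, map_mul, map_mul, hπ.e α.one_lt, mul_zero, zero_mul]

lemma comp_lift_wreath : π.comp (MonoidAlgebra.lift k A _ X.wreath) = AlgHom.id k _ :=
  MonoidAlgebra.algHom_ext (fun u => by
    simp only [AlgHom.comp_apply, ← MonoidAlgebra.of_apply, MonoidAlgebra.lift_of, hπ.map_wreath,
      AlgHom.id_apply]) (by ext)

lemma surjective : Function.Surjective π := fun y => ⟨_, DFunLike.congr_fun hπ.comp_lift_wreath y⟩

lemma map_eq_zero_of_mem_diagrams {α : Arc n G} {x : A} (hx : x ∈ X.diagrams [α]) : π x = 0 := by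
  obtain ⟨u, L, hL, hα, rfl⟩ := hx
  obtain ⟨M, -, hM⟩ := X.exists_hookProd_eq_hook_mul hL (hα List.mem_cons_self)
  rw [hM, map_mul, map_mul, hπ.map_hook, zero_mul, mul_zero]

lemma sub_lift_wreath_mem_span (x : A) : x - MonoidAlgebra.lift k A _ X.wreath (π x) ∈
    Submodule.span k (⋃ α : Arc n G, X.diagrams [α]) := by
  suffices h : Submodule.span k (X.diagrams []) ≤
      (Submodule.span k (⋃ α : Arc n G, X.diagrams [α])).comap (LinearMap.id -
        ((MonoidAlgebra.lift k A _ X.wreath).comp π).toLinearMap) from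
    h (X.span_diagrams_nil ▸ Submodule.mem_top)
  refine Submodule.span_le.mpr ?_
  rintro _ ⟨u, L, hL, -, rfl⟩
  change X.wreath u * X.hookProd L - MonoidAlgebra.lift k A _ X.wreath
    (π (X.wreath u * X.hookProd L)) ∈ Submodule.span k _
  cases L with
  | nil =>
    rw [hookProd_nil, mul_one, hπ.map_wreath, MonoidAlgebra.lift_of, sub_self]
    exact zero_mem _
  | cons α L =>
    have hmem : X.wreath u * X.hookProd (α :: L) ∈ X.diagrams [α] := ⟨u, _, hL, by simp, rfl⟩
    rw [hπ.map_eq_zero_of_mem_diagrams hmem, map_zero, sub_zero]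
    exact Submodule.subset_span (Set.mem_iUnion_of_mem α hmem)

lemma ker_eq_span : (RingHom.ker π).restrictScalars k =
    Submodule.span k (⋃ α : Arc n G, X.diagrams [α]) := by
  refine le_antisymm (fun x hx => ?_) (Submodule.span_le.mpr <| Set.iUnion_subset fun α x hx => ?_)
  · have := hπ.sub_lift_wreath_mem_span x
    rwa [RingHom.mem_ker.mp hx, map_zero, sub_zero] at this
  · exact hπ.map_eq_zero_of_mem_diagrams hx

theorem barComplex_ker_acyclic [Nontrivial k] {Θ : A →ₐ[k] Module.End k (Diagram n G →₀ k)}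
    (hΘ : X.IsDiagramRep Θ) (hφ : IsUnit (φ 1)) {ε : A →ₐ[k] k}
    (hε : (groupAug k (WreathProduct G n)).comp π = ε) :
    (barComplex (RingHom.ker π) ε).Acyclic := by
  obtain ⟨c, hc⟩ := hφ.exists_left_inv
  have himage (S : Set A) (hS : S ⊆ X.diagrams []) :
      hΘ.diagramBasis '' {d | (d : A) ∈ S} = S := by
    rw [hΘ.coe_diagramBasis]
    exact (Subtype.image_preimage_coe _ _).trans (Set.inter_eq_right.mpr hS)
  have hnil (α : Arc n G) : X.diagrams [α] ⊆ X.diagrams [] := X.diagrams_anti (List.nil_subset _)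
  refine barComplex_acyclic_of_idempotents (b := hΘ.diagramBasis) (e := fun α => c • X.hook α)
    (Rt := fun d => {α | (d : A) ∈ X.diagrams [α]}) (fun α => ?_) (fun d α hα => ?_)
    (fun x α => ?_) (fun d α hα β hβ _ => ?_) ?_
  · rw [map_smul, ← hε, AlgHom.comp_apply, hπ.map_hook, map_zero, smul_zero]
  · rw [hΘ.coe_diagramBasis, mul_smul_comm, X.mul_hook_of_mem_diagrams hα, smul_smul, hc, one_smul]
  · rw [mul_smul_comm]
    exact Submodule.smul_mem _ c ((himage _ (hnil α)).symm ▸ X.mul_hook_mem_span x α)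
  · exact ((hΘ.commute_hook hα hβ).smul_left c).smul_right c
  · have h := himage _ (Set.iUnion_subset hnil)
    simp only [Set.mem_iUnion] at h
    exact hπ.ker_eq_span.trans (congrArg _ h.symm)

end BrauerSystem.IsWreathProjection

theorem BrauerSystem.nonempty_barTor_equiv [Nontrivial k] {X : BrauerSystem k G n φ A}
    {π : A →ₐ[k] MonoidAlgebra k (WreathProduct G n)} (hπ : X.IsWreathProjection π)
    {Θ : A →ₐ[k] Module.End k (Diagram n G →₀ k)} (hΘ : X.IsDiagramRep Θ) (hφ : IsUnit (φ 1))
    {ε : A →ₐ[k] k} (hε : (groupAug k (WreathProduct G n)).comp π = ε) (q : ℕ) :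
    Nonempty (barTor k A ε q ≃ₗ[k] groupTor k (WreathProduct G n) q) :=
  have : Module.Free k A := .of_basis hΘ.diagramBasis
  nonempty_barTor_equiv_of_surjective hε hπ.surjective (hπ.barComplex_ker_acyclic hΘ hφ hε) q

end WreathProjection

section GBAlgProjection

variable {k G : Type} [CommRing k] [CommGroup G] {n : ℕ}

variable (k) in
/-- The images of the generators in the group algebra of the wreath product. -/
def genWreath : GBGen n G → MonoidAlgebra k (WreathProduct G n)
  | .s i => MonoidAlgebra.of k _ (SemidirectProduct.inr (adjSwap n i))
  | .e _ => 0
  | .t g j => MonoidAlgebra.of k _ (SemidirectProduct.inl (Pi.mulSingle j g))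

lemma inr_mul_inl_mulSingle (σ : Equiv.Perm (Fin n)) (j : Fin n) (g : G) :
    (SemidirectProduct.inr σ * SemidirectProduct.inl (Pi.mulSingle j g) : WreathProduct G n)
      = SemidirectProduct.inl (Pi.mulSingle (σ j) g) * SemidirectProduct.inr σ := by
  have h : permMulAut G n σ (Pi.mulSingle j g) = Pi.mulSingle (σ j) g := by
    funext l
    simp only [permMulAut_apply, Pi.mulSingle_apply, Equiv.Perm.inv_eq_iff_eq]
  rw [← h, SemidirectProduct.inl_aut, map_inv, inv_mul_cancel_right]

lemma genWreath_s_mul_t {i : Fin (n - 1)} {l l' : Fin n} (g : G) (h : adjSwap n i l = l') :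
    genWreath k (.s i) * genWreath k (.t g l) = genWreath k (.t g l') * genWreath k (.s i) := by
  simp only [genWreath, ← map_mul, inr_mul_inl_mulSingle, h]

lemma lift_genWreath_eq (ρ : G →* RingAut k) (δ : k) {x y : FreeAlgebra k (GBGen n G)}
    (h : GBRel k G ρ n δ x y) :
    FreeAlgebra.lift k (genWreath k) x = FreeAlgebra.lift k (genWreath k) y := by
  have hA := isTypeA_adjSwap (n := n)
  cases h <;> simp only [map_mul, map_one, map_smul, FreeAlgebra.lift_ι_apply]
  case s_sq i => simp only [genWreath, ← map_mul, hA.sq i.2, map_one]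
  case s_braid i j h =>
    have := hA.braid (i := i) (by omega)
    simp only [genWreath, ← map_mul, h, this]
  case ss_comm i j h => simp only [genWreath, ← map_mul, hA.comm h j.2]
  case t_mul => simp only [genWreath, ← map_mul, Pi.mulSingle_mul]
  case t_one => simp only [genWreath, Pi.mulSingle_one, map_one]
  case tt_comm => simp only [genWreath, ← map_mul, mul_comm]
  case st_comm i l h => exact genWreath_s_mul_t _ (adjSwap_of_ne h.1 h.2)
  case st_slide g i j j' h h' =>
    obtain rfl : j = lowerPos i := Fin.ext h
    obtain rfl : j' = upperPos i := Fin.ext h'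
    exact genWreath_s_mul_t _ (adjSwap_left (by omega))
  case st_slide' g i j j' h h' =>
    obtain rfl : j = lowerPos i := Fin.ext h
    obtain rfl : j' = upperPos i := Fin.ext h'
    exact genWreath_s_mul_t _ (adjSwap_right (by omega))
  all_goals simp only [genWreath, mul_zero, zero_mul, smul_zero]

lemma exists_isWreathProjection (ρ : G →* RingAut k) (n : ℕ) (δ : k) :
    ∃ π, (brauerSystem k G ρ n δ).IsWreathProjection π ∧
      (groupAug k (WreathProduct G n)).comp π = GBaug k G ρ n δ := by
  let π : GBAlg k G ρ n δ →ₐ[k] MonoidAlgebra k (WreathProduct G n) :=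
    RingQuot.liftAlgHom k ⟨FreeAlgebra.lift k (genWreath k), fun _ _ => lift_genWreath_eq ρ δ⟩
  have hπ (x : GBGen n G) : π (toGBAlg k G ρ n δ (FreeAlgebra.ι k x)) = genWreath k x :=
    (RingQuot.liftAlgHom_mkAlgHom_apply ..).trans (FreeAlgebra.lift_ι_apply _ _)
  refine ⟨π, ⟨fun {i} hi => ?_, fun {i} hi => ?_, fun g j => hπ (.t g j)⟩, ?_⟩
  · exact (congrArg π (genS_of_lt _ _ _ _ _ hi)).trans (hπ (.s ⟨i, by omega⟩))
  · exact (congrArg π (genE_of_lt _ _ _ _ _ hi)).trans (hπ (.e ⟨i, by omega⟩))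
  · refine RingQuot.ringQuot_ext' _ _ _ (FreeAlgebra.hom_ext (funext fun x => ?_))
    refine (congrArg (groupAug k (WreathProduct G n)) (hπ x)).trans <| Eq.trans ?_
      ((RingQuot.liftAlgHom_mkAlgHom_apply ..).trans (FreeAlgebra.lift_ι_apply _ _)).symm
    cases x <;> simp [genWreath, groupAug]

end GBAlgProjection

end BrauerHomology

/-- **Homology of `G`-equivariant Brauer algebras** (invertible parameter).
Let `G` be an abelian group, `k` a commutative `G`-ring, `n` a natural number, and
`δ ∈ k` invertible.  Then there is an isomorphism of graded `k`-modules
`Tor_*^{GB_n(δ)}(𝟙,𝟙) ≅ Tor_*^{k[G^n ⋊ Σ_n]}(k,k) = H_*(G^n ⋊ Σ_n; k)`. -/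
theorem equivariant_brauer_homology (k G : Type) [CommRing k] [CommGroup G]
    (ρ : G →* RingAut k) (n : ℕ) (δ : k) (hδ : IsUnit δ) (q : ℕ) :
    Nonempty ((barTor k (GBAlg k G ρ n δ) (GBaug k G ρ n δ) q) ≃ₗ[k]
      (groupTor k ((Fin n → G) ⋊[permMulAut G n] Equiv.Perm (Fin n)) q)) := by
  cases subsingleton_or_nontrivial k with
  | inl _ =>
    have := Module.subsingleton k (barTor k (GBAlg k G ρ n δ) (GBaug k G ρ n δ) q)
    have := Module.subsingleton k (groupTor k (BrauerHomology.WreathProduct G n) q)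
    exact ⟨0⟩
  | inr _ =>
    obtain ⟨Θ, hΘ⟩ := BrauerHomology.exists_isDiagramRep ρ n δ
    obtain ⟨π, hπ, hε⟩ := BrauerHomology.exists_isWreathProjection ρ n δ
    have hφ : IsUnit (ρ 1 δ) := by rwa [map_one]
    exact BrauerHomology.BrauerSystem.nonempty_barTor_equiv hπ hΘ hφ hε q
end
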